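/- arXiv:1307.5009 — 2 statements merged into one kernel-verified Lean document; each statement's English description precedes it below -/
import Mathlib

section
/- Let ζ_α^{sim}(s;r) = ∑_{i ∈ Σ* : |log p_i / log r_i − α| ≤ r} r_i^s. Then for every α ∈ ℝ, the limit as r ↘ 0 of the abscissa of convergence σ_abs(ζ_α^{sim}(·;r)) exists and equals both the Hausdorff multifractal spectrum f_μ(α) and the coarse multifractal spectrum f_μ^{c}(α), i.e. lim_{r↘0} σ_abs(ζ_α^{sim}(·;r)) = f_μ(α) = f_μ^{c}(α). -/
open MeasureTheory Filter Topology Metric Set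
open scoped ENNReal NNReal Classical

namespace Multifractal

/-- Infinite strings over `{1,…,N}`. -/
abbrev Seq (N : ℕ) := ℕ → Fin N

/-- Finite strings over `{1,…,N}` (the empty string is excluded where appropriate). -/
abbrev Word (N : ℕ) := List (Fin N)

variable {N : ℕ}

/-- The shift map on `Σ^ℕ`. -/
def shift : Seq N → Seq N := fun x n => x (n + 1)

/-- The cylinder `[w]` generated by a finite string `w`. -/
def cylinder (w : Word N) : Set (Seq N) :=
  {x : Seq N | ∀ (k : ℕ) (h : k < w.length), x k = w.get ⟨k, h⟩}

/-- Birkhoff sum `∑_{k<n} φ(S^k x)`. -/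
noncomputable def birkhoff (φ : Seq N → ℝ) (n : ℕ) (x : Seq N) : ℝ :=
  ∑ k ∈ Finset.range n, φ (shift^[k] x)

/-- `s_w = sup_{x ∈ [w]} exp (∑_{k<|w|} Λ(S^k x))`. -/
noncomputable def sWord (Λ : Seq N → ℝ) (w : Word N) : ℝ :=
  sSup ((fun x => Real.exp (birkhoff Λ w.length x)) '' cylinder w)

/-- Bounded distortion (condition (C3)): `exp(S_nΛ(i))/exp(S_nΛ(j)) ∈ [1/c, c]`
whenever `i|n = j|n`.  (By symmetry in `i,j` the one-sided bound suffices.) -/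
def BddDistortion (Λ : Seq N → ℝ) (c : ℝ) : Prop :=
  ∀ (n : ℕ) (i j : Seq N), (∀ k < n, i k = j k) →
    Real.exp (birkhoff Λ n i) ≤ c * Real.exp (birkhoff Λ n j)

/-- The empirical measure `L_n x = (1/n) ∑_{k<n} δ_{S^k x}` (junk value `δ_x` for `n = 0`). -/
noncomputable def emp (n : ℕ) (x : Seq N) : ProbabilityMeasure (Seq N) :=
  if h : n = 0 then ⟨Measure.dirac x, inferInstance⟩
  else
    ⟨(n : ℝ≥0∞)⁻¹ • ∑ k ∈ Finset.range n, Measure.dirac (shift^[k] x), by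
      constructor
      simp only [Measure.smul_apply, Measure.coe_finset_sum, Finset.sum_apply, measure_univ,
        Finset.sum_const, Finset.card_range, nsmul_eq_mul, mul_one, smul_eq_mul]
      exact ENNReal.inv_mul_cancel (Nat.cast_ne_zero.mpr h) (ENNReal.natCast_ne_top n)⟩

/-- Shift invariance of a probability measure. -/
def Invariant (μ : ProbabilityMeasure (Seq N)) : Prop :=
  μ.toMeasure.map shift = μ.toMeasure

/-- `n`-th partition entropy `-∑_{|w|=n} μ[w] log μ[w]`. -/
noncomputable def entropyAux (μ : ProbabilityMeasure (Seq N)) (n : ℕ) : ℝ :=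
  -∑ w : Fin n → Fin N,
      (μ (cylinder (List.ofFn w)) : ℝ) * Real.log (μ (cylinder (List.ofFn w)) : ℝ)

/-- The Kolmogorov–Sinai entropy of a (shift-invariant) measure on the full shift,
via the generating partition into cylinders. -/
noncomputable def entropy (μ : ProbabilityMeasure (Seq N)) : ℝ :=
  Filter.atTop.liminf fun n => entropyAux μ n / n

/-- Abscissa of convergence of the "zeta-function" `s ↦ ∑ a_w^s`, the sum ranging over the
nonempty finite strings satisfying `P`; values in `EReal` (so `⊤` if never summable and `⊥`
if always summable, e.g. for an empty index set). -/
noncomputable def sigmaAbs (a : Word N → ℝ) (P : Word N → Prop) : EReal :=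
  sInf ((fun t : ℝ => (t : EReal)) ''
    {t : ℝ | Summable fun w : {w : Word N // w ≠ [] ∧ P w} => a w.1 ^ t})

variable {X : Type*}

/-- `U(L_{|w|}[w]) ⊆ B`. -/
def inTarget (U : ProbabilityMeasure (Seq N) → X) (B : Set X) (w : Word N) : Prop :=
  ∀ x ∈ cylinder w, U (emp w.length x) ∈ B

/-- The closed `r`-neighbourhood `B(C,r)` of a set. -/
def cball [MetricSpace X] (C : Set X) (r : ℝ) : Set X := {x | infDist x C ≤ r}

/-- The counting function `N_δ^{U,Λ}(C,r)`: number of strings `w` with `s_w ≈ δ` and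
`U(L_{|w|}[w]) ⊆ B(C,r)`. -/
noncomputable def Ncount [MetricSpace X] (Λ : Seq N → ℝ) (U : ProbabilityMeasure (Seq N) → X)
    (C : Set X) (r δ : ℝ) : ℕ :=
  Set.ncard {w : Word N | w ≠ [] ∧ sWord Λ w ≤ δ ∧ δ < sWord Λ w.dropLast ∧
    inTarget U (cball C r) w}

/-- `log m / (-log δ)`, read as `-∞` when `m = 0`. -/
noncomputable def ratioE (m : ℕ) (δ : ℝ) : EReal :=
  if m = 0 then ⊥ else (((Real.log m) / (-Real.log δ) : ℝ) : EReal)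

/-- The `r`-approximate lower coarse multifractal spectrum `f̲^{U,Λ}(C,r)`. -/
noncomputable def coarseLowerR [MetricSpace X] (Λ : Seq N → ℝ)
    (U : ProbabilityMeasure (Seq N) → X) (C : Set X) (r : ℝ) : EReal :=
  Filter.liminf (fun δ : ℝ => ratioE (Ncount Λ U C r δ) δ) (𝓝[>] (0 : ℝ))

/-- The lower coarse multifractal spectrum `f̲^{U,Λ}(C) = lim_{r↘0} f̲^{U,Λ}(C,r)`;
since `f̲^{U,Λ}(C,r)` is nondecreasing in `r`, the limit is the infimum over `r > 0`. -/
noncomputable def coarseLower [MetricSpace X] (Λ : Seq N → ℝ)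
    (U : ProbabilityMeasure (Seq N) → X) (C : Set X) : EReal :=
  ⨅ (r : ℝ) (_ : 0 < r), coarseLowerR Λ U C r

/-- The variational quantity `sup { -h(μ)/∫Λ dμ : μ shift-invariant, Uμ ∈ C }`. -/
noncomputable def varSup (Λ : Seq N → ℝ) (U : ProbabilityMeasure (Seq N) → X)
    (C : Set X) : EReal :=
  sSup {x : EReal | ∃ μ : ProbabilityMeasure (Seq N), Invariant μ ∧ U μ ∈ C ∧
    x = ((-(entropy μ) / ∫ y, Λ y ∂μ.toMeasure : ℝ) : EReal)}

end Multifractal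

namespace Multifractal

/-- Euclidean space `ℝ^d`. -/
abbrev Euc (d : ℕ) := EuclideanSpace ℝ (Fin d)

/-- The topological support of a measure: points all of whose neighbourhoods have
positive measure. -/
noncomputable def suppSet {d : ℕ} (μ : ProbabilityMeasure (Euc d)) : Set (Euc d) :=
  {x | ∀ ε : ℝ, 0 < ε → 0 < μ (Metric.ball x ε)}

/-- `log μ(B(x,ρ)) / log ρ`. -/
noncomputable def localDimAt {d : ℕ} (μ : ProbabilityMeasure (Euc d)) (x : Euc d) (ρ : ℝ) : ℝ :=
  Real.log (μ (Metric.closedBall x ρ) : ℝ) / Real.log ρ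

/-- Hausdorff dimension with the convention `dim_H ∅ = -∞`. -/
noncomputable def dimHE {α : Type*} [EMetricSpace α] (E : Set α) : EReal :=
  if E = ∅ then ⊥ else ((dimH E : ℝ≥0∞) : EReal)

/-- The Hausdorff multifractal spectrum
`f_μ(α) = dim_H {x ∈ supp μ : lim_{ρ↘0} log μ(B(x,ρ))/log ρ = α}` (with `dim_H ∅ = -∞`). -/
noncomputable def fHaus {d : ℕ} (μ : ProbabilityMeasure (Euc d)) (α : ℝ) : EReal :=
  dimHE {x | x ∈ suppSet μ ∧
    Filter.Tendsto (localDimAt μ x) (nhdsWithin 0 (Set.Ioi 0)) (nhds α)}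

/-- The packing-counting function `N_{μ,δ}(α;r)`: the largest cardinality of a finite family
of pairwise disjoint balls `B(x_j,δ)` centred in `supp μ` with
`α - r ≤ log μ(B(x_j,δ))/log δ ≤ α + r`. -/
noncomputable def packCount {d : ℕ} (μ : ProbabilityMeasure (Euc d)) (α r δ : ℝ) : ℕ :=
  sSup {n : ℕ | ∃ cf : Fin n → Euc d, (∀ j, cf j ∈ suppSet μ) ∧
    (∀ j k, j ≠ k → Disjoint (Metric.closedBall (cf j) δ) (Metric.closedBall (cf k) δ)) ∧
    (∀ j, α - r ≤ localDimAt μ (cf j) δ ∧ localDimAt μ (cf j) δ ≤ α + r)}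

/-- The coarse multifractal spectrum
`f_μ^c(α) = lim_{r↘0} liminf_{δ↘0} log N_{μ,δ}(α;r)/(-log δ)`; since the inner quantity is
nondecreasing in `r`, the limit is the infimum over `r > 0`. -/
noncomputable def fCoarse {d : ℕ} (μ : ProbabilityMeasure (Euc d)) (α : ℝ) : EReal :=
  ⨅ (r : ℝ) (_ : 0 < r),
    Filter.liminf (fun δ : ℝ => ratioE (packCount μ α r δ) δ) (nhdsWithin 0 (Set.Ioi 0))

end Multifractal

namespace Multifractal

section Words

variable {N d : ℕ}

/-- The word formed by the first `n` letters of a sequence. -/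
def prefixWord (j : Seq N) (n : ℕ) : Word N := List.ofFn fun k : Fin n => j k

/-- The product of the weights of the letters of a word. -/
def wordProd (a : Fin N → ℝ) (w : Word N) : ℝ := (w.map a).prod

/-- The composition `S_{i₁} ∘ ⋯ ∘ S_{iₙ}` along a word. -/
def wordMap (S : Fin N → Euc d → Euc d) : Word N → Euc d → Euc d
  | [] => id
  | i :: w => S i ∘ wordMap S w

@[simp] lemma wordMap_nil (S : Fin N → Euc d → Euc d) (x : Euc d) : wordMap S [] x = x := rfl

@[simp] lemma wordMap_cons (S : Fin N → Euc d → Euc d) (i : Fin N) (w : Word N) (x : Euc d) :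
    wordMap S (i :: w) x = S i (wordMap S w x) := rfl

lemma wordMap_append (S : Fin N → Euc d → Euc d) (v w : Word N) (x : Euc d) :
    wordMap S (v ++ w) x = wordMap S v (wordMap S w x) := by
  induction v with
  | nil => rfl
  | cons i v ih => simp [ih]

@[simp] lemma wordProd_nil (a : Fin N → ℝ) : wordProd a [] = 1 := rfl

@[simp] lemma wordProd_cons (a : Fin N → ℝ) (i : Fin N) (w : Word N) :
    wordProd a (i :: w) = a i * wordProd a w := by simp [wordProd]

lemma wordProd_append (a : Fin N → ℝ) (v w : Word N) :
    wordProd a (v ++ w) = wordProd a v * wordProd a w := by simp [wordProd]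

lemma wordProd_pos {a : Fin N → ℝ} (ha : ∀ i, 0 < a i) (w : Word N) : 0 < wordProd a w := by
  induction w with
  | nil => simp
  | cons i w ih => simpa using mul_pos (ha i) ih

lemma wordProd_nonneg {a : Fin N → ℝ} (ha : ∀ i, 0 ≤ a i) (w : Word N) : 0 ≤ wordProd a w := by
  induction w with
  | nil => simp
  | cons i w ih => simpa using mul_nonneg (ha i) ih

lemma wordProd_mul_rpow {a b : Fin N → ℝ} (ha : ∀ i, 0 < a i) (hb : ∀ i, 0 < b i) (s t : ℝ)
    (w : Word N) :
    wordProd (fun i => a i ^ s * b i ^ t) w = wordProd a w ^ s * wordProd b w ^ t := by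
  induction w with
  | nil => simp
  | cons i w ih =>
    rw [wordProd_cons, wordProd_cons, wordProd_cons, ih,
      Real.mul_rpow (ha i).le (wordProd_pos ha w).le,
      Real.mul_rpow (hb i).le (wordProd_pos hb w).le]
    ring

@[simp] lemma length_prefixWord (j : Seq N) (n : ℕ) : (prefixWord j n).length = n := by
  simp [prefixWord]

lemma prefixWord_add (j : Seq N) (n m : ℕ) :
    prefixWord j (n + m) = prefixWord j n ++ List.ofFn fun k : Fin m => j (n + k) := by
  simp only [prefixWord]
  rw [← List.ofFn_fin_append]
  congr 1
  funext k
  refine Fin.addCases (fun i => ?_) (fun i => ?_) k <;> simp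

lemma prefixWord_succ (j : Seq N) (n : ℕ) : prefixWord j (n + 1) = prefixWord j n ++ [j n] := by
  rw [prefixWord_add]
  simp

@[simp] lemma prefixWord_zero (j : Seq N) : prefixWord j 0 = [] := by simp [prefixWord]

lemma prefixWord_eq_iff {i j : Seq N} {n : ℕ} :
    prefixWord i n = prefixWord j n ↔ ∀ k < n, i k = j k := by
  simp only [prefixWord, List.ofFn_inj]
  exact ⟨fun h k hk => congrFun h ⟨k, hk⟩, fun h => funext fun k => h k k.2⟩

lemma prefixWord_eq_of_prefix {j : Seq N} {w : Word N} {n : ℕ} (h : w <+: prefixWord j n) :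
    prefixWord j w.length = w := by
  have hle : w.length ≤ n := by simpa using h.length_le
  obtain ⟨m, rfl⟩ := Nat.exists_eq_add_of_le hle
  rw [prefixWord_add] at h
  exact ((List.prefix_of_prefix_length_le h (List.prefix_append _ _) (by simp)).eq_of_length
    (by simp)).symm

lemma log_wordProd_prefixWord {a : Fin N → ℝ} (j : Seq N) (n : ℕ) (ha : ∀ k, 0 < a (j k)) :
    Real.log (wordProd a (prefixWord j n)) = ∑ k ∈ Finset.range n, Real.log (a (j k)) ∧
      0 < wordProd a (prefixWord j n) := by
  induction n with
  | zero => simp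
  | succ n ih =>
    rw [prefixWord_succ, wordProd_append, wordProd_cons, wordProd_nil, mul_one,
      Real.log_mul ih.2.ne' (ha n).ne', ih.1, Finset.sum_range_succ]
    exact ⟨rfl, mul_pos ih.2 (ha n)⟩

end Words

/-- Contracting similarities with base point `a`, trapping radius `R`, separation constant `c`
(the cylinders of incomparable words are separated at the base point) and bounds `lo`, `hi` for
the contraction ratios. -/
structure SeparatedIFS {N d : ℕ} (S : Fin N → Euc d → Euc d) (rr : Fin N → ℝ) (a : Euc d)
    (R c lo hi : ℝ) : Prop where
  dist_map : ∀ i x y, dist (S i x) (S i y) = rr i * dist x y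
  lo_pos : 0 < lo
  lo_le : ∀ i, lo ≤ rr i
  le_hi : ∀ i, rr i ≤ hi
  hi_lt : hi < 1
  one_le : 1 ≤ R
  trap : ∀ i, dist (S i a) a + hi * R ≤ R
  c_pos : 0 < c
  sep : ∀ v w : Word N, ¬ v <+: w → ¬ w <+: v →
    c * wordProd rr v ≤ dist (wordMap S v a) (wordMap S w a)

section Geometry

variable {N d : ℕ} {S : Fin N → Euc d → Euc d} {rr : Fin N → ℝ}

lemma dist_wordMap (hS : ∀ i x y, dist (S i x) (S i y) = rr i * dist x y) (w : Word N)
    (x y : Euc d) : dist (wordMap S w x) (wordMap S w y) = wordProd rr w * dist x y := by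
  induction w with
  | nil => simp
  | cons i w ih => simp [hS, ih, mul_assoc]

/-- A similarity of Euclidean space is surjective. -/
lemma similarity_surjective {f : Euc d → Euc d} {r : ℝ} (hr : 0 < r)
    (hf : ∀ x y, dist (f x) (f y) = r * dist x y) : Function.Surjective f := by
  have hiso : Isometry fun x => r⁻¹ • f x := by
    refine Isometry.of_dist_eq fun x y => ?_
    rw [dist_smul₀, hf, Real.norm_of_nonneg (inv_nonneg.2 hr.le), inv_mul_cancel_left₀ hr.ne']
  have hsurj : Function.Surjective fun x => r⁻¹ • f x := by
    have h := (hiso.affineIsometryOfStrictConvexSpace.toAffineIsometryEquiv rfl).surjective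
    exact h
  intro y
  obtain ⟨x, hx⟩ := hsurj (r⁻¹ • y)
  exact ⟨x, smul_right_injective _ (inv_ne_zero hr.ne') hx⟩

lemma wordMap_surjective (hr : ∀ i, 0 < rr i)
    (hS : ∀ i x y, dist (S i x) (S i y) = rr i * dist x y) (w : Word N) :
    Function.Surjective (wordMap S w) :=
  similarity_surjective (wordProd_pos hr w) (dist_wordMap hS w)

lemma wordMap_injective (hr : ∀ i, 0 < rr i)
    (hS : ∀ i x y, dist (S i x) (S i y) = rr i * dist x y) (w : Word N) :
    Function.Injective (wordMap S w) := by
  intro x y h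
  have h1 := dist_wordMap hS w x y
  rw [h, dist_self] at h1
  exact dist_eq_zero.1 ((mul_eq_zero.1 h1.symm).resolve_left (wordProd_pos hr w).ne')

lemma wordMap_image_subset {O : Set (Euc d)} (hO : ∀ i, S i '' O ⊆ O) (w : Word N) {x : Euc d}
    (hx : x ∈ O) : wordMap S w x ∈ O := by
  induction w with
  | nil => exact hx
  | cons i w ih => exact hO i ⟨_, ih, rfl⟩

lemma wordMap_ne {O : Set (Euc d)} (hr : ∀ i, 0 < rr i)
    (hS : ∀ i x y, dist (S i x) (S i y) = rr i * dist x y) (hO : ∀ i, S i '' O ⊆ O)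
    (hd : ∀ i j, i ≠ j → Disjoint (S i '' O) (S j '' O)) {x y : Euc d} (hx : x ∈ O) (hy : y ∈ O)
    (v : Word N) : ∀ w : Word N, ¬ v <+: w → ¬ w <+: v → wordMap S v x ≠ wordMap S w y := by
  induction v with
  | nil => intro w h; simp at h
  | cons i v ih =>
    intro w h1 h2
    cases w with
    | nil => simp at h2
    | cons j w =>
      by_cases hij : i = j
      · subst hij
        rw [List.cons_prefix_cons] at h1 h2
        simp only [true_and] at h1 h2
        intro h
        have : Function.Injective (S i) := fun x y h => by
          have h3 := wordMap_injective hr hS [i]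
          exact h3 h
        exact ih w h1 h2 (this h)
      · intro h
        refine Set.disjoint_left.1 (hd i j hij)
          ⟨_, wordMap_image_subset hO v hx, rfl⟩ ⟨_, wordMap_image_subset hO w hy, h.symm⟩

lemma exists_separatedIFS (hN : 0 < N) (hr : ∀ i, rr i ∈ Set.Ioo (0 : ℝ) 1)
    (hS : ∀ i x y, dist (S i x) (S i y) = rr i * dist x y)
    (hOSC : ∃ O : Set (Euc d), IsOpen O ∧ O.Nonempty ∧ Bornology.IsBounded O ∧
      (∀ i, S i '' O ⊆ O) ∧ ∀ i j, i ≠ j → Disjoint (S i '' O) (S j '' O)) :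
    ∃ a R c lo hi, SeparatedIFS S rr a R c lo hi := by
  obtain ⟨O, hO, ⟨a, ha⟩, -, hsub, hdisj⟩ := hOSC
  obtain ⟨c, hc, hball⟩ := Metric.isOpen_iff.1 hO a ha
  have : Nonempty (Fin N) := ⟨⟨0, hN⟩⟩
  obtain ⟨i0, hi0⟩ := Finite.exists_min rr
  obtain ⟨i1, hi1⟩ := Finite.exists_max rr
  obtain ⟨i2, hi2⟩ := Finite.exists_max fun i => dist (S i a) a
  have hpos : 0 < 1 - rr i1 := by linarith [(hr i1).2]
  refine ⟨a, max 1 (dist (S i2 a) a / (1 - rr i1)), c, rr i0, rr i1, hS, (hr i0).1, hi0, hi1,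
    (hr i1).2, le_max_left _ _, fun i => ?_, hc, fun v w h1 h2 => ?_⟩
  · have h1 := le_max_right 1 (dist (S i2 a) a / (1 - rr i1))
    rw [div_le_iff₀ hpos] at h1
    have := hi2 i
    linarith
  · by_contra! hlt
    have hr' : ∀ i, 0 < rr i := fun i => (hr i).1
    obtain ⟨y, hy⟩ := wordMap_surjective hr' hS v (wordMap S w a)
    have hyO : y ∈ O := by
      apply hball
      rw [← hy, dist_wordMap hS, mul_comm] at hlt
      rw [Metric.mem_ball, dist_comm]
      exact lt_of_mul_lt_mul_right hlt (wordProd_pos hr' v).le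
    exact wordMap_ne hr' hS hsub hdisj hyO ha v w h1 h2 hy

/-- Uniform packing bound at all scales in Euclidean space. -/
lemma exists_packing_bound (d : ℕ) {c : ℝ} (hc : 0 < c) (C : ℝ) :
    ∃ M : ℕ, ∀ {ι : Type} (s : Finset ι) (f : ι → Euc d) (x : Euc d) (δ : ℝ), 0 < δ →
      (∀ i ∈ s, dist (f i) x ≤ C * δ) →
      (∀ i ∈ s, ∀ j ∈ s, i ≠ j → c * δ ≤ dist (f i) (f j)) → s.card ≤ M := by
  obtain ⟨t, -, htf, ht⟩ := Metric.totallyBounded_iff.1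
    (isCompact_closedBall (0 : Euc d) C).totallyBounded (c / 2) (by positivity) |>.imp
      fun t h => (⟨trivial, h.1, h.2⟩ : True ∧ t.Finite ∧ _)
  refine ⟨htf.toFinset.card, fun {ι} s f x δ hδ h1 h2 => ?_⟩
  have key : ∀ i ∈ s, ∃ y ∈ t, dist (δ⁻¹ • (f i - x)) y < c / 2 := by
    intro i hi
    have : δ⁻¹ • (f i - x) ∈ closedBall (0 : Euc d) C := by
      rw [mem_closedBall_zero_iff, norm_smul, Real.norm_of_nonneg (by positivity), ← dist_eq_norm]
      calc δ⁻¹ * dist (f i) x ≤ δ⁻¹ * (C * δ) := by gcongr; exact h1 i hi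
        _ = C := by field_simp
    simpa using ht this
  choose! g hg hgd using key
  refine Finset.card_le_card_of_injOn g (fun i hi => by simpa using hg i hi) ?_
  intro i hi j hj hij
  by_contra hne
  have h3 : dist (δ⁻¹ • (f i - x)) (δ⁻¹ • (f j - x)) < c := by
    have := dist_triangle_right (δ⁻¹ • (f i - x)) (δ⁻¹ • (f j - x)) (g i)
    have h4 := hgd i hi
    have h5 := hgd j hj
    rw [← hij] at h5
    linarith
  rw [dist_smul₀, dist_sub_right, Real.norm_of_nonneg (by positivity)] at h3
  have h6 := h2 i hi j hj hne
  rw [inv_mul_lt_iff₀ hδ] at h3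
  linarith

end Geometry

end Multifractal

namespace Multifractal

section CodeMap

variable {N d : ℕ} {S : Fin N → Euc d → Euc d} {rr : Fin N → ℝ} {a : Euc d} {R c lo hi : ℝ}

/-- The point of `ℝ^d` coded by an infinite sequence. -/
noncomputable def codeMap (S : Fin N → Euc d → Euc d) (a : Euc d) (j : Seq N) : Euc d :=
  limUnder atTop fun n => wordMap S (prefixWord j n) a

/-- The words whose ratio first drops to `δ` or below. -/
def stopSet (rr : Fin N → ℝ) (δ : ℝ) : Set (Word N) :=
  {v | v ≠ [] ∧ wordProd rr v ≤ δ ∧ δ < wordProd rr v.dropLast}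

namespace SeparatedIFS

variable (h : SeparatedIFS S rr a R c lo hi)
include h

lemma pos (i : Fin N) : 0 < rr i := h.lo_pos.trans_le (h.lo_le i)

lemma lt_one (i : Fin N) : rr i < 1 := (h.le_hi i).trans_lt h.hi_lt

lemma R_pos : 0 < R := one_pos.trans_le h.one_le

lemma hi_pos (i : Fin N) : 0 < hi := (h.pos i).trans_le (h.le_hi i)

lemma wordProd_le_pow (w : Word N) : wordProd rr w ≤ hi ^ w.length := by
  induction w with
  | nil => simp
  | cons i w ih =>
    rw [wordProd_cons, List.length_cons, pow_succ']
    exact mul_le_mul (h.le_hi i) ih (wordProd_pos h.pos w).le (h.hi_pos i).le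

lemma wordProd_le_one (w : Word N) : wordProd rr w ≤ 1 := by
  induction w with
  | nil => simp
  | cons i w ih =>
    rw [wordProd_cons]
    exact mul_le_one₀ (h.lt_one i).le (wordProd_pos h.pos w).le ih

lemma wordProd_lt_one {w : Word N} (hw : w ≠ []) : wordProd rr w < 1 := by
  cases w with
  | nil => exact absurd rfl hw
  | cons i w =>
    rw [wordProd_cons]
    exact (mul_le_of_le_one_right (h.pos i).le (h.wordProd_le_one w)).trans_lt (h.lt_one i)

lemma dist_trap (i : Fin N) {x : Euc d} (hx : dist x a ≤ R) : dist (S i x) a ≤ R := by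
  have h1 := dist_triangle (S i x) (S i a) a
  have h2 := h.trap i
  rw [h.dist_map] at h1
  have h3 : rr i * dist x a ≤ hi * R :=
    mul_le_mul (h.le_hi i) hx dist_nonneg (h.hi_pos i).le
  linarith

lemma dist_wordMap_trap (w : Word N) {x : Euc d} (hx : dist x a ≤ R) :
    dist (wordMap S w x) a ≤ R := by
  induction w with
  | nil => exact hx
  | cons i w ih => exact h.dist_trap i ih

lemma dist_wordMap_base (w : Word N) : dist (wordMap S w a) a ≤ R :=
  h.dist_wordMap_trap w (by simpa using h.R_pos.le)

lemma dist_prefix (j : Seq N) {n m : ℕ} (hnm : n ≤ m) :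
    dist (wordMap S (prefixWord j m) a) (wordMap S (prefixWord j n) a) ≤
      R * wordProd rr (prefixWord j n) := by
  obtain ⟨k, rfl⟩ := Nat.exists_eq_add_of_le hnm
  rw [prefixWord_add, wordMap_append, dist_wordMap h.dist_map, mul_comm]
  exact mul_le_mul_of_nonneg_right (h.dist_wordMap_base _) (wordProd_pos h.pos _).le

lemma tendsto_hi_pow (i : Fin N) : Tendsto (fun n : ℕ => hi ^ n) atTop (𝓝 0) :=
  tendsto_pow_atTop_nhds_zero_of_lt_one (h.hi_pos i).le h.hi_lt

lemma tendsto_codeMap (j : Seq N) :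
    Tendsto (fun n => wordMap S (prefixWord j n) a) atTop (𝓝 (codeMap S a j)) := by
  have hc : CauchySeq fun n => wordMap S (prefixWord j n) a := by
    refine cauchySeq_of_le_tendsto_0' (fun n => R * hi ^ n) (fun n m hnm => ?_) ?_
    · rw [dist_comm]
      refine (h.dist_prefix j hnm).trans ?_
      have := h.wordProd_le_pow (prefixWord j n)
      rw [length_prefixWord] at this
      exact mul_le_mul_of_nonneg_left this h.R_pos.le
    · simpa using (h.tendsto_hi_pow (j 0)).const_mul R
  exact hc.tendsto_limUnder

lemma dist_codeMap (j : Seq N) (n : ℕ) :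
    dist (codeMap S a j) (wordMap S (prefixWord j n) a) ≤ R * wordProd rr (prefixWord j n) :=
  le_of_tendsto ((h.tendsto_codeMap j).dist tendsto_const_nhds)
    (eventually_atTop.2 ⟨n, fun _ hm => h.dist_prefix j hm⟩)

lemma exists_prefix_mem_stopSet (j : Seq N) {δ : ℝ} (hδ : 0 < δ) (hδ1 : δ < 1) :
    ∃ n, prefixWord j n ∈ stopSet rr δ := by
  have hex : ∃ n, wordProd rr (prefixWord j n) ≤ δ := by
    obtain ⟨n, hn⟩ := ((h.tendsto_hi_pow (j 0)).eventually (gt_mem_nhds hδ)).exists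
    refine ⟨n, (h.wordProd_le_pow _).trans ?_⟩
    simpa using hn.le
  have h0 : Nat.find hex ≠ 0 := by
    intro h0
    have := Nat.find_spec hex
    rw [h0] at this
    simp at this
    linarith
  obtain ⟨m, hm⟩ := Nat.exists_eq_succ_of_ne_zero h0
  refine ⟨Nat.find hex, ?_, Nat.find_spec hex, ?_⟩
  · intro h1
    have := congrArg List.length h1
    simp only [length_prefixWord, List.length_nil] at this
    exact h0 this
  · have := Nat.find_min hex (m := m) (by omega)
    rw [hm, Nat.succ_eq_add_one, prefixWord_succ, List.dropLast_concat]
    exact not_le.1 this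

lemma lo_mul_le {δ : ℝ} {v : Word N} (hv : v ∈ stopSet rr δ) : lo * δ ≤ wordProd rr v := by
  obtain ⟨hne, h1, h2⟩ := hv
  conv_rhs => rw [← List.dropLast_append_getLast hne, wordProd_append, wordProd_cons,
    wordProd_nil, mul_one, mul_comm]
  exact mul_le_mul (h.lo_le _) h2.le
    ((wordProd_pos h.pos v).le.trans h1) (h.pos _).le

lemma not_prefix_of_mem_stopSet {δ : ℝ} {v w : Word N} (hv : v ∈ stopSet rr δ)
    (hw : w ∈ stopSet rr δ) (hvw : v ≠ w) : ¬ v <+: w := by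
  rintro ⟨s, rfl⟩
  have hs : s ≠ [] := by
    rintro rfl
    simp at hvw
  have h1 := hw.2.2
  rw [List.dropLast_append_of_ne_nil hs, wordProd_append] at h1
  have h2 := mul_le_of_le_one_right (wordProd_pos h.pos v).le (h.wordProd_le_one s.dropLast)
  linarith [hv.2.1]

lemma separated_of_mem_stopSet {δ : ℝ} {v w : Word N} (hv : v ∈ stopSet rr δ)
    (hw : w ∈ stopSet rr δ) (hvw : v ≠ w) :
    c * lo * δ ≤ dist (wordMap S v a) (wordMap S w a) := by
  refine le_trans ?_ (h.sep v w (h.not_prefix_of_mem_stopSet hv hw hvw)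
    (h.not_prefix_of_mem_stopSet hw hv hvw.symm))
  rw [mul_assoc]
  exact mul_le_mul_of_nonneg_left (h.lo_mul_le hv) h.c_pos.le

lemma exists_neighbour_bound (C : ℝ) : ∃ M : ℕ, ∀ (δ : ℝ) (x : Euc d), 0 < δ →
    {v | v ∈ stopSet rr δ ∧ dist (wordMap S v a) x ≤ C * δ}.Finite ∧
    {v | v ∈ stopSet rr δ ∧ dist (wordMap S v a) x ≤ C * δ}.ncard ≤ M := by
  obtain ⟨M, hM⟩ := exists_packing_bound d (mul_pos h.c_pos h.lo_pos) C
  refine ⟨M, fun δ x hδ => ?_⟩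
  have key : ∀ s : Finset (Word N),
      (s : Set (Word N)) ⊆ {v | v ∈ stopSet rr δ ∧ dist (wordMap S v a) x ≤ C * δ} →
      s.card ≤ M := fun s hs =>
    hM s (fun v => wordMap S v a) x δ hδ (fun v hv => (hs hv).2)
      fun v hv w hw hvw => h.separated_of_mem_stopSet (hs hv).1 (hs hw).1 hvw
  have hfin : {v | v ∈ stopSet rr δ ∧ dist (wordMap S v a) x ≤ C * δ}.Finite := by
    by_contra hinf
    obtain ⟨t, ht, htc⟩ := Set.Infinite.exists_subset_card_eq hinf (M + 1)
    have := key t ht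
    omega
  refine ⟨hfin, ?_⟩
  rw [Set.ncard_eq_toFinset_card _ hfin]
  exact key _ (by simp)

/-- There is a marker word `u` such that any code of a point close to a point coded by `w u ⋯`
starts with `w`. -/
lemma exists_marker (hN : 0 < N) : ∃ u : Word N, u ≠ [] ∧ ∀ (y z : Seq N) (n : ℕ),
    prefixWord y (n + u.length) = prefixWord y n ++ u →
    dist (codeMap S a z) (codeMap S a y) ≤ wordProd rr (prefixWord y (n + u.length)) →
    prefixWord z n = prefixWord y n := by
  obtain ⟨M, hM⟩ := h.exists_neighbour_bound (2 * R + 1)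
  set I : Word N → Set (Word N) := fun u => {v | v ∈ stopSet rr (wordProd rr u) ∧
    dist (wordMap S v a) (wordMap S u a) ≤ (2 * R + 1) * wordProd rr u} with hI
  have hpos := fun w : Word N => wordProd_pos h.pos w
  obtain ⟨u, hu, hmax⟩ : ∃ u : Word N, u ≠ [] ∧ ∀ w, w ≠ [] → (I w).ncard ≤ (I u).ncard := by
    have hne : {k | ∃ u : Word N, u ≠ [] ∧ (I u).ncard = k}.Nonempty :=
      ⟨_, [⟨0, hN⟩], by simp, rfl⟩
    have hbd : BddAbove {k | ∃ u : Word N, u ≠ [] ∧ (I u).ncard = k} :=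
      ⟨M, by rintro k ⟨u, -, rfl⟩; exact (hM _ _ (hpos u)).2⟩
    obtain ⟨u, hu, hk⟩ := Nat.sSup_mem hne hbd
    exact ⟨u, hu, fun w hw => hk ▸ le_csSup hbd ⟨w, hw, rfl⟩⟩
  have happ : ∀ w : Word N, (fun v => w ++ v) '' I u = I (w ++ u) := by
    intro w
    refine Set.eq_of_subset_of_ncard_le ?_ ?_ (hM _ _ (hpos _)).1
    · rintro _ ⟨v, ⟨⟨h1, h2, h3⟩, h4⟩, rfl⟩
      refine ⟨⟨by simp [h1], ?_, ?_⟩, ?_⟩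
      · rw [wordProd_append, wordProd_append]
        exact mul_le_mul_of_nonneg_left h2 (hpos w).le
      · rw [wordProd_append, List.dropLast_append_of_ne_nil h1, wordProd_append]
        exact mul_lt_mul_of_pos_left h3 (hpos w)
      · rw [wordMap_append, wordMap_append, dist_wordMap h.dist_map, wordProd_append]
        have := mul_le_mul_of_nonneg_left h4 (hpos w).le
        linarith
    · rw [Set.ncard_image_of_injective _ (List.append_right_injective w)]
      exact hmax _ (by simp [hu])
  refine ⟨u, hu, fun y z n hy hd => ?_⟩
  rw [hy] at hd
  obtain ⟨m, hm⟩ := h.exists_prefix_mem_stopSet z (hpos (prefixWord y n ++ u))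
    (h.wordProd_lt_one (by simp [hu]))
  have hmem : prefixWord z m ∈ I (prefixWord y n ++ u) := by
    refine ⟨hm, ?_⟩
    have h1 := h.dist_codeMap z m
    have h2 := h.dist_codeMap y (n + u.length)
    rw [hy] at h2
    have h3 := dist_triangle4 (wordMap S (prefixWord z m) a) (codeMap S a z) (codeMap S a y)
      (wordMap S (prefixWord y n ++ u) a)
    rw [dist_comm] at h1
    have h4 := mul_le_mul_of_nonneg_left hm.2.1 h.R_pos.le
    linarith
  rw [← happ] at hmem
  obtain ⟨v, -, hv⟩ := hmem
  have := prefixWord_eq_of_prefix (j := z) (w := prefixWord y n) (n := m) ⟨v, hv⟩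
  rwa [length_prefixWord] at this

end SeparatedIFS

end CodeMap

end Multifractal

namespace Multifractal

section Bernoulli

variable {N : ℕ}

lemma nonempty_of_sum_eq_one {p : Fin N → ℝ} (hp1 : ∑ i, p i = 1) : Nonempty (Fin N) := by
  by_contra hne
  have := not_nonempty_iff.1 hne
  simp at hp1

/-- The measure on letters with weights `q`. -/
noncomputable def letterMeasure (q : Fin N → ℝ) : Measure (Fin N) :=
  ∑ i, ENNReal.ofReal (q i) • Measure.dirac i

lemma letterMeasure_singleton (q : Fin N → ℝ) (i : Fin N) :
    letterMeasure q {i} = ENNReal.ofReal (q i) := by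
  simp only [letterMeasure, Measure.coe_finsetSum, Finset.sum_apply, Measure.smul_apply,
    smul_eq_mul, Measure.dirac_apply]
  rw [Finset.sum_eq_single i]
  · simp
  · intro k _ hk
    simp [hk]
  · simp

lemma isProbabilityMeasure_letterMeasure {q : Fin N → ℝ} (hq : ∀ i, 0 ≤ q i)
    (hq1 : ∑ i, q i = 1) : IsProbabilityMeasure (letterMeasure q) := by
  constructor
  simp only [letterMeasure, Measure.coe_finsetSum, Finset.sum_apply, Measure.smul_apply,
    smul_eq_mul, measure_univ, mul_one]
  rw [← ENNReal.ofReal_sum_of_nonneg fun i _ => hq i, hq1, ENNReal.ofReal_one]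

lemma integral_letterMeasure {q : Fin N → ℝ} (hq : ∀ i, 0 ≤ q i)
    [IsProbabilityMeasure (letterMeasure q)] (f : Fin N → ℝ) :
    ∫ i, f i ∂letterMeasure q = ∑ i, q i * f i := by
  rw [integral_fintype Integrable.of_finite]
  refine Finset.sum_congr rfl fun i _ => ?_
  rw [Measure.real, letterMeasure_singleton, ENNReal.toReal_ofReal (hq i), smul_eq_mul]

/-- The Bernoulli measure on sequences with weights `q`. -/
noncomputable def bernoulliMeasure (q : Fin N → ℝ) [IsProbabilityMeasure (letterMeasure q)] :
    Measure (Seq N) :=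
  Measure.infinitePi fun _ => letterMeasure q

variable (q : Fin N → ℝ) [IsProbabilityMeasure (letterMeasure q)]

instance : IsProbabilityMeasure (bernoulliMeasure q) := by
  unfold bernoulliMeasure
  infer_instance

lemma bernoulliMeasure_box (s : Finset ℕ) (i : Seq N) :
    bernoulliMeasure q {j | ∀ n ∈ s, j n = i n} = ∏ n ∈ s, ENNReal.ofReal (q (i n)) := by
  have : {j : Seq N | ∀ n ∈ s, j n = i n} = Set.pi (s : Set ℕ) fun n => {i n} := by
    ext j
    simp [Set.mem_pi]
  rw [this, bernoulliMeasure, Measure.infinitePi_pi _ fun n _ => measurableSet_singleton _]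
  simp [letterMeasure_singleton]

lemma bernoulliMeasure_prefix (hq : ∀ i, 0 ≤ q i) (j : Seq N) (n : ℕ) :
    bernoulliMeasure q {i | prefixWord i n = prefixWord j n} =
      ENNReal.ofReal (wordProd q (prefixWord j n)) := by
  have h1 : {i : Seq N | prefixWord i n = prefixWord j n} =
      {i | ∀ k ∈ Finset.range n, i k = j k} := by
    ext i
    simp [prefixWord_eq_iff]
  rw [h1, bernoulliMeasure_box]
  clear h1
  induction n with
  | zero => simp
  | succ n ih =>
    rw [Finset.prod_range_succ, ih, prefixWord_succ, wordProd_append, wordProd_cons, wordProd_nil,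
      mul_one, ENNReal.ofReal_mul (wordProd_nonneg hq _)]

lemma measurableSet_prefix (w : Word N) (n : ℕ) :
    MeasurableSet {i : Seq N | prefixWord i n = w} := by
  have : Measurable fun (i : Seq N) (k : Fin n) => i k := by fun_prop
  exact this (t := {f | List.ofFn f = w}) (MeasurableSet.of_discrete)

lemma bernoulliMeasure_word (hq : ∀ i, 0 ≤ q i) (w : Word N) :
    bernoulliMeasure q {i | prefixWord i w.length = w} = ENNReal.ofReal (wordProd q w) := by
  by_cases hN : Nonempty (Fin N)
  · obtain ⟨i0⟩ := hN
    have : prefixWord (fun n => w.getD n i0) w.length = w := by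
      simp only [prefixWord]
      conv_rhs => rw [← List.ofFn_get w]
      congr 1
      funext k
      simp
    have h2 := bernoulliMeasure_prefix q hq (fun n => w.getD n i0) w.length
    rwa [this] at h2
  · have := IsProbabilityMeasure.ne_zero (letterMeasure q)
    have h0 : IsEmpty (Fin N) := not_nonempty_iff.1 hN
    exact absurd (Measure.eq_zero_of_isEmpty _) this

/-- Law of large numbers for a function of a single letter. -/
lemma ae_tendsto_average (hq : ∀ i, 0 ≤ q i) (f : Fin N → ℝ) :
    ∀ᵐ j ∂bernoulliMeasure q,
      Tendsto (fun n : ℕ => (∑ k ∈ Finset.range n, f (j k)) / n) atTop (𝓝 (∑ i, q i * f i)) := by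
  have hf : Measurable f := measurable_of_finite f
  have hmp : ∀ k : ℕ, MeasurePreserving (fun j : Seq N => j k) (bernoulliMeasure q)
      (letterMeasure q) := fun k => measurePreserving_eval_infinitePi _ k
  have hlaw := ProbabilityTheory.strong_law_ae_real (μ := bernoulliMeasure q)
    (fun (k : ℕ) (j : Seq N) => f (j k)) ?_ ?_ ?_
  · have : ∫ j, f (j 0) ∂bernoulliMeasure q = ∑ i, q i * f i := by
      rw [← integral_letterMeasure hq f, ← (hmp 0).map_eq,
        integral_map (hmp 0).measurable.aemeasurable hf.aestronglyMeasurable]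
    rw [← this]
    exact hlaw
  · exact ((hmp 0).integrable_comp hf.aestronglyMeasurable).2 Integrable.of_finite
  · intro k l hkl
    exact (ProbabilityTheory.iIndepFun_infinitePi (P := fun _ : ℕ => letterMeasure q)
      (X := fun _ => f) fun _ => hf).indepFun hkl
  · intro k
    refine ⟨(hf.comp (hmp k).measurable).aemeasurable, (hf.comp (hmp 0).measurable).aemeasurable,
      ?_⟩
    rw [← Function.comp_def f, ← Measure.map_map hf (hmp k).measurable, (hmp k).map_eq,
      ← Function.comp_def f, ← Measure.map_map hf (hmp 0).measurable, (hmp 0).map_eq]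

lemma ae_pos : ∀ᵐ j ∂bernoulliMeasure q, ∀ k, 0 < q (j k) := by
  rw [ae_all_iff]
  intro k
  have hmp : MeasurePreserving (fun j : Seq N => j k) (bernoulliMeasure q)
      (letterMeasure q) := measurePreserving_eval_infinitePi _ k
  refine hmp.quasiMeasurePreserving.ae (p := fun i => 0 < q i) ?_
  rw [ae_iff_of_countable]
  intro i hi
  rw [letterMeasure_singleton] at hi
  by_contra h
  exact hi (ENNReal.ofReal_of_nonpos (not_lt.1 h))

end Bernoulli

section SelfSimilar

variable {N d : ℕ} {S : Fin N → Euc d → Euc d} {rr p : Fin N → ℝ} {a : Euc d} {R c lo hi : ℝ}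
  {μ : ProbabilityMeasure (Euc d)}

namespace SeparatedIFS

variable (h : SeparatedIFS S rr a R c lo hi)

include h in
lemma continuous_map (i : Fin N) : Continuous (S i) :=
  (LipschitzWith.of_dist_le_mul (K := ⟨rr i, (h.pos i).le⟩)
    fun x y => (h.dist_map i x y).le).continuous

variable (hμ : μ.toMeasure = ∑ i, ENNReal.ofReal (p i) • μ.toMeasure.map (S i))
include h hμ

lemma measure_eq_sum {A : Set (Euc d)} (hA : MeasurableSet A) :
    μ.toMeasure A = ∑ i, ENNReal.ofReal (p i) * μ.toMeasure (S i ⁻¹' A) := by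
  conv_lhs => rw [hμ]
  simp only [Measure.coe_finsetSum, Finset.sum_apply, Measure.smul_apply, smul_eq_mul]
  exact Finset.sum_congr rfl fun i _ => by rw [Measure.map_apply (h.continuous_map i).measurable hA]

lemma measure_eq_sum_words (hp : ∀ i, 0 < p i) (n : ℕ) : ∀ {A : Set (Euc d)}, MeasurableSet A →
    μ.toMeasure A = ∑ w : Fin n → Fin N, ENNReal.ofReal (wordProd p (List.ofFn w)) *
      μ.toMeasure (wordMap S (List.ofFn w) ⁻¹' A) := by
  induction n with
  | zero => intro A _; simp; rfl
  | succ n ih =>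
    intro A hA
    rw [h.measure_eq_sum hμ hA, ← (Fin.consEquiv fun _ => Fin N).sum_comp, Fintype.sum_prod_type]
    refine Finset.sum_congr rfl fun i _ => ?_
    rw [ih ((h.continuous_map i).measurable hA), Finset.mul_sum]
    refine Finset.sum_congr rfl fun w _ => ?_
    have hw : List.ofFn (Fin.consEquiv (fun _ => Fin N) (i, w)) = i :: List.ofFn w :=
      List.ofFn_cons i w
    rw [hw, wordProd_cons, ENNReal.ofReal_mul (hp i).le, mul_assoc]
    rfl

lemma wordProd_mul_measure_le (hp : ∀ i, 0 < p i) (w : Word N) : ∀ {A : Set (Euc d)},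
    MeasurableSet A →
    ENNReal.ofReal (wordProd p w) * μ.toMeasure (wordMap S w ⁻¹' A) ≤ μ.toMeasure A := by
  induction w with
  | nil => intro A _; simp; rfl
  | cons i w ih =>
    intro A hA
    rw [h.measure_eq_sum hμ hA, wordProd_cons, ENNReal.ofReal_mul (hp i).le, mul_assoc]
    refine le_trans ?_ (Finset.single_le_sum (f := fun i => ENNReal.ofReal (p i) *
      μ.toMeasure (S i ⁻¹' A)) (fun _ _ => zero_le) (Finset.mem_univ i))
    exact mul_le_mul_right (ih ((h.continuous_map i).measurable hA)) _

lemma measure_tail (hp : ∀ i, 0 < p i) (hp1 : ∑ i, p i = 1) :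
    μ.toMeasure {x | R < dist x a} = 0 := by
  have hmeas : ∀ t : ℝ, MeasurableSet {x : Euc d | t < dist x a} := fun t =>
    (isOpen_lt continuous_const (continuous_id.dist continuous_const)).measurableSet
  obtain ⟨i0⟩ := nonempty_of_sum_eq_one hp1
  have hhi := h.hi_pos i0
  have hstep : ∀ s : ℝ, 0 < s → μ.toMeasure {x | R + s < dist x a} ≤
      μ.toMeasure {x | R + s / hi < dist x a} := by
    intro s hs
    rw [h.measure_eq_sum hμ (hmeas _)]
    calc _ ≤ ∑ i, ENNReal.ofReal (p i) * μ.toMeasure {x | R + s / hi < dist x a} := by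
          refine Finset.sum_le_sum fun i _ => mul_le_mul_right (measure_mono fun x hx => ?_) _
          simp only [Set.mem_preimage, Set.mem_ofPred_eq] at hx ⊢
          have h1 := dist_triangle (S i x) (S i a) a
          rw [h.dist_map] at h1
          have h2 := h.trap i
          have h3 := mul_le_mul_of_nonneg_right (h.le_hi i) (dist_nonneg (x := x) (y := a))
          have h4 : hi * (R + s / hi) < hi * dist x a := by
            rw [mul_add, mul_div_cancel₀ _ hhi.ne']
            linarith
          exact lt_of_mul_lt_mul_left h4 hhi.le
      _ = _ := by
          rw [← Finset.sum_mul, ← ENNReal.ofReal_sum_of_nonneg fun i _ => (hp i).le, hp1,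
            ENNReal.ofReal_one, one_mul]
  have hiter : ∀ (s : ℝ), 0 < s → ∀ n : ℕ, μ.toMeasure {x | R + s < dist x a} ≤
      μ.toMeasure {x | R + s / hi ^ n < dist x a} := by
    intro s hs n
    induction n with
    | zero => simp
    | succ n ih =>
      refine ih.trans ((hstep _ (by positivity)).trans_eq ?_)
      rw [div_div, pow_succ]
  have hzero : ∀ s : ℝ, 0 < s → μ.toMeasure {x | R + s < dist x a} = 0 := by
    intro s hs
    have htop : Tendsto (fun n : ℕ => R + s / hi ^ n) atTop atTop := by
      refine tendsto_atTop_add_const_left _ _ ?_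
      simp_rw [div_eq_mul_inv]
      refine Tendsto.const_mul_atTop hs ?_
      exact (tendsto_nhdsWithin_iff.2 ⟨h.tendsto_hi_pow i0,
        Eventually.of_forall fun n => pow_pos hhi n⟩).inv_tendsto_nhdsGT_zero
    have hanti : Tendsto (fun t : ℝ => μ.toMeasure {x | t < dist x a}) atTop (𝓝 0) := by
      have hinter : ⋂ t : ℝ, {x : Euc d | t < dist x a} = ∅ := by
        ext x
        simp only [Set.mem_iInter, Set.mem_ofPred_eq, Set.mem_empty_iff_false, iff_false, not_forall]
        exact ⟨dist x a, lt_irrefl _⟩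
      have := tendsto_measure_iInter_atTop (μ := μ.toMeasure)
        (s := fun t : ℝ => {x : Euc d | t < dist x a})
        (fun t => (hmeas t).nullMeasurableSet)
        (fun t u htu x hx => lt_of_le_of_lt htu hx) ⟨0, measure_ne_top _ _⟩
      rwa [hinter, measure_empty] at this
    exact le_antisymm (ge_of_tendsto' (hanti.comp htop) (hiter s hs)) zero_le
  have hunion : {x : Euc d | R < dist x a} = ⋃ n : ℕ, {x | R + 1 / ((n : ℝ) + 1) < dist x a} := by
    ext x
    simp only [Set.mem_ofPred_eq, Set.mem_iUnion]
    constructor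
    · intro hx
      obtain ⟨n, hn⟩ := exists_nat_one_div_lt (sub_pos.2 hx)
      exact ⟨n, by linarith⟩
    · rintro ⟨n, hn⟩
      have : 0 < 1 / ((n : ℝ) + 1) := by positivity
      linarith
  rw [hunion, measure_iUnion_null_iff]
  exact fun n => hzero _ (by positivity)

lemma measure_ball_trap (hp : ∀ i, 0 < p i) (hp1 : ∑ i, p i = 1) :
    μ.toMeasure (closedBall a R) = 1 := by
  rw [← prob_compl_eq_zero_iff measurableSet_closedBall]
  convert h.measure_tail hμ hp hp1 using 2
  ext x
  simp

lemma measure_le_bernoulli [IsProbabilityMeasure (letterMeasure p)] (hp : ∀ i, 0 < p i)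
    (hp1 : ∑ i, p i = 1) {A : Set (Euc d)} (hA : MeasurableSet A) (n : ℕ) :
    μ.toMeasure A ≤ bernoulliMeasure p
      {j | ∃ x, dist x a ≤ R ∧ wordMap S (prefixWord j n) x ∈ A} := by
  set Q : Finset (Fin n → Fin N) :=
    Finset.univ.filter fun w => ∃ x, dist x a ≤ R ∧ wordMap S (List.ofFn w) x ∈ A with hQ
  rw [h.measure_eq_sum_words hμ hp n hA]
  calc _ ≤ ∑ w ∈ Q, ENNReal.ofReal (wordProd p (List.ofFn w)) := by
        rw [hQ, Finset.sum_filter]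
        refine Finset.sum_le_sum fun w _ => ?_
        split_ifs with hw
        · exact mul_le_of_le_one_right zero_le prob_le_one
        · have : μ.toMeasure (wordMap S (List.ofFn w) ⁻¹' A) = 0 := by
            refine measure_mono_null (fun x hx => ?_) (h.measure_tail hμ hp hp1)
            by_contra hx'
            exact hw ⟨x, not_lt.1 hx', hx⟩
          simp [this]
    _ = ∑ w ∈ Q, bernoulliMeasure p {i | prefixWord i n = List.ofFn w} := by
        refine Finset.sum_congr rfl fun w _ => ?_
        rw [← bernoulliMeasure_word p (fun i => (hp i).le), List.length_ofFn]
    _ = bernoulliMeasure p (⋃ w ∈ Q, {i | prefixWord i n = List.ofFn w}) := by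
        rw [measure_biUnion_finset _ fun w _ => measurableSet_prefix _ _]
        intro v _ w _ hvw
        refine Set.disjoint_left.2 fun i hi hi' => hvw ?_
        exact List.ofFn_injective (hi.symm.trans hi')
    _ ≤ _ := by
        refine measure_mono (Set.iUnion₂_subset fun w hw i hi => ?_)
        simp only [Set.mem_ofPred_eq] at hi ⊢
        rw [hi]
        exact (Finset.mem_filter.1 hw).2

/-- Every ball has at most the Bernoulli mass of the codes landing in the ball of twice the
radius. -/
lemma measure_closedBall_le_bernoulli [IsProbabilityMeasure (letterMeasure p)]
    (hp : ∀ i, 0 < p i) (hp1 : ∑ i, p i = 1) (x : Euc d) {ρ : ℝ} (hρ : 0 < ρ) :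
    μ.toMeasure (closedBall x ρ) ≤ bernoulliMeasure p {j | dist (codeMap S a j) x ≤ 2 * ρ} := by
  obtain ⟨i0⟩ := nonempty_of_sum_eq_one hp1
  have hlim : Tendsto (fun n : ℕ => 2 * R * hi ^ n) atTop (𝓝 0) := by
    simpa using (h.tendsto_hi_pow i0).const_mul (2 * R)
  obtain ⟨n, hn⟩ := (hlim.eventually (gt_mem_nhds hρ)).exists
  refine (h.measure_le_bernoulli hμ hp hp1 measurableSet_closedBall n).trans
    (measure_mono ?_)
  rintro j ⟨y, hy, hyx⟩
  rw [mem_closedBall] at hyx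
  have h1 := h.dist_codeMap j n
  have h2 := dist_wordMap h.dist_map (prefixWord j n) a y
  have h3 := h.wordProd_le_pow (prefixWord j n)
  rw [length_prefixWord] at h3
  have h4 := dist_triangle4 (codeMap S a j) (wordMap S (prefixWord j n) a)
    (wordMap S (prefixWord j n) y) x
  rw [dist_comm a y] at h2
  have h5 := mul_le_mul_of_nonneg_left hy (wordProd_pos h.pos (prefixWord j n)).le
  have h6 := mul_le_mul_of_nonneg_left h3 h.R_pos.le
  simp only [Set.mem_ofPred_eq]
  linarith

/-- A set containing the image of the trapping ball under `S_w` has mass at least `p_w`. -/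
lemma wordProd_le_measure (hp : ∀ i, 0 < p i) (hp1 : ∑ i, p i = 1) (w : Word N) {x : Euc d}
    {ρ : ℝ} (hx : dist x (wordMap S w a) + R * wordProd rr w ≤ ρ) :
    wordProd p w ≤ μ (closedBall x ρ) := by
  have h1 := h.wordProd_mul_measure_le hμ hp w (A := closedBall x ρ) measurableSet_closedBall
  have h2 : μ.toMeasure (wordMap S w ⁻¹' closedBall x ρ) = 1 := by
    refine le_antisymm prob_le_one ?_
    rw [← h.measure_ball_trap hμ hp hp1]
    refine measure_mono fun y hy => ?_
    rw [mem_closedBall] at hy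
    rw [Set.mem_preimage, mem_closedBall]
    have h3 := dist_triangle_right (wordMap S w y) x (wordMap S w a)
    rw [dist_wordMap h.dist_map] at h3
    have h4 := mul_le_mul_of_nonneg_left hy (wordProd_pos h.pos w).le
    linarith
  rw [h2, mul_one, ← ProbabilityMeasure.ennreal_coeFn_eq_coeFn_toMeasure] at h1
  exact (ENNReal.ofReal_le_coe).1 h1 |> fun h3 => by
    simpa using h3

end SeparatedIFS

end SelfSimilar

end Multifractal

namespace Multifractal

section Weights

variable {N : ℕ}

lemma exists_weights_of_one_le (y l : Fin N → ℝ) (t θ : ℝ) (Z : Finset (Fin N))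
    (h1 : 1 ≤ ∑ i ∈ Z, Real.exp (-θ * y i - t * l i))
    (h0 : ∑ i ∈ Z, Real.exp (-θ * y i - t * l i) * y i = 0) :
    ∃ q : Fin N → ℝ, (∀ i, 0 ≤ q i) ∧ ∑ i, q i = 1 ∧ ∑ i, q i * y i = 0 ∧
      t * ∑ i, q i * l i ≤ ∑ i, q i * -Real.log (q i) := by
  set G := ∑ i ∈ Z, Real.exp (-θ * y i - t * l i) with hG
  have hG0 : 0 < G := one_pos.trans_le h1
  have hsum : ∀ f : Fin N → ℝ, ∑ i, (if i ∈ Z then Real.exp (-θ * y i - t * l i) / G else 0) * f i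
      = (∑ i ∈ Z, Real.exp (-θ * y i - t * l i) * f i) / G := by
    intro f
    simp only [ite_mul, zero_mul, Finset.sum_ite_mem, Finset.univ_inter, Finset.sum_div]
    exact Finset.sum_congr rfl fun i _ => by ring
  refine ⟨fun i => if i ∈ Z then Real.exp (-θ * y i - t * l i) / G else 0, fun i => ?_, ?_, ?_, ?_⟩
  · dsimp only
    split_ifs <;> positivity
  · have := hsum fun _ => 1
    simp only [mul_one, ← hG] at this
    rw [this, div_self hG0.ne']
  · rw [hsum, h0, zero_div]
  · have h2 : ∑ i, (if i ∈ Z then Real.exp (-θ * y i - t * l i) / G else 0) *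
        -Real.log (if i ∈ Z then Real.exp (-θ * y i - t * l i) / G else 0) =
        ∑ i, (if i ∈ Z then Real.exp (-θ * y i - t * l i) / G else 0) *
          (θ * y i + t * l i + Real.log G) := by
      refine Finset.sum_congr rfl fun i _ => ?_
      split_ifs
      · rw [Real.log_div (Real.exp_pos _).ne' hG0.ne', Real.log_exp]
        ring
      · simp
    rw [h2, hsum, hsum]
    have h3 : ∑ i ∈ Z, Real.exp (-θ * y i - t * l i) * (θ * y i + t * l i + Real.log G) =
        θ * ∑ i ∈ Z, Real.exp (-θ * y i - t * l i) * y i +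
        t * ∑ i ∈ Z, Real.exp (-θ * y i - t * l i) * l i + Real.log G * G := by
      rw [hG, Finset.mul_sum, Finset.mul_sum, Finset.mul_sum, ← Finset.sum_add_distrib,
        ← Finset.sum_add_distrib]
      exact Finset.sum_congr rfl fun i _ => by ring
    rw [h3, h0, mul_zero, zero_add, add_div, mul_div_assoc, mul_div_cancel_right₀ _ hG0.ne']
    linarith [Real.log_nonneg h1]

lemma tendsto_sum_exp_of_nonneg (y l : Fin N → ℝ) (t : ℝ) (hy : ∀ i, 0 ≤ y i) :
    Tendsto (fun θ : ℝ => ∑ i, Real.exp (-θ * y i - t * l i)) atTop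
      (𝓝 (∑ i ∈ Finset.univ.filter fun i => y i = 0, Real.exp (-0 * y i - t * l i))) := by
  rw [Finset.sum_filter]
  refine tendsto_finsetSum _ fun i _ => ?_
  split_ifs with h
  · simp [h]
  · have h1 : 0 < y i := lt_of_le_of_ne (hy i) (Ne.symm h)
    refine Real.tendsto_exp_atBot.comp (tendsto_atBot_add_const_right _ _ ?_)
    exact (tendsto_neg_atTop_atBot).atBot_mul_const h1

lemma exists_weights_of_nonneg (y l : Fin N → ℝ) (t : ℝ) (hy : ∀ i, 0 ≤ y i)
    (hF : ∀ θ : ℝ, 1 ≤ ∑ i, Real.exp (-θ * y i - t * l i)) :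
    ∃ q : Fin N → ℝ, (∀ i, 0 ≤ q i) ∧ ∑ i, q i = 1 ∧ ∑ i, q i * y i = 0 ∧
      t * ∑ i, q i * l i ≤ ∑ i, q i * -Real.log (q i) := by
  refine exists_weights_of_one_le y l t 0 (Finset.univ.filter fun i => y i = 0)
    (ge_of_tendsto' (tendsto_sum_exp_of_nonneg y l t hy) hF) (Finset.sum_eq_zero fun i hi => ?_)
  rw [(Finset.mem_filter.1 hi).2, mul_zero]

lemma tendsto_sum_exp_atTop (y l : Fin N → ℝ) (t : ℝ) {i : Fin N} (hi : y i < 0) :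
    Tendsto (fun θ : ℝ => ∑ i, Real.exp (-θ * y i - t * l i)) atTop atTop := by
  refine tendsto_atTop_mono (f := fun θ => Real.exp (-θ * y i - t * l i)) (fun θ =>
    Finset.single_le_sum (f := fun i => Real.exp (-θ * y i - t * l i))
      (fun _ _ => (Real.exp_pos _).le) (Finset.mem_univ i)) ?_
  refine Real.tendsto_exp_atTop.comp (tendsto_atTop_add_const_right _ _ ?_)
  exact tendsto_neg_atTop_atBot.atBot_mul_const_of_neg hi

/-- Either the partition sum drops below `1` somewhere, or there is a probability vector centred
for `y` whose entropy is at least `t` times its Lyapunov exponent. -/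
lemma exists_lt_one_or_exists_weights (y l : Fin N → ℝ) (t : ℝ) :
    (∃ θ : ℝ, ∑ i, Real.exp (-θ * y i - t * l i) < 1) ∨
    ∃ q : Fin N → ℝ, (∀ i, 0 ≤ q i) ∧ ∑ i, q i = 1 ∧ ∑ i, q i * y i = 0 ∧
      t * ∑ i, q i * l i ≤ ∑ i, q i * -Real.log (q i) := by
  by_contra! hcon
  obtain ⟨hF, hq⟩ := hcon
  suffices h : ∃ q : Fin N → ℝ, (∀ i, 0 ≤ q i) ∧ ∑ i, q i = 1 ∧ ∑ i, q i * y i = 0 ∧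
      t * ∑ i, q i * l i ≤ ∑ i, q i * -Real.log (q i) by
    obtain ⟨q, h1, h2, h3, h4⟩ := h
    exact absurd h4 (not_le.2 (hq q h1 h2 h3))
  by_cases hneg : ∃ i, y i < 0
  · by_cases hpos : ∃ i, 0 < y i
    · obtain ⟨i, hi⟩ := hneg
      obtain ⟨k, hk⟩ := hpos
      set F : ℝ → ℝ := fun θ => ∑ i, Real.exp (-θ * y i - t * l i) with hFdef
      have hcont : Continuous F := by fun_prop
      have hbot : Tendsto F atBot atTop := by
        have h1 := (tendsto_sum_exp_atTop (fun i => -y i) l t (i := k) (by linarith)).comp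
          tendsto_neg_atBot_atTop
        refine h1.congr fun θ => Finset.sum_congr rfl fun i _ => ?_
        simp
      have hlim : Tendsto F (cocompact ℝ) atTop := by
        rw [cocompact_eq_atBot_atTop]
        exact hbot.sup (tendsto_sum_exp_atTop y l t hi)
      obtain ⟨θ, hθ⟩ := hcont.exists_forall_le hlim
      refine exists_weights_of_one_le y l t θ Finset.univ (hF θ) ?_
      have hd : HasDerivAt F (∑ i, Real.exp (-θ * y i - t * l i) * (-1 * y i)) θ := by
        refine HasDerivAt.fun_sum fun i _ => ?_
        exact (((hasDerivAt_id θ).neg.mul_const (y i)).sub_const (t * l i)).exp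
      have hmin : IsLocalMin F θ := Filter.Eventually.of_forall hθ
      have h0 := hmin.hasDerivAt_eq_zero hd
      rw [← neg_eq_zero, ← h0, ← Finset.sum_neg_distrib]
      exact Finset.sum_congr rfl fun i _ => by ring
    · push Not at hpos
      obtain ⟨q, h1, h2, h3, h4⟩ := exists_weights_of_nonneg (fun i => -y i) l t
        (fun i => by linarith [hpos i]) fun θ => by
          refine (hF (-θ)).trans_eq (Finset.sum_congr rfl fun i _ => ?_)
          simp
      refine ⟨q, h1, h2, ?_, h4⟩
      simpa using h3
  · push Not at hneg
    exact exists_weights_of_nonneg y l t hneg hF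

end Weights

end Multifractal
namespace Multifractal

section Partition

variable {N : ℕ}

lemma summable_wordProd {b : Fin N → ℝ} (hb : ∀ i, 0 ≤ b i) (hb1 : ∑ i, b i < 1) :
    Summable (wordProd b) := by
  rw [← (List.equivSigmaTuple (α := Fin N)).symm.summable_iff,
    summable_sigma_of_nonneg (f := wordProd b ∘ List.equivSigmaTuple.symm)
      fun x => wordProd_nonneg hb _]
  refine ⟨fun n => Summable.of_finite, ?_⟩
  refine (summable_geometric_of_lt_one (Finset.sum_nonneg fun i _ => hb i) hb1).congr fun n => ?_
  rw [tsum_fintype, Fintype.sum_pow]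
  refine Finset.sum_congr rfl fun f _ => ?_
  change _ = wordProd b (List.ofFn f)
  rw [wordProd, List.map_ofFn, List.prod_ofFn]
  rfl

variable {rr p : Fin N → ℝ} {α : ℝ}

/-- The partition sum `∑ p_i^θ r_i^(t-αθ)`. -/
noncomputable def partitionSum (rr p : Fin N → ℝ) (α θ t : ℝ) : ℝ :=
  ∑ i, p i ^ θ * rr i ^ (t - α * θ)

lemma partitionSum_eq (hr : ∀ i, 0 < rr i) (hp : ∀ i, 0 < p i) (θ t : ℝ) :
    partitionSum rr p α θ t = ∑ i, Real.exp (-θ * (-Real.log (p i) - α * -Real.log (rr i)) -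
      t * -Real.log (rr i)) := by
  refine Finset.sum_congr rfl fun i _ => ?_
  rw [Real.rpow_def_of_pos (hp i), Real.rpow_def_of_pos (hr i), ← Real.exp_add]
  congr 1
  ring

lemma eventually_partitionSum_lt_one (hr : ∀ i, 0 < rr i) (hp : ∀ i, 0 < p i) {θ t : ℝ}
    (h : partitionSum rr p α θ t < 1) (c : ℝ) :
    ∀ᶠ r : ℝ in 𝓝[>] 0, partitionSum rr p α θ (t - c * r) < 1 := by
  have hcont : Continuous fun r : ℝ => partitionSum rr p α θ (t - c * r) := by
    simp_rw [partitionSum_eq hr hp]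
    fun_prop
  refine ((hcont.tendsto 0).mono_left nhdsWithin_le_nhds).eventually (gt_mem_nhds ?_)
  simpa using h

lemma summable_of_partitionSum_lt_one (hr : ∀ i, 0 < rr i) (hp : ∀ i, 0 < p i) {θ t : ℝ}
    (h : partitionSum rr p α θ t < 1) :
    Summable fun w : Word N => wordProd p w ^ θ * wordProd rr w ^ (t - α * θ) := by
  refine (summable_wordProd (fun i => ?_) h).congr fun w => wordProd_mul_rpow hp hr _ _ w
  have := hp i
  have := hr i
  positivity

lemma rpow_le_of_abs_log_div_log_le {P ρ : ℝ} (hP : 0 < P) (hρ : 0 < ρ) (hρ1 : ρ < 1) {r : ℝ}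
    (h : |Real.log P / Real.log ρ - α| ≤ r) (θ t : ℝ) :
    ρ ^ t ≤ P ^ θ * ρ ^ (t - |θ| * r - α * θ) := by
  have hlog := Real.log_neg hρ hρ1
  obtain ⟨e, he⟩ : ∃ e, e = Real.log P / Real.log ρ - α := ⟨_, rfl⟩
  have hP' : Real.log P = (α + e) * Real.log ρ := by
    rw [he, add_sub_cancel, div_mul_cancel₀ _ hlog.ne]
  rw [← he] at h
  rw [Real.rpow_def_of_pos hP, Real.rpow_def_of_pos hρ, Real.rpow_def_of_pos hρ, ← Real.exp_add,
    Real.exp_le_exp, hP']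
  have h1 : θ * e ≤ |θ| * r := (le_abs_self _).trans (by rw [abs_mul]; gcongr)
  nlinarith

lemma SeparatedIFS.sigmaAbs_le {d : ℕ} {S : Fin N → Euc d → Euc d} {a : Euc d} {R c lo hi : ℝ}
    (hI : SeparatedIFS S rr a R c lo hi) (hp : ∀ i, 0 < p i) {θ t : ℝ} (h : partitionSum rr p α θ t < 1) :
    ∃ r : ℝ, 0 < r ∧ sigmaAbs (wordProd rr)
      (fun w => |Real.log (wordProd p w) / Real.log (wordProd rr w) - α| ≤ r) ≤ t := by
  have hr0 := hI.pos
  obtain ⟨r, hr1, hrpos⟩ := ((eventually_partitionSum_lt_one hr0 hp h |θ|).and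
    self_mem_nhdsWithin).exists
  refine ⟨r, hrpos, sInf_le ⟨t, ?_, rfl⟩⟩
  refine Summable.of_nonneg_of_le (fun w => (Real.rpow_pos_of_pos (wordProd_pos hr0 _) _).le)
    (fun w => ?_) ((summable_of_partitionSum_lt_one hr0 hp hr1).subtype _)
  exact rpow_le_of_abs_log_div_log_le (wordProd_pos hp _) (wordProd_pos hr0 _)
    (hI.wordProd_lt_one w.2.1) w.2.2 θ t

end Partition

end Multifractal
namespace Multifractal

section Local

variable {d : ℕ} {μ : ProbabilityMeasure (Euc d)}

lemma measure_closedBall_pos {x : Euc d} (hx : x ∈ suppSet μ) {δ : ℝ} (hδ : 0 < δ) :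
    0 < μ (closedBall x δ) :=
  (hx δ hδ).trans_le (μ.apply_mono ball_subset_closedBall)

lemma rpow_le_measure {x : Euc d} (hx : x ∈ suppSet μ) {δ β : ℝ} (hδ : 0 < δ) (hδ1 : δ < 1)
    (h : localDimAt μ x δ ≤ β) : δ ^ β ≤ (μ (closedBall x δ) : ℝ) := by
  have hm : 0 < (μ (closedBall x δ) : ℝ) := measure_closedBall_pos hx hδ
  rw [localDimAt, div_le_iff_of_neg (Real.log_neg hδ hδ1)] at h
  rw [← Real.log_le_log_iff (Real.rpow_pos_of_pos hδ _) hm, Real.log_rpow hδ]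
  exact h

lemma measure_le_rpow {x : Euc d} (hx : x ∈ suppSet μ) {δ β : ℝ} (hδ : 0 < δ) (hδ1 : δ < 1)
    (h : β ≤ localDimAt μ x δ) : (μ (closedBall x δ) : ℝ) ≤ δ ^ β := by
  have hm : 0 < (μ (closedBall x δ) : ℝ) := measure_closedBall_pos hx hδ
  rw [localDimAt, le_div_iff_of_neg (Real.log_neg hδ hδ1)] at h
  rw [← Real.log_le_log_iff hm (Real.rpow_pos_of_pos hδ _), Real.log_rpow hδ]
  exact h

end Local

/-- Comparable numbers have comparable powers. -/
lemma rpow_abs_mul_rpow_le {l δ x : ℝ} (hl : 0 < l) (hl1 : l ≤ 1) (hδ : 0 < δ)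
    (h1 : l * δ ≤ x) (h2 : x ≤ δ) (e : ℝ) : l ^ |e| * δ ^ e ≤ x ^ e := by
  have hx : 0 < x := (mul_pos hl hδ).trans_le h1
  rcases le_total 0 e with he | he
  · rw [abs_of_nonneg he, ← Real.mul_rpow hl.le hδ.le]
    exact Real.rpow_le_rpow (by positivity) h1 he
  · calc l ^ |e| * δ ^ e ≤ 1 * δ ^ e := by
          gcongr
          exact Real.rpow_le_one hl.le hl1 (abs_nonneg e)
      _ ≤ x ^ e := by
          rw [one_mul]
          exact Real.rpow_le_rpow_of_nonpos hx h2 he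

namespace SeparatedIFS

variable {N d : ℕ} {S : Fin N → Euc d → Euc d} {rr p : Fin N → ℝ} {a : Euc d} {R c lo hi : ℝ}
  {μ : ProbabilityMeasure (Euc d)}
variable (h : SeparatedIFS S rr a R c lo hi)
  (hμ : μ.toMeasure = ∑ i, ENNReal.ofReal (p i) • μ.toMeasure.map (S i))

include h in
lemma lo_le_one (hp1 : ∑ i, p i = 1) : lo ≤ 1 := by
  obtain ⟨i0⟩ := nonempty_of_sum_eq_one hp1
  exact (h.lo_le i0).trans (h.lt_one i0).le

include h hμ

lemma exists_code_near (hp : ∀ i, 0 < p i) (hp1 : ∑ i, p i = 1) {x : Euc d} (hx : x ∈ suppSet μ)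
    {η : ℝ} (hη : 0 < η) : ∃ j, dist (codeMap S a j) x ≤ 2 * η := by
  have := isProbabilityMeasure_letterMeasure (fun i => (hp i).le) hp1
  have h1 := h.measure_closedBall_le_bernoulli hμ hp hp1 x hη
  have h2 : 0 < μ.toMeasure (closedBall x η) := by
    rw [← ProbabilityMeasure.ennreal_coeFn_eq_coeFn_toMeasure]
    exact_mod_cast measure_closedBall_pos hx hη
  exact nonempty_of_measure_ne_zero (h2.trans_le h1).ne'

lemma exists_small_word (hp : ∀ i, 0 < p i) (hp1 : ∑ i, p i = 1) {x : Euc d} (hx : x ∈ suppSet μ)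
    {δ : ℝ} (hδ : 0 < δ) (hδ1 : δ < 1) : ∃ v ∈ stopSet rr (1 / (4 * R) * δ),
      dist (wordMap S v a) x ≤ δ ∧ wordProd p v ≤ μ (closedBall x δ) := by
  have hR := h.R_pos
  have hR1 := h.one_le
  have hκ : 1 / (4 * R) ≤ 1 := by
    rw [div_le_one (by positivity)]
    linarith
  obtain ⟨j, hj⟩ := h.exists_code_near hμ hp hp1 hx (η := δ / 4) (by positivity)
  obtain ⟨n, hn⟩ := h.exists_prefix_mem_stopSet j (δ := 1 / (4 * R) * δ) (by positivity)
    (by nlinarith)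
  have h1 := h.dist_codeMap j n
  have h2 : R * wordProd rr (prefixWord j n) ≤ δ / 4 := by
    calc _ ≤ R * (1 / (4 * R) * δ) := by
          gcongr
          exact hn.2.1
      _ = δ / 4 := by
          field_simp
  have h3 := dist_triangle_left (wordMap S (prefixWord j n) a) x (codeMap S a j)
  refine ⟨_, hn, by linarith, h.wordProd_le_measure hμ hp hp1 _ ?_⟩
  rw [dist_comm]
  linarith

lemma exists_large_word (hp : ∀ i, 0 < p i) (hp1 : ∑ i, p i = 1) : ∃ M : ℝ, 0 < M ∧
    ∀ x ∈ suppSet μ, ∀ δ : ℝ, 0 < δ → δ < 1 → ∃ v ∈ stopSet rr δ,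
      dist (wordMap S v a) x ≤ (2 + R) * δ ∧ (μ (closedBall x δ) : ℝ) ≤ M * wordProd p v := by
  obtain ⟨M, hM⟩ := h.exists_neighbour_bound (2 + R)
  refine ⟨M + 1, by positivity, fun x hx δ hδ hδ1 => ?_⟩
  have := isProbabilityMeasure_letterMeasure (fun i => (hp i).le) hp1
  obtain ⟨hfin, hcard⟩ := hM δ x hδ
  set m : ℝ := ((μ (closedBall x δ) : ℝ≥0) : ℝ) with hm
  have hmpos : 0 < m := measure_closedBall_pos hx hδ
  have hle : m ≤ ∑ v ∈ hfin.toFinset, wordProd p v := by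
    have h1 := h.measure_closedBall_le_bernoulli hμ hp hp1 x hδ
    have h2 : {j | dist (codeMap S a j) x ≤ 2 * δ} ⊆
        ⋃ v ∈ hfin.toFinset, {i | prefixWord i v.length = v} := by
      intro j hj
      obtain ⟨n, hn⟩ := h.exists_prefix_mem_stopSet j hδ hδ1
      have h3 := h.dist_codeMap j n
      have h4 := mul_le_mul_of_nonneg_left hn.2.1 h.R_pos.le
      have h5 := dist_triangle_left (wordMap S (prefixWord j n) a) x (codeMap S a j)
      rw [Set.mem_ofPred_eq] at hj
      refine Set.mem_biUnion (x := prefixWord j n) ?_ ?_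
      · simp only [Finset.mem_coe, Set.Finite.mem_toFinset, Set.mem_ofPred_eq]
        exact ⟨hn, by linarith⟩
      · simp
    have h3 := h1.trans ((measure_mono h2).trans (measure_biUnion_finset_le _ _))
    simp only [bernoulliMeasure_word p fun i => (hp i).le] at h3
    rw [← ENNReal.ofReal_sum_of_nonneg fun v _ => (wordProd_pos hp v).le,
      ← ProbabilityMeasure.ennreal_coeFn_eq_coeFn_toMeasure] at h3
    have h4 := ENNReal.toReal_mono ENNReal.ofReal_ne_top h3
    rwa [ENNReal.toReal_ofReal (Finset.sum_nonneg fun v _ => (wordProd_pos hp v).le)] at h4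
  by_contra hcon
  push Not at hcon
  have h1 : ∀ v ∈ hfin.toFinset, ((M : ℝ) + 1) * wordProd p v ≤ m := fun v hv => by
    have hv' := hfin.mem_toFinset.1 hv
    exact (hcon v hv'.1 hv'.2).le
  have h2 := Finset.sum_le_card_nsmul _ _ _ h1
  rw [← Finset.mul_sum, nsmul_eq_mul, ← Set.ncard_eq_toFinset_card _ hfin] at h2
  have h3 : (Set.ncard {v | v ∈ stopSet rr δ ∧ dist (wordMap S v a) x ≤ (2 + R) * δ} : ℝ) ≤ M := by
    exact_mod_cast hcard
  nlinarith

lemma exists_word_of_localDim (hp : ∀ i, 0 < p i) (hp1 : ∑ i, p i = 1) (α θ t r : ℝ) :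
    ∃ C κ : ℝ, 0 < κ ∧ ∀ x ∈ suppSet μ, ∀ δ : ℝ, 0 < δ → δ < 1 →
      α - r ≤ localDimAt μ x δ → localDimAt μ x δ ≤ α + r → ∃ v : Word N,
        dist (wordMap S v a) x ≤ C * δ ∧
        κ * δ ^ (t + |θ| * r) ≤ wordProd p v ^ θ * wordProd rr v ^ (t - α * θ) := by
  have hlo := h.lo_pos
  have hlo1 : lo ≤ 1 := h.lo_le_one hp1
  have hR := h.R_pos
  rcases le_total 0 θ with hθ | hθ
  · obtain ⟨M, hM0, hM⟩ := h.exists_large_word hμ hp hp1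
    refine ⟨2 + R, (1 / M) ^ θ * lo ^ |t - α * θ|, by positivity, fun x hx δ hδ hδ1 h1 h2 => ?_⟩
    obtain ⟨v, hv, hdist, hm⟩ := hM x hx δ hδ hδ1
    refine ⟨v, hdist, ?_⟩
    have h3 := rpow_le_measure hx hδ hδ1 h2
    have h4 : 1 / M * δ ^ (α + r) ≤ wordProd p v := by
      rw [one_div, inv_mul_le_iff₀ hM0]
      exact h3.trans hm
    calc _ = (1 / M * δ ^ (α + r)) ^ θ * (lo ^ |t - α * θ| * δ ^ (t - α * θ)) := by
          rw [Real.mul_rpow (by positivity) (by positivity), ← Real.rpow_mul hδ.le, abs_of_nonneg hθ,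
            show t + θ * r = (α + r) * θ + (t - α * θ) by ring, Real.rpow_add hδ]
          ring
      _ ≤ _ := mul_le_mul (Real.rpow_le_rpow (by positivity) h4 hθ)
          (rpow_abs_mul_rpow_le hlo hlo1 hδ (h.lo_mul_le hv) hv.2.1 _) (by positivity)
          (Real.rpow_nonneg (wordProd_pos hp v).le _)
  · refine ⟨1, lo ^ |t - α * θ| * (1 / (4 * R)) ^ (t - α * θ), by positivity,
      fun x hx δ hδ hδ1 h1 h2 => ?_⟩
    obtain ⟨v, hv, hdist, hm⟩ := h.exists_small_word hμ hp hp1 hx hδ hδ1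
    refine ⟨v, by rwa [one_mul], ?_⟩
    have h3 := hm.trans (measure_le_rpow hx hδ hδ1 h1)
    calc _ = (δ ^ (α - r)) ^ θ * (lo ^ |t - α * θ| * (1 / (4 * R) * δ) ^ (t - α * θ)) := by
          rw [Real.mul_rpow (x := 1 / (4 * R)) (by positivity) (by positivity), ← Real.rpow_mul hδ.le,
            abs_of_nonpos hθ,
            show t + -θ * r = (α - r) * θ + (t - α * θ) by ring, Real.rpow_add hδ]
          ring
      _ ≤ _ := mul_le_mul (Real.rpow_le_rpow_of_nonpos (wordProd_pos hp v) h3 hθ)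
          (rpow_abs_mul_rpow_le hlo hlo1 (by positivity) (h.lo_mul_le hv) hv.2.1 _) (by positivity)
          (Real.rpow_nonneg (wordProd_pos hp v).le _)

lemma exists_packing_le (hp : ∀ i, 0 < p i) (hp1 : ∑ i, p i = 1) {α θ t : ℝ}
    (hF : partitionSum rr p α θ t < 1) (r : ℝ) :
    ∃ K : ℝ, 0 < K ∧ ∀ δ : ℝ, 0 < δ → δ < 1 →
      (packCount μ α r δ : ℝ) ≤ K * δ ^ (-(t + |θ| * r)) := by
  obtain ⟨C, κ, hκ, hword⟩ := h.exists_word_of_localDim hμ hp hp1 α θ t r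
  obtain ⟨M, hM⟩ := exists_packing_bound d one_pos C
  have hsum := summable_of_partitionSum_lt_one h.pos hp hF
  have hnn : ∀ w : Word N, 0 ≤ wordProd p w ^ θ * wordProd rr w ^ (t - α * θ) := fun w =>
    mul_nonneg (Real.rpow_nonneg (wordProd_pos hp w).le _)
      (Real.rpow_nonneg (wordProd_pos h.pos w).le _)
  set CF := ∑' w : Word N, wordProd p w ^ θ * wordProd rr w ^ (t - α * θ)
  have hCF : 0 ≤ CF := tsum_nonneg hnn
  refine ⟨M * (CF / κ) + 1, by positivity, fun δ hδ hδ1 => ?_⟩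
  have hδs : 0 < δ ^ (-(t + |θ| * r)) := Real.rpow_pos_of_pos hδ _
  suffices hpack : packCount μ α r δ ≤ ⌊M * (CF / κ) * δ ^ (-(t + |θ| * r))⌋₊ by
    calc (packCount μ α r δ : ℝ) ≤ M * (CF / κ) * δ ^ (-(t + |θ| * r)) :=
          (Nat.cast_le.2 hpack).trans (Nat.floor_le (by positivity))
      _ ≤ _ := by gcongr; linarith
  refine csSup_le' ?_
  rintro n ⟨cf, hsupp, hdisj, hdim⟩
  refine Nat.le_floor ?_
  choose v hv1 hv2 using fun j => hword (cf j) (hsupp j) δ hδ hδ1 (hdim j).1 (hdim j).2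
  have hsep : ∀ i j, i ≠ j → δ ≤ dist (cf i) (cf j) := by
    intro i j hij
    by_contra! hlt
    exact Set.disjoint_left.1 (hdisj i j hij) (mem_closedBall_self hδ.le) (by
      rw [mem_closedBall]
      exact hlt.le)
  have hmult : (Finset.univ : Finset (Fin n)).card ≤ M * (Finset.univ.image v).card := by
    refine Finset.card_le_mul_card_image _ _ fun w _ => ?_
    refine hM _ cf (wordMap S w a) δ hδ (fun i hi => ?_) fun i _ j _ hij => ?_
    · rw [← (Finset.mem_filter.1 hi).2, dist_comm]
      exact hv1 i
    · rw [one_mul]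
      exact hsep i j hij
  rw [Finset.card_univ, Fintype.card_fin] at hmult
  have hcard : ((Finset.univ.image v).card : ℝ) * (κ * δ ^ (t + |θ| * r)) ≤ CF := by
    rw [← nsmul_eq_mul]
    refine (Finset.card_nsmul_le_sum _ (fun w => wordProd p w ^ θ * wordProd rr w ^ (t - α * θ)) _
      fun w hw => ?_).trans (hsum.sum_le_tsum _ fun w _ => hnn w)
    obtain ⟨j, -, rfl⟩ := Finset.mem_image.1 hw
    exact hv2 j
  have hcard' : ((Finset.univ.image v).card : ℝ) ≤ CF / κ * δ ^ (-(t + |θ| * r)) := by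
    rw [Real.rpow_neg hδ.le, ← div_eq_mul_inv, div_div, le_div_iff₀ (by positivity)]
    exact hcard
  calc (n : ℝ) ≤ M * ((Finset.univ.image v).card : ℝ) := by exact_mod_cast hmult
    _ ≤ M * (CF / κ * δ ^ (-(t + |θ| * r))) := by gcongr
    _ = _ := by ring

lemma fCoarse_le (hp : ∀ i, 0 < p i) (hp1 : ∑ i, p i = 1) {α θ t : ℝ}
    (hF : partitionSum rr p α θ t < 1) : fCoarse μ α ≤ t := by
  refine EReal.le_of_forall_lt_iff_le.1 fun t' ht' => ?_
  have ht : t < t' := by exact_mod_cast ht'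
  obtain ⟨r, hr0, hr⟩ : ∃ r : ℝ, 0 < r ∧ t + |θ| * r < t' := by
    refine ⟨(t' - t) / (2 * (|θ| + 1)), by have := sub_pos.2 ht; positivity, ?_⟩
    have h1 : |θ| * ((t' - t) / (2 * (|θ| + 1))) ≤ (t' - t) / 2 := by
      rw [← div_div, ← mul_div_assoc, div_le_iff₀ (by positivity)]
      nlinarith
    linarith
  obtain ⟨K, hK, hpack⟩ := h.exists_packing_le hμ hp hp1 hF r
  refine (iInf₂_le r hr0).trans (liminf_le_of_frequently_le' (Eventually.frequently ?_))
  have hlim : Tendsto (fun δ : ℝ => Real.log K / -Real.log δ) (𝓝[>] 0) (𝓝 0) :=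
    (tendsto_neg_atBot_atTop.comp Real.tendsto_log_nhdsGT_zero).const_div_atTop _
  filter_upwards [hlim.eventually (gt_mem_nhds (sub_pos.2 hr)),
    Ioo_mem_nhdsGT (one_pos (α := ℝ))] with δ h1 h2
  have hlog := Real.log_neg h2.1 h2.2
  rw [ratioE]
  split_ifs with h0
  · exact bot_le
  · rw [EReal.coe_le_coe_iff, div_le_iff₀ (by linarith)]
    rw [div_lt_iff₀ (by linarith)] at h1
    have h3 := Real.log_le_log (by positivity) (hpack δ h2.1 h2.2)
    rw [Real.log_mul hK.ne' (Real.rpow_pos_of_pos h2.1 _).ne', Real.log_rpow h2.1] at h3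
    linarith

end SeparatedIFS

end Multifractal
namespace Multifractal

section Packing

variable {d : ℕ} {μ : ProbabilityMeasure (Euc d)} {α r δ : ℝ}

lemma le_packCount {x : Euc d} {R : ℝ} (hsupp : suppSet μ ⊆ closedBall x R) (hδ : 0 < δ) {n : ℕ}
    (cf : Fin n → Euc d) (h1 : ∀ j, cf j ∈ suppSet μ)
    (h2 : ∀ j k, j ≠ k → Disjoint (closedBall (cf j) δ) (closedBall (cf k) δ))
    (h3 : ∀ j, α - r ≤ localDimAt μ (cf j) δ ∧ localDimAt μ (cf j) δ ≤ α + r) :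
    n ≤ packCount μ α r δ := by
  obtain ⟨M, hM⟩ := exists_packing_bound d one_pos (R / δ)
  refine le_csSup ⟨M, ?_⟩ ⟨cf, h1, h2, h3⟩
  rintro m ⟨cg, hg1, hg2, -⟩
  have := hM Finset.univ cg x δ hδ (fun i _ => ?_) fun i _ j _ hij => ?_
  · simpa using this
  · rw [div_mul_cancel₀ _ hδ.ne']
    exact hsupp (hg1 i)
  · by_contra! hlt
    refine Set.disjoint_left.1 (hg2 i j hij) (mem_closedBall_self hδ.le) ?_
    rw [mem_closedBall]
    linarith

lemma exists_cover_card_le_packCount {x : Euc d} {R : ℝ} (hsupp : suppSet μ ⊆ closedBall x R)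
    (hδ : 0 < δ) {A : Set (Euc d)} (hA : A ⊆ suppSet μ)
    (hdim : ∀ y ∈ A, α - r ≤ localDimAt μ y δ ∧ localDimAt μ y δ ≤ α + r) :
    ∃ n ≤ packCount μ α r δ, ∃ cf : Fin n → Euc d, A ⊆ ⋃ j, closedBall (cf j) (2 * δ) := by
  by_contra! hcon
  have key : ∀ n, ∃ cf : Fin n → Euc d, (∀ j, cf j ∈ A) ∧
      ∀ j k, j ≠ k → Disjoint (closedBall (cf j) δ) (closedBall (cf k) δ) := by
    intro n
    induction n with
    | zero => exact ⟨Fin.elim0, fun j => j.elim0, fun j => j.elim0⟩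
    | succ n ih =>
      obtain ⟨cf, h1, h2⟩ := ih
      have hn := le_packCount hsupp hδ cf (fun j => hA (h1 j)) h2 fun j => hdim _ (h1 j)
      obtain ⟨y, hyA, hy⟩ := Set.not_subset.1 (hcon n hn cf)
      simp only [Set.mem_iUnion, mem_closedBall, not_exists, not_le] at hy
      have hy' : ∀ j, Disjoint (closedBall y δ) (closedBall (cf j) δ) := fun j =>
        closedBall_disjoint_closedBall (by linarith [hy j])
      refine ⟨Fin.cons y cf, fun j => ?_, fun j k => ?_⟩
      · refine Fin.cases ?_ (fun j => ?_) j
        · exact hyA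
        · exact h1 j
      · refine Fin.cases ?_ (fun j => ?_) j <;> refine Fin.cases ?_ (fun k => ?_) k
        · exact fun h => absurd rfl h
        · exact fun _ => hy' k
        · exact fun _ => (hy' j).symm
        · exact fun h => h2 j k fun hjk => h (by rw [hjk])
  obtain ⟨cf, h1, h2⟩ := key (packCount μ α r δ + 1)
  have := le_packCount hsupp hδ cf (fun j => hA (h1 j)) h2 fun j => hdim _ (h1 j)
  omega

lemma natCast_le_rpow_of_ratioE_lt {m : ℕ} {s : ℝ} (hδ : 0 < δ) (hδ1 : δ < 1)
    (h : ratioE m δ < s) : (m : ℝ) ≤ δ ^ (-s) := by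
  have hlog := Real.log_neg hδ hδ1
  rw [ratioE] at h
  split_ifs at h with h0
  · rw [h0, Nat.cast_zero]
    positivity
  · have hm : (0 : ℝ) < m := by exact_mod_cast Nat.pos_of_ne_zero h0
    rw [EReal.coe_lt_coe_iff, div_lt_iff₀ (by linarith)] at h
    rw [← Real.log_le_log_iff hm (by positivity), Real.log_rpow hδ]
    linarith

lemma hausdorffMeasure_eq_zero_of_packCount_le {x : Euc d} {R : ℝ}
    (hsupp : suppSet μ ⊆ closedBall x R) {A : Set (Euc d)} (hA : A ⊆ suppSet μ)
    (hdim : ∀ᶠ δ in 𝓝[>] (0 : ℝ), ∀ y ∈ A, α - r ≤ localDimAt μ y δ ∧ localDimAt μ y δ ≤ α + r)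
    {s s' : ℝ} (hs' : 0 ≤ s') (hss : s < s')
    (hpack : ∃ᶠ δ in 𝓝[>] (0 : ℝ), (packCount μ α r δ : ℝ) ≤ δ ^ (-s)) :
    MeasureTheory.Measure.hausdorffMeasure s' A = 0 := by
  have hev : ∀ᶠ δ in 𝓝[>] (0 : ℝ), 0 < δ := self_mem_nhdsWithin
  obtain ⟨δ, hlim, hδ⟩ := exists_seq_forall_of_frequently (hpack.and_eventually (hdim.and hev))
  choose n hn cf hcf using fun k =>
    exists_cover_card_le_packCount hsupp (hδ k).2.2 hA (hδ k).2.1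
  have hlim0 : Tendsto δ atTop (𝓝 0) := hlim.mono_right nhdsWithin_le_nhds
  have hdiam : ∀ k j, ediam (closedBall (cf k j) (2 * δ k)) ≤ ENNReal.ofReal (4 * δ k) := by
    intro k j
    refine ediam_le_of_forall_dist_le fun y hy z hz => ?_
    rw [mem_closedBall] at hy hz
    linarith [dist_triangle_right y z (cf k j)]
  have h1 := MeasureTheory.Measure.hausdorffMeasure_le_liminf_sum s' A (l := atTop)
    (fun k => ENNReal.ofReal (4 * δ k)) (by
      have := ENNReal.tendsto_ofReal (hlim0.const_mul 4)
      simpa using this) (fun k j => closedBall (cf k j) (2 * δ k))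
    (Eventually.of_forall hdiam) (Eventually.of_forall hcf)
  refine le_antisymm (h1.trans ?_) zero_le
  have h2 : ∀ k, ∑ j, ediam (closedBall (cf k j) (2 * δ k)) ^ s' ≤
      ENNReal.ofReal (4 ^ s' * δ k ^ (s' - s)) := by
    intro k
    have hδk := (hδ k).2.2
    calc _ ≤ ∑ _j : Fin (n k), ENNReal.ofReal ((4 * δ k) ^ s') := by
          refine Finset.sum_le_sum fun j _ => ?_
          rw [← ENNReal.ofReal_rpow_of_pos (by positivity)]
          exact ENNReal.rpow_le_rpow (hdiam k j) hs'
      _ = ENNReal.ofReal (n k * (4 * δ k) ^ s') := by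
          rw [Finset.sum_const, Finset.card_univ, Fintype.card_fin, nsmul_eq_mul,
            ENNReal.ofReal_mul (by positivity), ENNReal.ofReal_natCast]
      _ ≤ _ := by
          refine ENNReal.ofReal_le_ofReal ?_
          have h3 : (n k : ℝ) ≤ δ k ^ (-s) := (Nat.cast_le.2 (hn k)).trans (hδ k).1
          calc (n k : ℝ) * (4 * δ k) ^ s' ≤ δ k ^ (-s) * (4 * δ k) ^ s' := by gcongr
            _ = _ := by
              rw [Real.mul_rpow (by norm_num) hδk.le, show s' - s = -s + s' by ring,
                Real.rpow_add hδk]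
              ring
  have h3 : Tendsto (fun k => ENNReal.ofReal (4 ^ s' * δ k ^ (s' - s))) atTop (𝓝 0) := by
    have h4 := (hlim0.rpow_const (p := s' - s) (Or.inr (sub_pos.2 hss).le)).const_mul (4 ^ s')
    rw [Real.zero_rpow (sub_pos.2 hss).ne', mul_zero] at h4
    simpa using ENNReal.tendsto_ofReal h4
  rw [← h3.liminf_eq]
  exact liminf_le_liminf (Eventually.of_forall h2)

lemma fHaus_le_fCoarse_of_subset {x : Euc d} {R : ℝ} (hsupp : suppSet μ ⊆ closedBall x R) (α : ℝ) :
    fHaus μ α ≤ fCoarse μ α := by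
  rw [fHaus]
  set X := {x | x ∈ suppSet μ ∧ Tendsto (localDimAt μ x) (𝓝[>] 0) (𝓝 α)} with hX
  rw [dimHE]
  split_ifs with hne
  · exact bot_le
  obtain ⟨x0, hx0, hlim0⟩ := nonempty_iff_ne_empty.2 hne
  have hnear : ∀ r : ℝ, 0 < r → ∀ y ∈ X,
      ∀ᶠ δ in 𝓝[>] (0 : ℝ), α - r ≤ localDimAt μ y δ ∧ localDimAt μ y δ ≤ α + r := by
    intro r hr y hy
    have h1 := hy.2.eventually (Icc_mem_nhds (show α - r < α by linarith)
      (show α < α + r by linarith))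
    exact h1
  refine le_iInf₂ fun r hr => EReal.le_of_forall_lt_iff_le.1 fun z hz => ?_
  obtain ⟨s, hs, hsz⟩ := EReal.lt_iff_exists_real_btwn.1 hz
  have hsz' : s < z := by exact_mod_cast hsz
  have hfreq := frequently_lt_of_liminf_lt (by isBoundedDefault) hs
  have hev : ∀ᶠ δ in 𝓝[>] (0 : ℝ), δ ∈ Set.Ioo (0 : ℝ) 1 := Ioo_mem_nhdsGT one_pos
  have hs0 : 0 < s := by
    obtain ⟨δ, h1, h2, h3⟩ := (hfreq.and_eventually ((hnear r hr x0 ⟨hx0, hlim0⟩).and hev)).exists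
    have h4 : 1 ≤ packCount μ α r δ := le_packCount hsupp h3.1 (fun _ => x0) (fun _ => hx0)
      (fun j k hjk => absurd (Subsingleton.elim j k) hjk) fun _ => h2
    rw [ratioE, if_neg (by omega), EReal.coe_lt_coe_iff] at h1
    refine lt_of_le_of_lt (div_nonneg (Real.log_nonneg (by exact_mod_cast h4)) ?_) h1
    linarith [Real.log_neg h3.1 h3.2]
  have hpack : ∃ᶠ δ in 𝓝[>] (0 : ℝ), (packCount μ α r δ : ℝ) ≤ δ ^ (-s) :=
    (hfreq.and_eventually hev).mono fun δ hδ =>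
      natCast_le_rpow_of_ratioE_lt hδ.2.1 hδ.2.2 hδ.1
  have hcover : X ⊆ ⋃ m : ℕ, {y | y ∈ X ∧ ∀ δ ∈ Set.Ioo (0 : ℝ) (1 / (m + 1)),
      α - r ≤ localDimAt μ y δ ∧ localDimAt μ y δ ≤ α + r} := by
    intro y hy
    obtain ⟨ε, hε, hsub⟩ := mem_nhdsGT_iff_exists_Ioo_subset.1 (hnear r hr y hy)
    obtain ⟨m, hm⟩ := exists_nat_one_div_lt (Set.mem_Ioi.1 hε)
    exact Set.mem_iUnion.2 ⟨m, hy, fun δ hδ => hsub ⟨hδ.1, hδ.2.trans hm⟩⟩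
  lift z to ℝ≥0 using (hs0.trans hsz').le
  have hdim : dimH X ≤ z := by
    refine (dimH_mono hcover).trans ?_
    rw [dimH_iUnion]
    refine iSup_le fun m => dimH_le_of_hausdorffMeasure_ne_top ?_
    have h0 := hausdorffMeasure_eq_zero_of_packCount_le (α := α) (r := r) hsupp
      (A := {y | y ∈ X ∧ ∀ δ ∈ Set.Ioo (0 : ℝ) (1 / (m + 1)),
        α - r ≤ localDimAt μ y δ ∧ localDimAt μ y δ ≤ α + r}) (fun y hy => hy.1.1) (by
        filter_upwards [Ioo_mem_nhdsGT (show (0 : ℝ) < 1 / (m + 1) by positivity)] with δ hδ y hy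
        exact hy.2 δ hδ) z.2 hsz' hpack
    exact ne_of_eq_of_ne h0 ENNReal.zero_ne_top
  rw [← EReal.coe_nnreal_eq_coe_real]
  exact EReal.coe_ennreal_le_coe_ennreal_iff.2 hdim

end Packing

namespace SeparatedIFS

variable {N d : ℕ} {S : Fin N → Euc d → Euc d} {rr p : Fin N → ℝ} {a : Euc d} {R c lo hi : ℝ}
  {μ : ProbabilityMeasure (Euc d)}

lemma suppSet_subset (h : SeparatedIFS S rr a R c lo hi)
    (hμ : μ.toMeasure = ∑ i, ENNReal.ofReal (p i) • μ.toMeasure.map (S i))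
    (hp : ∀ i, 0 < p i) (hp1 : ∑ i, p i = 1) : suppSet μ ⊆ closedBall a R := by
  intro x hx
  rw [mem_closedBall]
  by_contra! hR
  refine (hx (dist x a - R) (sub_pos.2 hR)).ne' ?_
  have h1 : μ.toMeasure (ball x (dist x a - R)) = 0 := by
    refine measure_mono_null (fun y hy => ?_) (h.measure_tail hμ hp hp1)
    rw [mem_ball] at hy
    rw [Set.mem_ofPred_eq]
    linarith [dist_triangle_left x a y]
  rw [← ProbabilityMeasure.ennreal_coeFn_eq_coeFn_toMeasure] at h1
  exact_mod_cast h1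

end SeparatedIFS

end Multifractal
namespace Multifractal

section Lower

variable {N : ℕ}

lemma ae_tendsto_log_wordProd {q b : Fin N → ℝ} [IsProbabilityMeasure (letterMeasure q)]
    (hq : ∀ i, 0 ≤ q i) (hb : ∀ i, 0 < q i → 0 < b i) :
    ∀ᵐ j ∂bernoulliMeasure q, (∀ n, 0 < wordProd b (prefixWord j n)) ∧
      Tendsto (fun n : ℕ => Real.log (wordProd b (prefixWord j n)) / n) atTop
        (𝓝 (∑ i, q i * Real.log (b i))) := by
  filter_upwards [ae_pos q, ae_tendsto_average q hq fun i => Real.log (b i)] with j h1 h2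
  have h3 := fun n => log_wordProd_prefixWord j n fun k => hb _ (h1 k)
  exact ⟨fun n => (h3 n).2, h2.congr fun n => by rw [(h3 n).1]⟩

namespace SeparatedIFS

variable {d : ℕ} {S : Fin N → Euc d → Euc d} {rr p q : Fin N → ℝ} {a : Euc d} {R c lo hi : ℝ}
  {α t : ℝ}

lemma lyapunov_pos (h : SeparatedIFS S rr a R c lo hi) (hq : ∀ i, 0 ≤ q i) (hq1 : ∑ i, q i = 1) :
    0 < ∑ i, q i * -Real.log (rr i) := by
  have h0 : ∀ i, 0 ≤ q i * -Real.log (rr i) := fun i =>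
    mul_nonneg (hq i) (by linarith [Real.log_neg (h.pos i) (h.lt_one i)])
  refine lt_of_le_of_ne (Finset.sum_nonneg fun i _ => h0 i) fun heq => ?_
  have h1 := (Finset.sum_eq_zero_iff_of_nonneg fun i _ => h0 i).1 heq.symm
  have h2 : ∑ i, q i = 0 := Finset.sum_eq_zero fun i hi =>
    (mul_eq_zero.1 (h1 i hi)).resolve_right (by linarith [Real.log_neg (h.pos i) (h.lt_one i)])
  linarith

lemma le_sigmaAbs (h : SeparatedIFS S rr a R c lo hi) (hp : ∀ i, 0 < p i) (hq : ∀ i, 0 ≤ q i)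
    (hq1 : ∑ i, q i = 1) (hq0 : ∑ i, q i * (-Real.log (p i) - α * -Real.log (rr i)) = 0)
    (hqt : t * ∑ i, q i * -Real.log (rr i) ≤ ∑ i, q i * -Real.log (q i)) {r : ℝ} (hr : 0 < r) :
    (t : EReal) ≤ sigmaAbs (wordProd rr)
      (fun w => |Real.log (wordProd p w) / Real.log (wordProd rr w) - α| ≤ r) := by
  have := isProbabilityMeasure_letterMeasure hq hq1
  have hlam := h.lyapunov_pos hq hq1
  refine le_sInf ?_
  rintro _ ⟨s, hs, rfl⟩
  rw [EReal.coe_le_coe_iff]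
  by_contra! hst
  set P : Word N → Prop :=
    fun w => |Real.log (wordProd p w) / Real.log (wordProd rr w) - α| ≤ r with hP
  let E : {w : Word N // w ≠ [] ∧ P w} → Set (Seq N) := fun w =>
    {i | prefixWord i w.1.length = w.1 ∧ wordProd q w.1 ≤ wordProd rr w.1 ^ s}
  have hE : ∑' w, bernoulliMeasure q (E w) ≠ ∞ := by
    refine ne_top_of_le_ne_top hs.tsum_ofReal_ne_top (ENNReal.tsum_le_tsum fun w => ?_)
    by_cases hw : wordProd q w.1 ≤ wordProd rr w.1 ^ s
    · refine le_trans (measure_mono (t := {i | prefixWord i w.1.length = w.1}) fun i hi => hi.1) ?_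
      rw [bernoulliMeasure_word q hq]
      exact ENNReal.ofReal_le_ofReal hw
    · have : E w = ∅ := Set.eq_empty_of_forall_notMem fun i hi => hw hi.2
      simp [this]
  have hfin := ae_finite_setOfPred_mem hE
  obtain ⟨j, h1, ⟨hp1, hp2⟩, ⟨hr1, hr2⟩, hq1, hq2⟩ := (hfin.and
    ((ae_tendsto_log_wordProd hq fun i _ => hp i).and
    ((ae_tendsto_log_wordProd hq fun i _ => h.pos i).and
    (ae_tendsto_log_wordProd hq fun i hi => hi)))).exists
  simp only [mul_neg, Finset.sum_neg_distrib, mul_sub, Finset.sum_sub_distrib] at hlam hq0 hqt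
  have hmul : ∑ i, q i * (α * Real.log (rr i)) = α * ∑ i, q i * Real.log (rr i) := by
    rw [Finset.mul_sum]
    exact Finset.sum_congr rfl fun i _ => by ring
  rw [hmul] at hq0
  have hratio : ∀ᶠ n : ℕ in atTop, P (prefixWord j n) := by
    have h3 := hp2.div hr2 (by linarith)
    have h4 : (∑ i, q i * Real.log (p i)) / ∑ i, q i * Real.log (rr i) = α := by
      rw [div_eq_iff (by linarith)]
      linarith
    rw [h4] at h3
    filter_upwards [h3.eventually (Metric.closedBall_mem_nhds α hr), eventually_gt_atTop 0]
      with n hn hn0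
    have hn0' : (n : ℝ) ≠ 0 := by exact_mod_cast hn0.ne'
    simp only [Pi.div_apply, div_div_div_cancel_right₀ hn0', Real.dist_eq] at hn
    exact hn
  have hpow : ∀ᶠ n : ℕ in atTop,
      wordProd q (prefixWord j n) ≤ wordProd rr (prefixWord j n) ^ s := by
    have h3 := hq2.sub (hr2.const_mul s)
    filter_upwards [h3.eventually (gt_mem_nhds (show _ < (0 : ℝ) by nlinarith)),
      eventually_gt_atTop 0] with n hn hn0
    have hn0' : (0 : ℝ) < n := by exact_mod_cast hn0
    rw [← Real.log_le_log_iff (hq1 n) (Real.rpow_pos_of_pos (hr1 n) _), Real.log_rpow (hr1 n)]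
    rw [← mul_div_assoc, ← sub_div, div_lt_iff₀ hn0', zero_mul] at hn
    linarith
  obtain ⟨n0, hn0⟩ := eventually_atTop.1 (hratio.and hpow)
  have hmem : ∀ n, n0 + 1 ≤ n → prefixWord j n ≠ [] ∧ P (prefixWord j n) := fun n hn =>
    ⟨fun h0 => by
      have := length_prefixWord j n
      rw [h0, List.length_nil] at this
      omega, (hn0 n (by omega)).1⟩
  refine Set.infinite_of_injective_forall_mem
    (f := fun n : ℕ => (⟨prefixWord j (n0 + 1 + n), hmem _ (by omega)⟩ :
      {w : Word N // w ≠ [] ∧ P w})) (fun m n hmn => ?_) (fun n => ?_) h1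
  · have := congrArg (fun w => w.1.length) hmn
    simp only [length_prefixWord] at this
    omega
  · refine ⟨?_, (hn0 _ (by omega)).2⟩
    rw [length_prefixWord]

end SeparatedIFS

end Lower

end Multifractal
namespace Multifractal

section MassDistribution

variable {d : ℕ} {Ω : Type*} [MeasurableSpace Ω] {ν : Measure Ω} {g : Ω → Euc d} {X : Set (Euc d)}

/-- Mass distribution principle for an image measure. -/
lemma hausdorffMeasure_ne_zero_of_measure_le {G : Set Ω} (hG : ν G ≠ 0) (hGX : ∀ ω ∈ G, g ω ∈ X)
    {s ε : ℝ} (hs : 0 < s) (hε : 0 < ε) (hb : ∀ ω ∈ G, ∀ ρ ∈ Set.Ioo 0 ε,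
      ν {ω' | dist (g ω') (g ω) ≤ ρ} ≤ ENNReal.ofReal (ρ ^ s)) :
    MeasureTheory.Measure.hausdorffMeasure s X ≠ 0 := by
  set m : OuterMeasure (Euc d) := OuterMeasure.map g (OuterMeasure.restrict G ν.toOuterMeasure)
    with hm
  have hmapply : ∀ A, m A = ν (g ⁻¹' A ∩ G) := fun A => by
    rw [hm, OuterMeasure.map_apply, OuterMeasure.restrict_apply]
    rfl
  have hle : m ≤ OuterMeasure.mkMetric fun r => r ^ s := by
    refine OuterMeasure.le_mkMetric _ _ (ENNReal.ofReal (ε / 2)) (by simpa using hε) fun A hA => ?_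
    rw [hmapply]
    rcases Set.eq_empty_or_nonempty (g ⁻¹' A ∩ G) with he | ⟨ω, hωA, hωG⟩
    · simp [he]
    have hfin : ediam A ≠ ∞ := ne_top_of_le_ne_top ENNReal.ofReal_ne_top hA
    have hdiam : ediam A = ENNReal.ofReal (Metric.diam A) := by
      rw [Metric.diam, ENNReal.ofReal_toReal hfin]
    have hA' : Metric.diam A < ε := by
      rw [hdiam, ENNReal.ofReal_le_ofReal_iff (by positivity)] at hA
      linarith
    have hlim : Tendsto (fun ρ : ℝ => ENNReal.ofReal (ρ ^ s)) (𝓝[>] Metric.diam A)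
        (𝓝 (ediam A ^ s)) := by
      rw [hdiam, ENNReal.ofReal_rpow_of_nonneg Metric.diam_nonneg hs.le]
      exact (ENNReal.continuous_ofReal.comp
        (Real.continuous_rpow_const hs.le)).continuousWithinAt
    refine ge_of_tendsto hlim ?_
    filter_upwards [Ioo_mem_nhdsGT hA'] with ρ hρ
    refine (measure_mono fun ω' hω' => ?_).trans
      (hb ω hωG ρ ⟨Metric.diam_nonneg.trans_lt hρ.1, hρ.2⟩)
    exact (Metric.dist_le_diam_of_mem (Metric.isBounded_iff_ediam_ne_top.2 hfin) hω'.1 hωA).trans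
      hρ.1.le
  have h1 : ν G ≤ m X := by
    rw [hmapply]
    exact measure_mono fun ω hω => ⟨hGX ω hω, hω⟩
  have h2 : m X ≤ MeasureTheory.Measure.hausdorffMeasure s X := by
    rw [Measure.hausdorffMeasure, ← OuterMeasure.coe_mkMetric]
    exact hle X
  exact ((pos_iff_ne_zero.2 hG).trans_le (h1.trans h2)).ne'

lemma le_dimH_of_ae_measure_le [NeZero ν] {s : ℝ≥0} (hs : 0 < s)
    (hb : ∀ᵐ ω ∂ν, g ω ∈ X ∧ ∀ᶠ ρ in 𝓝[>] (0 : ℝ),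
      ν {ω' | dist (g ω') (g ω) ≤ ρ} ≤ ENNReal.ofReal (ρ ^ (s : ℝ))) : s ≤ dimH X := by
  set G : ℕ → Set Ω := fun m => {ω | g ω ∈ X ∧ ∀ ρ ∈ Set.Ioo (0 : ℝ) (1 / (m + 1)),
    ν {ω' | dist (g ω') (g ω) ≤ ρ} ≤ ENNReal.ofReal (ρ ^ (s : ℝ))} with hGdef
  obtain ⟨m, hm⟩ : ∃ m, ν (G m) ≠ 0 := by
    by_contra! hcon
    have h0 := measure_iUnion_null hcon
    have h1 : ∀ᵐ ω ∂ν, ω ∉ ⋃ m, G m := measure_eq_zero_iff_ae_notMem.1 h0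
    obtain ⟨ω, h2, h3, h4⟩ := (h1.and hb).exists
    obtain ⟨ε, hε, hsub⟩ := mem_nhdsGT_iff_exists_Ioo_subset.1 h4
    obtain ⟨m, hm⟩ := exists_nat_one_div_lt (Set.mem_Ioi.1 hε)
    exact h2 (Set.mem_iUnion.2 ⟨m, h3, fun ρ hρ => hsub ⟨hρ.1, hρ.2.trans hm⟩⟩)
  refine le_dimH_of_hausdorffMeasure_ne_zero ?_
  exact hausdorffMeasure_ne_zero_of_measure_le hm (fun ω hω => hω.1) (NNReal.coe_pos.2 hs)
    (ε := 1 / (m + 1)) (by positivity) fun ω hω => hω.2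

end MassDistribution

section Scales

variable {E A : ℕ → ℝ} {F : ℝ → ℝ} {lam l c : ℝ}

lemma tendsto_sub_div_sq  (hE : Tendsto (fun k : ℕ => E k / (k : ℝ) ^ 2) atTop (𝓝 l)) (b : ℝ) :
    Tendsto (fun k : ℕ => (E k - b) / (k : ℝ) ^ 2) atTop (𝓝 l) := by
  have h1 : Tendsto (fun k : ℕ => b / (k : ℝ) ^ 2) atTop (𝓝 0) :=
    tendsto_const_nhds.div_atTop
      ((tendsto_pow_atTop two_ne_zero).comp tendsto_natCast_atTop_atTop)
  simpa [sub_div] using hE.sub h1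

lemma tendsto_succ_div_sq (hE : Tendsto (fun k : ℕ => E k / (k : ℝ) ^ 2) atTop (𝓝 l)) :
    Tendsto (fun k : ℕ => E (k + 1) / (k : ℝ) ^ 2) atTop (𝓝 l) := by
  have h1 : Tendsto (fun k : ℕ => (1 + 1 / (k : ℝ)) ^ 2) atTop (𝓝 1) := by
    simpa using ((tendsto_one_div_atTop_nhds_zero_nat (𝕜 := ℝ)).const_add 1).pow 2
  have h2 := (hE.comp (tendsto_add_atTop_nat 1)).mul h1
  rw [mul_one] at h2
  refine h2.congr' ?_
  filter_upwards [eventually_gt_atTop 0] with k hk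
  have hk' : (k : ℝ) ≠ 0 := by exact_mod_cast hk.ne'
  simp only [Function.comp_apply, Nat.cast_add, Nat.cast_one]
  field_simp

/-- Every small scale lies between two consecutive members of a sequence of scales. -/
lemma eventually_exists_scale (hE : Tendsto E atTop atTop) {Q : ℕ → Prop}
    (hQ : ∀ᶠ k in atTop, Q k) :
    ∀ᶠ ρ : ℝ in 𝓝[>] 0, ∃ k, Q k ∧ E k ≤ -Real.log ρ ∧ -Real.log ρ < E (k + 1) := by
  obtain ⟨K, hK⟩ := eventually_atTop.1 hQ
  have hlim : Tendsto (fun ρ : ℝ => -Real.log ρ) (𝓝[>] 0) atTop :=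
    tendsto_neg_atBot_atTop.comp Real.tendsto_log_nhdsGT_zero
  filter_upwards [hlim.eventually (eventually_ge_atTop (E K))] with ρ hρ
  have hex : ∃ n, -Real.log ρ < E (K + n) := by
    obtain ⟨n, hn, hn'⟩ := ((hE.eventually (eventually_gt_atTop (-Real.log ρ))).and
      (eventually_ge_atTop K)).exists
    exact ⟨n - K, by rwa [Nat.add_sub_cancel' hn']⟩
  have hn := Nat.find_spec hex
  obtain ⟨n, hn0⟩ : ∃ n, Nat.find hex = n + 1 := by
    refine Nat.exists_eq_succ_of_ne_zero fun h0 => ?_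
    rw [h0, add_zero] at hn
    linarith
  have hmin := Nat.find_min hex (m := n) (by omega)
  rw [hn0] at hn
  exact ⟨K + n, hK _ (by omega), not_lt.1 hmin, hn⟩

lemma tendsto_atTop_of_div_sq (hl : 0 < l)
    (hE : Tendsto (fun k : ℕ => E k / (k : ℝ) ^ 2) atTop (𝓝 l)) : Tendsto E atTop atTop := by
  have h1 : Tendsto (fun k : ℕ => (k : ℝ) ^ 2) atTop atTop :=
    (tendsto_pow_atTop two_ne_zero).comp tendsto_natCast_atTop_atTop
  refine (hE.pos_mul_atTop hl h1).congr' ?_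
  filter_upwards [eventually_gt_atTop 0] with k hk
  have hk' : (k : ℝ) ≠ 0 := by exact_mod_cast hk.ne'
  field_simp

lemma eventually_lt_of_div_sq {B : ℕ → ℝ} {x y : ℝ}
    (hA : Tendsto (fun k : ℕ => A k / (k : ℝ) ^ 2) atTop (𝓝 x))
    (hB : Tendsto (fun k : ℕ => B k / (k : ℝ) ^ 2) atTop (𝓝 y)) (hxy : x < y) :
    ∀ᶠ k in atTop, A k < B k := by
  filter_upwards [hA.eventually_lt hB hxy, eventually_gt_atTop 0] with k h hk
  have hk' : (0 : ℝ) < (k : ℝ) ^ 2 := by positivity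
  exact (div_lt_div_iff_of_pos_right hk').1 h

lemma eventually_le_rpow (hF : ∀ x y, 0 < x → x ≤ y → F x ≤ F y) (hl : 0 < l)
    (hA : Tendsto (fun k : ℕ => A k / (k : ℝ) ^ 2) atTop (𝓝 lam))
    (hE : Tendsto (fun k : ℕ => E k / (k : ℝ) ^ 2) atTop (𝓝 l))
    (hFA : ∀ᶠ k in atTop, F (Real.exp (-E k)) ≤ Real.exp (-A k)) (hc : c * l < lam) :
    ∀ᶠ ρ : ℝ in 𝓝[>] 0, F ρ ≤ ρ ^ c := by
  have h1 := eventually_lt_of_div_sq (A := fun k => c * E k) (by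
    simpa only [mul_div_assoc] using hE.const_mul c) hA hc
  have h2 := eventually_lt_of_div_sq (A := fun k => c * E (k + 1)) (by
    simpa only [mul_div_assoc] using (tendsto_succ_div_sq hE).const_mul c) hA hc
  filter_upwards [eventually_exists_scale (tendsto_atTop_of_div_sq hl hE) (hFA.and (h1.and h2)),
    self_mem_nhdsWithin] with ρ ⟨k, ⟨h3, h4, h5⟩, h6, h7⟩ hρ
  have hρ' : 0 < ρ := hρ
  have h8 : ρ ≤ Real.exp (-E k) := by
    rw [← Real.log_le_iff_le_exp hρ']
    linarith
  refine (hF _ _ hρ' h8).trans (h3.trans ?_)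
  rw [Real.rpow_def_of_pos hρ', Real.exp_le_exp]
  rcases le_total 0 c with h0 | h0 <;> nlinarith

lemma eventually_rpow_le (hF : ∀ x y, 0 < x → x ≤ y → F x ≤ F y) (hl : 0 < l)
    (hA : Tendsto (fun k : ℕ => A k / (k : ℝ) ^ 2) atTop (𝓝 lam))
    (hE : Tendsto (fun k : ℕ => E k / (k : ℝ) ^ 2) atTop (𝓝 l))
    (hFA : ∀ k, Real.exp (-A k) ≤ F (Real.exp (-E k))) (hc : lam < c * l) :
    ∀ᶠ ρ : ℝ in 𝓝[>] 0, ρ ^ c ≤ F ρ := by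
  have h1 := eventually_lt_of_div_sq (B := fun k => c * E k) (tendsto_succ_div_sq hA) (by
    simpa only [mul_div_assoc] using hE.const_mul c) hc
  have h2 := eventually_lt_of_div_sq (B := fun k => c * E (k + 1)) (tendsto_succ_div_sq hA) (by
    simpa only [mul_div_assoc] using (tendsto_succ_div_sq hE).const_mul c) hc
  filter_upwards [eventually_exists_scale (tendsto_atTop_of_div_sq hl hE) (h1.and h2),
    self_mem_nhdsWithin] with ρ ⟨k, ⟨h4, h5⟩, h6, h7⟩ hρ
  have hρ' : 0 < ρ := hρ
  have h8 : Real.exp (-E (k + 1)) ≤ ρ := by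
    rw [← Real.le_log_iff_exp_le hρ']
    linarith
  refine le_trans ?_ ((hFA (k + 1)).trans (hF _ _ (Real.exp_pos _) h8))
  rw [Real.rpow_def_of_pos hρ', Real.exp_le_exp]
  rcases le_total 0 c with h0 | h0 <;> nlinarith

end Scales

end Multifractal
namespace Multifractal

section Marker

variable {N : ℕ}

/-- The sequence obtained from `j` by writing the word `u` at every large square position. -/
def insertMarker (u : Word N) (j : Seq N) : Seq N := fun n =>
  if u.length ≤ n.sqrt then u.getD (n - n.sqrt ^ 2) (j n) else j n

lemma insertMarker_of_le {u : Word N} {j : Seq N} {n : ℕ} (hn : u.length ≤ n - n.sqrt ^ 2) :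
    insertMarker u j n = j n := by
  rw [insertMarker, List.getD_eq_default _ _ hn, ite_self]

lemma prefixWord_insertMarker {u : Word N} (j : Seq N) {k : ℕ} (hk : u.length ≤ k) :
    prefixWord (insertMarker u j) (k ^ 2 + u.length) =
      prefixWord (insertMarker u j) (k ^ 2) ++ u := by
  rw [prefixWord_add]
  congr 1
  conv_rhs => rw [← List.ofFn_get u]
  congr 1
  funext m
  have hm := m.2
  have hs : (k ^ 2 + m).sqrt = k := by
    rw [sq]
    exact Nat.sqrt_add_eq k (by omega)
  simp [insertMarker, hs, hk]

lemma card_near_squares_le (L k : ℕ) :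
    ((Finset.range (k ^ 2)).filter fun n => n - n.sqrt ^ 2 < L).card ≤ k * L := by
  have h1 := Finset.card_le_card_of_injOn (t := Finset.range k ×ˢ Finset.range L)
    (fun n : ℕ => (n.sqrt, n - n.sqrt ^ 2))
    (s := (Finset.range (k ^ 2)).filter fun n => n - n.sqrt ^ 2 < L) (fun n hn => ?_)
    (fun n _ m _ hnm => ?_)
  · simpa using h1
  · simp only [Finset.coe_filter, Finset.mem_range, Set.mem_ofPred_eq] at hn
    simp only [Finset.coe_product, Finset.coe_range, Set.mem_prod, Set.mem_Iio]
    exact ⟨Nat.sqrt_lt'.2 hn.1, hn.2⟩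
  · simp only [Prod.mk.injEq] at hnm
    have h2 := Nat.sqrt_le' n
    have h3 := Nat.sqrt_le' m
    rw [hnm.1] at h2 hnm
    omega

lemma tendsto_sum_near_squares {L : ℕ} {C : ℝ} {g : ℕ → ℝ} (hg : ∀ n, |g n| ≤ C)
    (hg0 : ∀ n, L ≤ n - n.sqrt ^ 2 → g n = 0) :
    Tendsto (fun k : ℕ => (∑ n ∈ Finset.range (k ^ 2), g n) / (k : ℝ) ^ 2) atTop (𝓝 0) := by
  have hC : 0 ≤ C := (abs_nonneg _).trans (hg 0)
  have hlim : Tendsto (fun k : ℕ => L * C / (k : ℝ)) atTop (𝓝 0) :=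
    tendsto_const_div_atTop_nhds_zero_nat _
  refine squeeze_zero_norm' ?_ hlim
  filter_upwards [eventually_gt_atTop 0] with k hk
  have hk' : (0 : ℝ) < k := by exact_mod_cast hk
  have h1 : |∑ n ∈ Finset.range (k ^ 2), g n| ≤ k * L * C := by
    rw [← Finset.sum_filter_of_ne (p := fun n => n - n.sqrt ^ 2 < L) fun n _ hn => by
      by_contra! hcon
      exact hn (hg0 n hcon)]
    refine (Finset.abs_sum_le_sum_abs _ _).trans ((Finset.sum_le_card_nsmul _ _ C
      fun n _ => hg n).trans ?_)
    rw [nsmul_eq_mul]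
    refine mul_le_mul_of_nonneg_right ?_ hC
    exact_mod_cast card_near_squares_le L k
  rw [Real.norm_eq_abs, abs_div, abs_of_pos (by positivity : (0 : ℝ) < (k : ℝ) ^ 2),
    div_le_div_iff₀ (by positivity) hk']
  nlinarith

variable {q : Fin N → ℝ} [IsProbabilityMeasure (letterMeasure q)]

lemma ae_tendsto_average_sq (hq : ∀ i, 0 ≤ q i) (f : Fin N → ℝ) :
    ∀ᵐ j ∂bernoulliMeasure q, Tendsto (fun k : ℕ =>
      (∑ n ∈ Finset.range (k ^ 2), f (j n)) / (k : ℝ) ^ 2) atTop (𝓝 (∑ i, q i * f i)) := by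
  filter_upwards [ae_tendsto_average q hq f] with j hj
  have := hj.comp (tendsto_pow_atTop (α := ℕ) two_ne_zero)
  simpa [Function.comp_def] using this

lemma abs_le_sum_abs (f : Fin N → ℝ) (i : Fin N) : |f i| ≤ ∑ i, |f i| :=
  Finset.single_le_sum (f := fun i => |f i|) (fun _ _ => abs_nonneg _) (Finset.mem_univ i)

lemma ae_tendsto_average_insertMarker (hq : ∀ i, 0 ≤ q i) (u : Word N) (f : Fin N → ℝ) :
    ∀ᵐ j ∂bernoulliMeasure q, Tendsto (fun k : ℕ =>
      (∑ n ∈ Finset.range (k ^ 2), f (insertMarker u j n)) / (k : ℝ) ^ 2) atTop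
        (𝓝 (∑ i, q i * f i)) := by
  filter_upwards [ae_tendsto_average_sq hq f] with j hj
  have h1 := tendsto_sum_near_squares (L := u.length) (C := 2 * ∑ i, |f i|)
    (g := fun n => f (insertMarker u j n) - f (j n)) (fun n => ?_) (fun n hn => ?_)
  · have h2 := h1.add hj
    rw [zero_add] at h2
    refine h2.congr fun k => ?_
    rw [Finset.sum_sub_distrib]
    ring
  · have h3 := abs_sub (f (insertMarker u j n)) (f (j n))
    linarith [abs_le_sum_abs f (insertMarker u j n), abs_le_sum_abs f (j n)]
  · simp [insertMarker_of_le hn]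

lemma ae_tendsto_average_unmarked (hq : ∀ i, 0 ≤ q i) (L : ℕ) (f : Fin N → ℝ) :
    ∀ᵐ j ∂bernoulliMeasure q, Tendsto (fun k : ℕ =>
      (∑ n ∈ (Finset.range (k ^ 2)).filter fun n => L ≤ n - n.sqrt ^ 2, f (j n)) / (k : ℝ) ^ 2)
        atTop (𝓝 (∑ i, q i * f i)) := by
  filter_upwards [ae_tendsto_average_sq hq f] with j hj
  have h1 := tendsto_sum_near_squares (L := L) (C := ∑ i, |f i|)
    (g := fun n => if L ≤ n - n.sqrt ^ 2 then 0 else f (j n)) (fun n => ?_) (fun n hn => by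
      rw [if_pos hn])
  · have h2 := hj.sub h1
    rw [sub_zero] at h2
    refine h2.congr fun k => ?_
    rw [← sub_div, ← Finset.sum_sub_distrib, Finset.sum_filter]
    congr 1
    refine Finset.sum_congr rfl fun n _ => ?_
    split_ifs <;> simp
  · split_ifs
    · simpa using Finset.sum_nonneg fun i (_ : i ∈ Finset.univ) => abs_nonneg (f i)
    · exact abs_le_sum_abs f _

end Marker

end Multifractal
namespace Multifractal

namespace SeparatedIFS

variable {N d : ℕ} {S : Fin N → Euc d → Euc d} {rr p q : Fin N → ℝ} {a : Euc d} {R c lo hi : ℝ}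
  {μ : ProbabilityMeasure (Euc d)} {α t : ℝ}
variable (h : SeparatedIFS S rr a R c lo hi)
  (hμ : μ.toMeasure = ∑ i, ENNReal.ofReal (p i) • μ.toMeasure.map (S i))
include h hμ

lemma wordProd_le_measure_codeMap (hp : ∀ i, 0 < p i) (hp1 : ∑ i, p i = 1) (y : Seq N) (n : ℕ) :
    wordProd p (prefixWord y n) ≤
      μ (closedBall (codeMap S a y) (2 * R * wordProd rr (prefixWord y n))) :=
  h.wordProd_le_measure hμ hp hp1 _ (by linarith [h.dist_codeMap y n])

lemma codeMap_mem_suppSet (hp : ∀ i, 0 < p i) (hp1 : ∑ i, p i = 1) (y : Seq N) :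
    codeMap S a y ∈ suppSet μ := by
  intro ε hε
  have hlim : Tendsto (fun n : ℕ => 2 * R * hi ^ n) atTop (𝓝 0) := by
    simpa using (h.tendsto_hi_pow (y 0)).const_mul (2 * R)
  obtain ⟨n, hn⟩ := (hlim.eventually (gt_mem_nhds hε)).exists
  have h1 := h.wordProd_le_measure_codeMap hμ hp hp1 y n
  have h2 : closedBall (codeMap S a y) (2 * R * wordProd rr (prefixWord y n)) ⊆
      ball (codeMap S a y) ε := by
    refine closedBall_subset_ball (lt_of_le_of_lt ?_ hn)
    have := h.wordProd_le_pow (prefixWord y n)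
    rw [length_prefixWord] at this
    exact mul_le_mul_of_nonneg_left this (by linarith [h.R_pos])
  have h3 : (0 : ℝ) < μ (closedBall (codeMap S a y) (2 * R * wordProd rr (prefixWord y n))) :=
    (wordProd_pos hp _).trans_le h1
  exact lt_of_lt_of_le (by exact_mod_cast h3) (μ.apply_mono h2)

lemma measure_closedBall_le_wordProd (hp : ∀ i, 0 < p i) (hp1 : ∑ i, p i = 1) {y : Seq N}
    {n : ℕ} {ρ : ℝ} (hρ : 0 < ρ) (hmark : ∀ z, dist (codeMap S a z) (codeMap S a y) ≤ 2 * ρ →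
      prefixWord z n = prefixWord y n) :
    (μ (closedBall (codeMap S a y) ρ) : ℝ) ≤ wordProd p (prefixWord y n) := by
  have := isProbabilityMeasure_letterMeasure (fun i => (hp i).le) hp1
  have h1 := (h.measure_closedBall_le_bernoulli hμ hp hp1 (codeMap S a y) hρ).trans
    (measure_mono (t := {z | prefixWord z n = prefixWord y n}) fun z hz => hmark z hz)
  rw [bernoulliMeasure_prefix p (fun i => (hp i).le)] at h1
  exact ENNReal.toReal_le_of_le_ofReal (wordProd_pos hp _).le h1

/-- The local dimension at a point whose code carries markers. -/
lemma tendsto_localDimAt (hp : ∀ i, 0 < p i) (hp1 : ∑ i, p i = 1) {y : Seq N} {u : Word N}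
    {l : ℝ} (hl : 0 < l)
    (hmark : ∀ᶠ k : ℕ in atTop, ∀ z, dist (codeMap S a z) (codeMap S a y) ≤
      wordProd rr (prefixWord y (k ^ 2)) * wordProd rr u →
        prefixWord z (k ^ 2) = prefixWord y (k ^ 2))
    (hP : Tendsto (fun k : ℕ => -Real.log (wordProd p (prefixWord y (k ^ 2))) / (k : ℝ) ^ 2)
      atTop (𝓝 (α * l)))
    (hE : Tendsto (fun k : ℕ => -Real.log (wordProd rr (prefixWord y (k ^ 2))) / (k : ℝ) ^ 2)
      atTop (𝓝 l)) :
    Tendsto (localDimAt μ (codeMap S a y)) (𝓝[>] 0) (𝓝 α) := by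
  have hR := h.R_pos
  have hu := wordProd_pos h.pos u
  have hw := fun n => wordProd_pos h.pos (prefixWord y n)
  have hpw := fun n => wordProd_pos hp (prefixWord y n)
  have hmono : ∀ ρ σ : ℝ, 0 < ρ → ρ ≤ σ → (μ (closedBall (codeMap S a y) ρ) : ℝ) ≤
      μ (closedBall (codeMap S a y) σ) := fun ρ σ _ hρσ =>
    NNReal.coe_le_coe.2 (μ.apply_mono (closedBall_subset_closedBall hρσ))
  have hsupp := h.codeMap_mem_suppSet hμ hp hp1 y
  have hscale : ∀ (b : ℝ) (k : ℕ), 0 < b →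
      Real.exp (-(-Real.log (wordProd rr (prefixWord y (k ^ 2))) - Real.log b)) =
        wordProd rr (prefixWord y (k ^ 2)) * b := fun b k hb => by
    rw [neg_sub, sub_neg_eq_add, Real.exp_add, Real.exp_log hb, Real.exp_log (hw _), mul_comm]
  have hupper : ∀ e, e < α → ∀ᶠ ρ : ℝ in 𝓝[>] 0,
      (μ (closedBall (codeMap S a y) ρ) : ℝ) ≤ ρ ^ e := fun e he => by
    refine eventually_le_rpow hmono hl hP (tendsto_sub_div_sq hE (Real.log (wordProd rr u / 2)))
      ?_ (mul_lt_mul_of_pos_right he hl)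
    filter_upwards [hmark] with k hk
    rw [hscale _ _ (by positivity), neg_neg, Real.exp_log (hpw _)]
    refine h.measure_closedBall_le_wordProd hμ hp hp1 (mul_pos (hw _) (by positivity))
      fun z hz => hk z (hz.trans_eq (by ring))
  have hlower : ∀ e, α < e → ∀ᶠ ρ : ℝ in 𝓝[>] 0,
      ρ ^ e ≤ (μ (closedBall (codeMap S a y) ρ) : ℝ) := fun e he => by
    refine eventually_rpow_le hmono hl hP (tendsto_sub_div_sq hE (Real.log (2 * R)))
      (fun k => ?_) (mul_lt_mul_of_pos_right he hl)
    rw [hscale _ _ (by positivity), neg_neg, Real.exp_log (hpw _), mul_comm _ (2 * R)]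
    exact h.wordProd_le_measure_codeMap hμ hp hp1 y _
  rw [tendsto_order]
  constructor
  · intro e he
    obtain ⟨e', h1, h2⟩ := exists_between he
    filter_upwards [hupper e' h2, Ioo_mem_nhdsGT one_pos] with ρ h3 hρ
    refine h1.trans_le ?_
    rw [localDimAt, le_div_iff_of_neg (Real.log_neg hρ.1 hρ.2), ← Real.log_rpow hρ.1]
    exact Real.log_le_log (measure_closedBall_pos hsupp hρ.1) h3
  · intro e he
    obtain ⟨e', h1, h2⟩ := exists_between he
    filter_upwards [hlower e' h1, Ioo_mem_nhdsGT one_pos] with ρ h3 hρ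
    refine lt_of_le_of_lt ?_ h2
    rw [localDimAt, div_le_iff_of_neg (Real.log_neg hρ.1 hρ.2), ← Real.log_rpow hρ.1]
    exact Real.log_le_log (Real.rpow_pos_of_pos hρ.1 _) h3

lemma le_fHaus (hp : ∀ i, 0 < p i) (hp1 : ∑ i, p i = 1) (hq : ∀ i, 0 ≤ q i)
    (hq1 : ∑ i, q i = 1) (hq0 : ∑ i, q i * (-Real.log (p i) - α * -Real.log (rr i)) = 0)
    (hqt : t * ∑ i, q i * -Real.log (rr i) ≤ ∑ i, q i * -Real.log (q i)) :
    (t : EReal) ≤ fHaus μ α := by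
  have := isProbabilityMeasure_letterMeasure hq hq1
  obtain ⟨i0⟩ := nonempty_of_sum_eq_one hp1
  obtain ⟨u, -, hu⟩ := h.exists_marker i0.pos
  have hl := h.lyapunov_pos hq hq1
  set l := ∑ i, q i * -Real.log (rr i) with hldef
  set X : Set (Euc d) := {x | x ∈ suppSet μ ∧ Tendsto (localDimAt μ x) (𝓝[>] 0) (𝓝 α)} with hX
  set g : Seq N → Euc d := fun j => codeMap S a (insertMarker u j) with hg
  have hmark : ∀ (j : Seq N) (k : ℕ), u.length ≤ k → ∀ z,
      dist (codeMap S a z) (g j) ≤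
        wordProd rr (prefixWord (insertMarker u j) (k ^ 2)) * wordProd rr u →
      prefixWord z (k ^ 2) = prefixWord (insertMarker u j) (k ^ 2) := fun j k hk z hz => by
    refine hu _ z _ (prefixWord_insertMarker j hk) (hz.trans_eq ?_)
    rw [prefixWord_insertMarker j hk, wordProd_append]
  have hP0 : ∑ i, q i * -Real.log (p i) = α * l := by
    rw [hldef, Finset.mul_sum, ← sub_eq_zero, ← Finset.sum_sub_distrib, ← hq0]
    exact Finset.sum_congr rfl fun i _ => by ring
  have hEae : ∀ᵐ j ∂bernoulliMeasure q, Tendsto (fun k : ℕ =>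
      -Real.log (wordProd rr (prefixWord (insertMarker u j) (k ^ 2))) / (k : ℝ) ^ 2)
        atTop (𝓝 l) := by
    filter_upwards [ae_tendsto_average_insertMarker hq u fun i => -Real.log (rr i)] with j hj
    simpa only [(log_wordProd_prefixWord _ _ fun k => h.pos (insertMarker u j k)).1,
      Finset.sum_neg_distrib] using hj
  have hXae : ∀ᵐ j ∂bernoulliMeasure q, g j ∈ X := by
    filter_upwards [ae_tendsto_average_insertMarker hq u fun i => -Real.log (p i), hEae]
      with j hj hE
    refine ⟨h.codeMap_mem_suppSet hμ hp hp1 _, h.tendsto_localDimAt hμ hp hp1 hl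
      (eventually_atTop.2 ⟨u.length, hmark j⟩) ?_ hE⟩
    rw [hP0] at hj
    simpa only [(log_wordProd_prefixWord _ _ fun k => hp (insertMarker u j k)).1,
      Finset.sum_neg_distrib] using hj
  have hne : X ≠ ∅ := by
    obtain ⟨j, hj⟩ := hXae.exists
    exact fun h0 => Set.notMem_empty _ (h0 ▸ hj)
  rw [fHaus, dimHE, if_neg hne]
  refine EReal.ge_of_forall_gt_iff_ge.1 fun s hs => ?_
  rw [EReal.coe_lt_coe_iff] at hs
  rcases le_or_gt s 0 with hs0 | hs0
  · exact (EReal.coe_nonpos.2 hs0).trans (EReal.coe_ennreal_nonneg _)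
  lift s to ℝ≥0 using hs0.le
  rw [← EReal.coe_nnreal_eq_coe_real, EReal.coe_ennreal_le_coe_ennreal_iff]
  refine le_dimH_of_ae_measure_le (ν := bernoulliMeasure q) (g := g) (by exact_mod_cast hs0) ?_
  filter_upwards [hXae, hEae, ae_pos q,
    ae_tendsto_average_unmarked hq u.length fun i => -Real.log (q i)] with j hjX hE hjpos hA
  refine ⟨hjX, ?_⟩
  set F : ℝ → ℝ := fun ρ => (bernoulliMeasure q {i | dist (g i) (g j) ≤ ρ}).toReal with hF
  have hev : ∀ᶠ ρ : ℝ in 𝓝[>] 0, F ρ ≤ ρ ^ (s : ℝ) := by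
    refine eventually_le_rpow (fun ρ σ _ hρσ => ?_) hl hA
      (tendsto_sub_div_sq hE (Real.log (wordProd rr u))) ?_
      ((mul_lt_mul_of_pos_right hs hl).trans_le hqt)
    · exact ENNReal.toReal_mono (measure_ne_top _ _)
        (measure_mono fun i (hi : dist (g i) (g j) ≤ ρ) => hi.trans hρσ)
    filter_upwards [eventually_ge_atTop u.length] with k hk
    rw [neg_sub, sub_neg_eq_add, Real.exp_add, Real.exp_log (wordProd_pos h.pos _),
      Real.exp_log (wordProd_pos h.pos _), mul_comm]
    refine ENNReal.toReal_le_of_le_ofReal (Real.exp_pos _).le ?_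
    rw [Finset.sum_neg_distrib, neg_neg, Real.exp_sum, ENNReal.ofReal_prod_of_nonneg
      fun n _ => (Real.exp_pos _).le]
    simp only [Real.exp_log (hjpos _)]
    rw [← bernoulliMeasure_box]
    refine measure_mono fun i hi n hn => ?_
    rw [Finset.mem_filter, Finset.mem_range] at hn
    have h1 := prefixWord_eq_iff.1 (hmark j k hk _ hi) n hn.1
    rwa [insertMarker_of_le hn.2, insertMarker_of_le hn.2] at h1
  filter_upwards [hev] with ρ hρ
  rw [← ENNReal.ofReal_toReal (measure_ne_top (bernoulliMeasure q) _)]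
  exact ENNReal.ofReal_le_ofReal hρ

end SeparatedIFS

end Multifractal
namespace Multifractal

lemma sigmaAbs_mono {N : ℕ} {a : Word N → ℝ} {P Q : Word N → Prop} (hPQ : ∀ w, P w → Q w) :
    sigmaAbs a P ≤ sigmaAbs a Q := by
  refine sInf_le_sInf (Set.image_mono fun t ht => ?_)
  exact ht.comp_injective
    (i := fun w : {w : Word N // w ≠ [] ∧ P w} => (⟨w.1, w.2.1, hPQ _ w.2.2⟩ :
      {w : Word N // w ≠ [] ∧ Q w})) fun v w hvw => Subtype.ext (Subtype.mk.inj hvw)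

end Multifractal

namespace Multifractal

/-- **Theorem 1.1** (shrinking targets, self-similar measures).
For a self-similar measure `μ` satisfying the OSC and the zeta-function
`ζ_α^{sim}(s;r) = ∑_{|log p_w/log r_w - α| ≤ r} r_w^s`, the abscissa of convergence of
`ζ_α^{sim}(·;r)` converges, as `r ↘ 0`, to `f_μ(α) = f_μ^c(α)`. -/
theorem self_similar_shrinking_targets
    {d N : ℕ} (hN : 0 < N)
    (S : Fin N → Euc d → Euc d) (rr : Fin N → ℝ) (p : Fin N → ℝ)
    (hr : ∀ i, rr i ∈ Set.Ioo (0 : ℝ) 1)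
    (hsim : ∀ i x y, dist (S i x) (S i y) = rr i * dist x y)
    (hOSC : ∃ O : Set (Euc d), IsOpen O ∧ O.Nonempty ∧ Bornology.IsBounded O ∧
      (∀ i, S i '' O ⊆ O) ∧ ∀ i j, i ≠ j → Disjoint (S i '' O) (S j '' O))
    (hp : ∀ i, 0 < p i) (hp1 : ∑ i, p i = 1)
    (μ : ProbabilityMeasure (Euc d))
    (hμ : μ.toMeasure = ∑ i, ENNReal.ofReal (p i) • μ.toMeasure.map (S i))
    (α : ℝ) :
    Filter.Tendsto
      (fun r : ℝ => sigmaAbs (fun w : Word N => (w.map rr).prod)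
        (fun w => |Real.log ((w.map p).prod) / Real.log ((w.map rr).prod) - α| ≤ r))
      (nhdsWithin 0 (Set.Ioi 0)) (nhds (fHaus μ α)) ∧
    fHaus μ α = fCoarse μ α := by
  obtain ⟨a, R, c, lo, hi, h⟩ := exists_separatedIFS hN hr hsim hOSC
  change Tendsto (fun r : ℝ => sigmaAbs (wordProd rr)
    (fun w => |Real.log (wordProd p w) / Real.log (wordProd rr w) - α| ≤ r)) _ _ ∧ _
  have hdich : ∀ t : ℝ,
      ((∀ᶠ r : ℝ in 𝓝[>] 0, sigmaAbs (wordProd rr)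
        (fun w => |Real.log (wordProd p w) / Real.log (wordProd rr w) - α| ≤ r) ≤ t) ∧
          fCoarse μ α ≤ t) ∨
      ((∀ᶠ r : ℝ in 𝓝[>] 0, t ≤ sigmaAbs (wordProd rr)
        (fun w => |Real.log (wordProd p w) / Real.log (wordProd rr w) - α| ≤ r)) ∧
          t ≤ fHaus μ α) := fun t => by
    rcases exists_lt_one_or_exists_weights (fun i => -Real.log (p i) - α * -Real.log (rr i))
      (fun i => -Real.log (rr i)) t with ⟨θ, hθ⟩ | ⟨q, hq, hq1, hq0, hqt⟩
    · rw [← partitionSum_eq h.pos hp] at hθ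
      obtain ⟨r, hr0, hσ⟩ := h.sigmaAbs_le hp hθ
      refine Or.inl ⟨?_, h.fCoarse_le hμ hp hp1 hθ⟩
      filter_upwards [Ioo_mem_nhdsGT hr0] with r' hr'
      exact (sigmaAbs_mono fun w hw => hw.trans hr'.2.le).trans hσ
    · refine Or.inr ⟨?_, h.le_fHaus hμ hp hp1 hq hq1 hq0 hqt⟩
      filter_upwards [self_mem_nhdsWithin] with r hr0
      exact h.le_sigmaAbs hp hq hq1 hq0 hqt hr0
  have hle := fHaus_le_fCoarse_of_subset (h.suppSet_subset hμ hp hp1) α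
  refine ⟨tendsto_order.2 ⟨fun x hx => ?_, fun x hx => ?_⟩,
    hle.antisymm (EReal.le_of_forall_lt_iff_le.1 fun z hz => ?_)⟩
  · obtain ⟨z, hxz, hz⟩ := EReal.lt_iff_exists_real_btwn.1 hx
    rcases hdich z with h1 | h1
    · exact absurd (hz.trans_le (hle.trans h1.2)) (lt_irrefl _)
    · exact h1.1.mono fun r hr => hxz.trans_le hr
  · obtain ⟨z, hz, hzx⟩ := EReal.lt_iff_exists_real_btwn.1 hx
    rcases hdich z with h1 | h1
    · exact h1.1.mono fun r hr => hr.trans_lt hzx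
    · exact absurd (hz.trans_le h1.2) (lt_irrefl _)
  · rcases hdich z with h1 | h1
    · exact h1.2
    · exact absurd (hz.trans_le h1.2) (lt_irrefl _)

end Multifractal
end

section
/- Let C ⊆ X be closed. Then the limit as r ↘ 0 of the abscissa of convergence σ_abs(ζ_C^{U,Λ}(·;r)) exists and equals the lower coarse multifractal spectrum: lim_{r↘0} σ_abs(ζ_C^{U,Λ}(·;r)) = f̲^{U,Λ}(C). -/
open MeasureTheory Filter Topology Metric Set
open scoped ENNReal NNReal Classical

namespace Multifractal

section

variable {N : ℕ}

/-! ### Birkhoff sums and cylinders -/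

lemma shift_iterate_apply (n k : ℕ) (x : Seq N) : shift^[n] x k = x (k + n) := by
  induction n generalizing x with
  | zero => rfl
  | succ n ih =>
    rw [Function.iterate_succ_apply, ih]
    simp [shift, Nat.add_assoc]

lemma birkhoff_add (φ : Seq N → ℝ) (m n : ℕ) (x : Seq N) :
    birkhoff φ (m + n) x = birkhoff φ m x + birkhoff φ n (shift^[m] x) := by
  simp only [birkhoff, Finset.sum_range_add, ← Function.iterate_add_apply]
  simp [Nat.add_comm]

lemma birkhoff_le {φ : Seq N → ℝ} {b : ℝ} (h : ∀ x, φ x ≤ b) (n : ℕ) (x : Seq N) :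
    birkhoff φ n x ≤ n * b := by
  simpa [birkhoff] using
    Finset.sum_le_card_nsmul (Finset.range n) _ b fun k _ => h (shift^[k] x)

lemma le_birkhoff {φ : Seq N → ℝ} {a : ℝ} (h : ∀ x, a ≤ φ x) (n : ℕ) (x : Seq N) :
    n * a ≤ birkhoff φ n x := by
  simpa [birkhoff] using
    Finset.card_nsmul_le_sum (Finset.range n) _ a fun k _ => h (shift^[k] x)

lemma abs_birkhoff_le {φ : Seq N → ℝ} {b : ℝ} (h : ∀ x, |φ x| ≤ b) (n : ℕ) (x : Seq N) :
    |birkhoff φ n x| ≤ n * b := by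
  refine abs_le.2 ⟨?_, birkhoff_le (fun y => (abs_le.1 (h y)).2) n x⟩
  have := le_birkhoff (fun y => (abs_le.1 (h y)).1) n x
  linarith

lemma mem_cylinder_append {u v : Word N} {x : Seq N} :
    x ∈ cylinder (u ++ v) ↔ x ∈ cylinder u ∧ shift^[u.length] x ∈ cylinder v := by
  simp only [cylinder, mem_ofPred_eq, shift_iterate_apply, List.get_eq_getElem]
  constructor
  · intro h
    refine ⟨fun k hk => ?_, fun k hk => ?_⟩
    · rw [h k (by simp; omega), List.getElem_append_left hk]
    · rw [h (k + u.length) (by simp; omega), List.getElem_append_right (by omega)]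
      simp
  · rintro ⟨h₁, h₂⟩ k hk
    by_cases hku : k < u.length
    · rw [h₁ k hku, List.getElem_append_left hku]
    · have := h₂ (k - u.length) (by simp at hk; omega)
      rw [Nat.sub_add_cancel (by omega)] at this
      rw [this, List.getElem_append_right (by omega)]

/-- The infinite string `w` followed by `x`. -/
def wordAppend (w : Word N) (x : Seq N) : Seq N :=
  fun k => if h : k < w.length then w.get ⟨k, h⟩ else x (k - w.length)

lemma wordAppend_mem_cylinder (w : Word N) (x : Seq N) : wordAppend w x ∈ cylinder w := by
  intro k hk
  simp [wordAppend, hk]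

lemma shift_iterate_wordAppend (w : Word N) (x : Seq N) :
    shift^[w.length] (wordAppend w x) = x := by
  ext k
  simp [shift_iterate_apply, wordAppend]

lemma cylinder_nonempty (hN : 0 < N) (w : Word N) : (cylinder w).Nonempty :=
  ⟨wordAppend w fun _ => ⟨0, hN⟩, wordAppend_mem_cylinder _ _⟩

lemma eq_of_mem_cylinder {w : Word N} {x y : Seq N} (hx : x ∈ cylinder w) (hy : y ∈ cylinder w)
    {k : ℕ} (hk : k < w.length) : x k = y k :=
  (hx k hk).trans (hy k hk).symm

/-! ### The numbers `s_w` -/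

section SWord

variable {Λ : Seq N → ℝ} {cmin cmax : ℝ}

lemma exp_birkhoff_le_sWord (hΛ : ∀ x, Λ x ≤ cmax) {w : Word N} {x : Seq N}
    (hx : x ∈ cylinder w) : Real.exp (birkhoff Λ w.length x) ≤ sWord Λ w := by
  refine le_csSup ⟨Real.exp (w.length * cmax), ?_⟩ ⟨x, hx, rfl⟩
  rintro _ ⟨y, -, rfl⟩
  exact Real.exp_le_exp.2 (birkhoff_le hΛ _ _)

lemma sWord_le (hN : 0 < N) {w : Word N} {b : ℝ}
    (h : ∀ x ∈ cylinder w, Real.exp (birkhoff Λ w.length x) ≤ b) : sWord Λ w ≤ b := by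
  refine csSup_le ((cylinder_nonempty hN w).image _) ?_
  rintro _ ⟨x, hx, rfl⟩
  exact h x hx

lemma sWord_le_exp (hN : 0 < N) (hΛ : ∀ x, Λ x ≤ cmax) (w : Word N) :
    sWord Λ w ≤ Real.exp (w.length * cmax) :=
  sWord_le hN fun x _ => Real.exp_le_exp.2 (birkhoff_le hΛ _ x)

lemma exp_le_sWord (hN : 0 < N) (hΛ : ∀ x, Λ x ∈ Icc cmin cmax) (w : Word N) :
    Real.exp (w.length * cmin) ≤ sWord Λ w := by
  obtain ⟨x, hx⟩ := cylinder_nonempty hN w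
  exact (Real.exp_le_exp.2 (le_birkhoff (fun y => (hΛ y).1) _ x)).trans
    (exp_birkhoff_le_sWord (fun y => (hΛ y).2) hx)

lemma sWord_pos (hN : 0 < N) (hΛ : ∀ x, Λ x ∈ Icc cmin cmax) (w : Word N) : 0 < sWord Λ w :=
  (Real.exp_pos _).trans_le (exp_le_sWord hN hΛ w)

lemma sWord_nil (hN : 0 < N) (hΛ : ∀ x, Λ x ∈ Icc cmin cmax) : sWord Λ ([] : Word N) = 1 := by
  refine le_antisymm ?_ ?_
  · simpa using sWord_le_exp hN (fun x => (hΛ x).2) []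
  · simpa using exp_le_sWord hN hΛ []

lemma sWord_append_le (hN : 0 < N) (hΛ : ∀ x, Λ x ∈ Icc cmin cmax) (u v : Word N) :
    sWord Λ (u ++ v) ≤ sWord Λ u * sWord Λ v := by
  refine sWord_le hN fun x hx => ?_
  rw [mem_cylinder_append] at hx
  rw [List.length_append, birkhoff_add, Real.exp_add]
  exact mul_le_mul (exp_birkhoff_le_sWord (fun y => (hΛ y).2) hx.1)
    (exp_birkhoff_le_sWord (fun y => (hΛ y).2) hx.2) (Real.exp_pos _).le (sWord_pos hN hΛ u).le

lemma sWord_mul_le (hN : 0 < N) (hΛ : ∀ x, Λ x ∈ Icc cmin cmax) {c : ℝ} (hc : 1 ≤ c)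
    (hdist : BddDistortion Λ c) (u v : Word N) :
    sWord Λ u * sWord Λ v ≤ c * sWord Λ (u ++ v) := by
  have hc0 : 0 < c := by linarith
  rw [← le_div_iff₀ (sWord_pos hN hΛ v)]
  refine sWord_le hN fun y hy => ?_
  rw [le_div_iff₀ (sWord_pos hN hΛ v), ← le_div_iff₀' (Real.exp_pos _)]
  refine sWord_le hN fun x hx => ?_
  rw [le_div_iff₀' (Real.exp_pos _)]
  have hz : wordAppend u x ∈ cylinder (u ++ v) :=
    mem_cylinder_append.2 ⟨wordAppend_mem_cylinder u x, by rwa [shift_iterate_wordAppend]⟩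
  have h := exp_birkhoff_le_sWord (fun y => (hΛ y).2) hz
  rw [List.length_append, birkhoff_add, Real.exp_add, shift_iterate_wordAppend] at h
  have h' := hdist u.length y (wordAppend u x)
    fun k hk => eq_of_mem_cylinder hy (wordAppend_mem_cylinder u x) hk
  calc _ ≤ c * Real.exp (birkhoff Λ u.length (wordAppend u x)) *
        Real.exp (birkhoff Λ v.length x) :=
        mul_le_mul_of_nonneg_right h' (Real.exp_pos _).le
    _ ≤ c * sWord Λ (u ++ v) := by
        rw [mul_assoc]
        exact mul_le_mul_of_nonneg_left h hc0.le

lemma mul_sWord_le_sWord_append (hN : 0 < N) (hΛ : ∀ x, Λ x ∈ Icc cmin cmax) {c : ℝ}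
    (hc : 1 ≤ c) (hdist : BddDistortion Λ c) (u v : Word N) :
    c⁻¹ * Real.exp (v.length * cmin) * sWord Λ u ≤ sWord Λ (u ++ v) := by
  have hc0 : 0 < c := by linarith
  rw [mul_assoc, inv_mul_le_iff₀ hc0, mul_comm]
  exact (mul_le_mul_of_nonneg_left (exp_le_sWord hN hΛ v) (sWord_pos hN hΛ u).le).trans
    (sWord_mul_le hN hΛ hc hdist u v)

/-- The strings `w` with `s_w ≈ δ`. -/
def cutSet (Λ : Seq N → ℝ) (δ : ℝ) : Set (Word N) :=
  {w | w ≠ [] ∧ sWord Λ w ≤ δ ∧ δ < sWord Λ w.dropLast}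

lemma cutSet_finite (hN : 0 < N) (hΛ : ∀ x, Λ x ∈ Icc cmin cmax) (hcmax : cmax < 0) {δ : ℝ}
    (hδ : 0 < δ) : (cutSet Λ δ).Finite := by
  obtain ⟨m, hm⟩ := exists_nat_gt (Real.log δ / cmax)
  refine (List.finite_length_le (Fin N) (m + 1)).subset ?_
  rintro w ⟨-, -, hw⟩
  have h := hw.trans_le (sWord_le_exp hN (fun x => (hΛ x).2) _)
  rw [← Real.log_lt_iff_lt_exp hδ, ← lt_div_iff_of_neg hcmax] at h
  have h' := Nat.cast_lt.1 (h.trans hm)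
  simp only [List.length_dropLast, mem_ofPred_eq] at h' ⊢
  omega

lemma mul_le_sWord_of_mem_cutSet (hN : 0 < N) (hΛ : ∀ x, Λ x ∈ Icc cmin cmax) {c : ℝ}
    (hc : 1 ≤ c) (hdist : BddDistortion Λ c) {δ : ℝ} {w : Word N} (hw : w ∈ cutSet Λ δ) :
    c⁻¹ * Real.exp cmin * δ ≤ sWord Λ w := by
  obtain ⟨hne, -, hlt⟩ := hw
  have h := mul_sWord_le_sWord_append hN hΛ hc hdist w.dropLast [w.getLast hne]
  rw [List.dropLast_append_getLast] at h
  simp only [List.length_singleton, Nat.cast_one, one_mul] at h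
  exact (mul_le_mul_of_nonneg_left hlt.le (by positivity)).trans h

/-- If `s` drops below `δ` along `v`, then it does so exactly at some prefix of `v`. -/
lemma exists_prefix_mem_cutSet {δ : ℝ} (u v : Word N) (hu : δ < sWord Λ u)
    (huv : sWord Λ (u ++ v) ≤ δ) :
    ∃ v₁ v₂, v = v₁ ++ v₂ ∧ u ++ v₁ ∈ cutSet Λ δ := by
  induction v using List.reverseRecOn with
  | nil => simp at huv; linarith
  | append_singleton v a ih =>
    by_cases h : sWord Λ (u ++ v) ≤ δ
    · obtain ⟨v₁, v₂, rfl, hv⟩ := ih h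
      exact ⟨v₁, v₂ ++ [a], by simp, hv⟩
    · refine ⟨v ++ [a], [], by simp, by simp, huv, ?_⟩
      rw [← List.append_assoc, List.dropLast_concat]
      exact not_le.1 h

end SWord

/-! ### Powers of comparable numbers -/

lemma rpow_bounds {K δ s : ℝ} (hK : 0 < K) (hK1 : K ≤ 1) (hδ : 0 < δ) (h₁ : K * δ ≤ s)
    (h₂ : s ≤ δ) (t : ℝ) : K ^ |t| * δ ^ t ≤ s ^ t ∧ s ^ t ≤ (K ^ |t|)⁻¹ * δ ^ t := by
  have hs : 0 < s := (by positivity : 0 < K * δ).trans_le h₁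
  obtain ht | ht := le_total 0 t
  · rw [abs_of_nonneg ht, ← Real.mul_rpow hK.le hδ.le]
    refine ⟨Real.rpow_le_rpow (by positivity) h₁ ht, ?_⟩
    refine (Real.rpow_le_rpow hs.le h₂ ht).trans (le_mul_of_one_le_left (by positivity) ?_)
    exact (one_le_inv₀ (by positivity)).2 (Real.rpow_le_one hK.le hK1 ht)
  · rw [abs_of_nonpos ht, Real.rpow_neg hK.le, inv_inv, ← Real.mul_rpow hK.le hδ.le]
    refine ⟨?_, Real.rpow_le_rpow_of_nonpos (by positivity) h₁ ht⟩
    refine le_trans ?_ (Real.rpow_le_rpow_of_nonpos hs h₂ ht)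
    refine mul_le_of_le_one_left (by positivity) (inv_le_one_of_one_le₀ ?_)
    exact Real.one_le_rpow_of_pos_of_le_one_of_nonpos hK hK1 ht

lemma rpow_mul_le_of_mul_le {c a b s : ℝ} (hc : 1 ≤ c) (ha : 0 < a) (hb : 0 < b)
    (h₁ : a * b ≤ c * s) (h₂ : s ≤ a * b) (t : ℝ) : a ^ t * b ^ t ≤ c ^ |t| * s ^ t := by
  have hc0 : 0 < c := by linarith
  have := (rpow_bounds (inv_pos.2 hc0) (inv_le_one_of_one_le₀ hc) (mul_pos ha hb)
    ((inv_mul_le_iff₀ hc0).2 h₁) h₂ t).1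
  rwa [Real.inv_rpow hc0.le, inv_mul_le_iff₀ (by positivity), Real.mul_rpow ha.le hb.le] at this

/-! ### Concatenation trees -/

/-- The concatenations `u v₁ … v_j` with `v_i ∈ W`, stopped when `s` drops to `δ` or below, or
when `j` reaches the given bound. -/
noncomputable def stoppedTree (Λ : Seq N → ℝ) (δ : ℝ) (W : Finset (Word N)) :
    ℕ → Word N → Finset (Word N)
  | 0, u => {u}
  | k + 1, u => if sWord Λ u ≤ δ then {u} else W.biUnion fun v => stoppedTree Λ δ W k (u ++ v)

section Tree

variable {Λ : Seq N → ℝ} {cmin cmax δ : ℝ} {W : Finset (Word N)}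

lemma prefix_of_mem_stoppedTree {k : ℕ} {u w : Word N} (hw : w ∈ stoppedTree Λ δ W k u) :
    u <+: w := by
  induction k generalizing u with
  | zero => simp_all [stoppedTree]
  | succ k ih =>
    rw [stoppedTree] at hw
    split_ifs at hw
    · simp_all
    · obtain ⟨v, -, hv⟩ := Finset.mem_biUnion.1 hw
      exact (List.prefix_append u v).trans (ih hv)

lemma rpow_le_sum_stoppedTree {t : ℝ} {n : ℕ} (hlen : ∀ v ∈ W, v.length = n)
    (hW : ∀ u, sWord Λ u ^ t ≤ ∑ v ∈ W, sWord Λ (u ++ v) ^ t) (k : ℕ) (u : Word N) :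
    sWord Λ u ^ t ≤ ∑ w ∈ stoppedTree Λ δ W k u, sWord Λ w ^ t := by
  induction k generalizing u with
  | zero => simp [stoppedTree]
  | succ k ih =>
    rw [stoppedTree]
    split_ifs
    · simp
    · rw [Finset.sum_biUnion]
      · exact (hW u).trans (Finset.sum_le_sum fun v _ => ih _)
      · intro v hv v' hv' hne
        refine Finset.disjoint_left.2 fun w hw hw' => hne ?_
        have h := List.prefix_of_prefix_length_le (prefix_of_mem_stoppedTree hw)
          (prefix_of_mem_stoppedTree hw') (by simp [hlen v hv, hlen v' hv'])
        exact List.append_cancel_left (h.eq_of_length (by simp [hlen v hv, hlen v' hv']))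

lemma mem_stoppedTree_cases (hN : 0 < N) (hΛ : ∀ x, Λ x ∈ Icc cmin cmax) (hcmax : cmax < 0)
    (hW0 : ∀ v ∈ W, v ≠ []) {S : Word N → Prop} (hS : ∀ u, S u → ∀ v ∈ W, S (u ++ v))
    {k : ℕ} {u w : Word N} (hu : S u) (hk : sWord Λ u * Real.exp (k * cmax) ≤ δ)
    (hw : w ∈ stoppedTree Λ δ W k u) :
    (w = u ∧ sWord Λ u ≤ δ) ∨
      ∃ p, ∃ v ∈ W, S p ∧ δ < sWord Λ p ∧ w = p ++ v ∧ sWord Λ (p ++ v) ≤ δ := by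
  induction k generalizing u with
  | zero =>
    left
    simp only [stoppedTree, Finset.mem_singleton] at hw
    exact ⟨hw, by simpa using hk⟩
  | succ k ih =>
    rw [stoppedTree] at hw
    split_ifs at hw with hδ
    · exact Or.inl ⟨by simpa using hw, hδ⟩
    · obtain ⟨v, hv, hwv⟩ := Finset.mem_biUnion.1 hw
      have hle : sWord Λ v ≤ Real.exp cmax := by
        refine (sWord_le_exp hN (fun x => (hΛ x).2) v).trans (Real.exp_le_exp.2 ?_)
        have : (1 : ℝ) ≤ v.length := by
          exact_mod_cast List.length_pos_iff.2 (hW0 v hv)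
        nlinarith
      have hk' : sWord Λ (u ++ v) * Real.exp (k * cmax) ≤ δ := by
        refine le_trans ?_ hk
        rw [Nat.cast_add_one, add_mul, one_mul, Real.exp_add,
          mul_comm (Real.exp _) (Real.exp cmax), ← mul_assoc]
        refine mul_le_mul_of_nonneg_right ?_ (Real.exp_pos _).le
        exact (sWord_append_le hN hΛ u v).trans
          (mul_le_mul_of_nonneg_left hle (sWord_pos hN hΛ u).le)
      rcases ih (hS u hu v hv) hk' hwv with ⟨rfl, h⟩ | h
      · exact Or.inr ⟨u, v, hv, hu, not_le.1 hδ, rfl, h⟩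
      · exact Or.inr h

lemma exists_mul_rpow_le_ncard (hN : 0 < N) (hΛ : ∀ x, Λ x ∈ Icc cmin cmax) (hcmax : cmax < 0)
    {c : ℝ} (hc : 1 ≤ c) (hdist : BddDistortion Λ c) {n : ℕ} (hn : n ≠ 0)
    (hlen : ∀ v ∈ W, v.length = n) {S : Word N → Prop} (hS0 : S [])
    (hS : ∀ u, S u → ∀ v ∈ W, S (u ++ v)) {t : ℝ}
    (hW : ∀ u, sWord Λ u ^ t ≤ ∑ v ∈ W, sWord Λ (u ++ v) ^ t) :
    ∃ B > 0, ∀ δ : ℝ, 0 < δ → δ < 1 → B * δ ^ (-t) ≤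
      ({w ∈ cutSet Λ δ | ∃ p v, w = p ++ v ∧ S p ∧ v.length ≤ n}.ncard : ℝ) := by
  have hc0 : 0 < c := by linarith
  have hcmin : cmin < 0 := by
    have := hΛ fun _ => ⟨0, hN⟩
    linarith [this.1, this.2]
  let K : ℝ := c⁻¹ * Real.exp (n * cmin)
  have hK : 0 < K := by positivity
  have hK1 : K ≤ 1 := by
    refine mul_le_one₀ (inv_le_one_of_one_le₀ hc) (Real.exp_pos _).le (Real.exp_le_one_iff.2 ?_)
    exact mul_nonpos_of_nonneg_of_nonpos (Nat.cast_nonneg _) hcmin.le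
  let Z := (List.finite_length_le (Fin N) n).toFinset
  have hZ : 0 < (Z.card : ℝ) := by
    have : [] ∈ Z := by simp [Z]
    exact_mod_cast Finset.card_pos.2 ⟨_, this⟩
  refine ⟨K ^ |t| / Z.card, by positivity, fun δ hδ hδ1 => ?_⟩
  obtain ⟨k, hk⟩ := exists_nat_gt (Real.log δ / cmax)
  have hk' : sWord Λ ([] : Word N) * Real.exp (k * cmax) ≤ δ := by
    rw [sWord_nil hN hΛ, one_mul, ← Real.le_log_iff_exp_le hδ, ← div_le_iff_of_neg hcmax]
    exact hk.le
  let D := {w ∈ cutSet Λ δ | ∃ p v, w = p ++ v ∧ S p ∧ v.length ≤ n}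
  have hD : D.Finite := (cutSet_finite hN hΛ hcmax hδ).subset (sep_subset _ _)
  let T := stoppedTree Λ δ W k []
  have hT : ∀ w ∈ T, ∃ p, ∃ v ∈ W, S p ∧ δ < sWord Λ p ∧ w = p ++ v ∧ sWord Λ (p ++ v) ≤ δ := by
    intro w hw
    refine (mem_stoppedTree_cases hN hΛ hcmax ?_ hS hS0 hk' hw).resolve_left ?_
    · intro v hv h
      exact hn (by rw [← hlen v hv, h, List.length_nil])
    · rw [sWord_nil hN hΛ]
      exact fun h => by linarith [h.2]
  have hcard : T.card ≤ D.ncard * Z.card := by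
    rw [ncard_eq_toFinset_card D hD]
    refine (Finset.card_le_card fun w hw => ?_).trans
      (Finset.card_image₂_le (· ++ ·) hD.toFinset Z)
    obtain ⟨p, v, hv, hp, hpδ, rfl, hle⟩ := hT w hw
    obtain ⟨v₁, v₂, rfl, hcut⟩ := exists_prefix_mem_cutSet p v hpδ hle
    have hl := hlen _ hv
    rw [List.length_append] at hl
    refine Finset.mem_image₂.2 ⟨p ++ v₁, ?_, v₂, ?_, by simp⟩
    · exact hD.mem_toFinset.2 ⟨hcut, p, v₁, rfl, hp, by omega⟩
    · simp only [Z, Finite.mem_toFinset, mem_ofPred_eq]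
      omega
  have hsum : 1 ≤ T.card * ((K ^ |t|)⁻¹ * δ ^ t) := by
    have h := rpow_le_sum_stoppedTree (δ := δ) hlen hW k []
    rw [sWord_nil hN hΛ, Real.one_rpow] at h
    refine h.trans ?_
    rw [← nsmul_eq_mul]
    refine Finset.sum_le_card_nsmul _ _ _ fun w hw => ?_
    obtain ⟨p, v, hv, hp, hpδ, rfl, hle⟩ := hT w hw
    refine (rpow_bounds hK hK1 hδ ?_ hle t).2
    have := mul_sWord_le_sWord_append hN hΛ hc hdist p v
    rw [hlen v hv] at this
    exact (mul_le_mul_of_nonneg_left hpδ.le hK.le).trans this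
  have hcard' : (T.card : ℝ) ≤ D.ncard * Z.card := by exact_mod_cast hcard
  have hpos : 0 < (K ^ |t|)⁻¹ * δ ^ t := by positivity
  rw [Real.rpow_neg hδ.le, div_mul_eq_mul_div, div_le_iff₀ hZ]
  refine le_trans ?_ hcard'
  rw [← div_le_iff₀ hpos] at hsum
  refine le_trans (le_of_eq ?_) hsum
  field_simp

end Tree

/-- If the series `∑ s_w^t` over a set of strings diverges, then for `t' < t` its part over the
strings of some length `n ≥ 1` has `t'`-sum as large as desired. -/
lemma exists_length_sum_ge (hN : 0 < N) {Λ : Seq N → ℝ} {cmin cmax : ℝ}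
    (hΛ : ∀ x, Λ x ∈ Icc cmin cmax) (hcmax : cmax < 0) {P : Word N → Prop} {t t' : ℝ}
    (htt : t' < t) (hP : ¬ Summable fun w : {w : Word N // w ≠ [] ∧ P w} => sWord Λ w.1 ^ t)
    (A : ℝ) :
    ∃ n ≠ 0, ∃ W : Finset (Word N), (∀ w ∈ W, w.length = n ∧ P w) ∧
      A ≤ ∑ w ∈ W, sWord Λ w ^ t' := by
  by_contra! hcon
  refine hP ?_
  have hnn : ∀ (w : Word N) (r : ℝ), 0 ≤ sWord Λ w ^ r :=
    fun w r => Real.rpow_nonneg (sWord_pos hN hΛ w).le r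
  have hA : 0 ≤ A := by simpa using (hcon 1 one_ne_zero ∅ (by simp)).le
  let ρ := Real.exp (cmax * (t - t'))
  have hρ1 : ρ < 1 := Real.exp_lt_one_iff.2 (mul_neg_of_neg_of_pos hcmax (by linarith))
  have hρ0 : 0 < ρ := Real.exp_pos _
  have hgeo : Summable fun n : ℕ => A * ρ ^ n :=
    (summable_geometric_of_lt_one hρ0.le hρ1).mul_left A
  have hterm : ∀ w : Word N, sWord Λ w ^ t ≤ sWord Λ w ^ t' * ρ ^ w.length := by
    intro w
    have hpos := sWord_pos hN hΛ w
    have : sWord Λ w ^ t = sWord Λ w ^ t' * sWord Λ w ^ (t - t') := by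
      rw [← Real.rpow_add hpos]
      ring_nf
    rw [this]
    refine mul_le_mul_of_nonneg_left ?_ (hnn w t')
    refine (Real.rpow_le_rpow hpos.le (sWord_le_exp hN (fun x => (hΛ x).2) w)
      (by linarith)).trans (le_of_eq ?_)
    rw [← Real.exp_mul, ← Real.exp_nat_mul]
    ring_nf
  refine summable_of_sum_le (c := ∑' n : ℕ, A * ρ ^ n) (fun w => hnn _ _) fun u => ?_
  let v : Finset (Word N) := u.map (Function.Embedding.subtype _)
  have hv : ∀ w ∈ v, w ≠ [] ∧ P w := by
    intro w hw
    obtain ⟨x, -, rfl⟩ := Finset.mem_map.1 hw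
    exact x.2
  calc ∑ w ∈ u, sWord Λ w.1 ^ t = ∑ w ∈ v, sWord Λ w ^ t := by simp [v]
    _ = ∑ n ∈ v.image List.length, ∑ w ∈ v with w.length = n, sWord Λ w ^ t :=
        (Finset.sum_fiberwise_of_maps_to (fun w hw => Finset.mem_image_of_mem _ hw) _).symm
    _ ≤ ∑ n ∈ v.image List.length, A * ρ ^ n := by
        refine Finset.sum_le_sum fun n hn => ?_
        obtain ⟨w₀, hw₀, rfl⟩ := Finset.mem_image.1 hn
        have h := hcon w₀.length (by simpa using (hv w₀ hw₀).1)
          {w ∈ v | w.length = w₀.length} (fun w hw => by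
            rw [Finset.mem_filter] at hw
            exact ⟨hw.2, (hv w hw.1).2⟩)
        refine le_trans ?_ (mul_le_mul_of_nonneg_right h.le (by positivity))
        rw [Finset.sum_mul]
        refine Finset.sum_le_sum fun w hw => ?_
        rw [← (Finset.mem_filter.1 hw).2]
        exact hterm w
    _ ≤ ∑' n : ℕ, A * ρ ^ n := hgeo.sum_le_tsum _ fun n _ => by positivity

/-! ### Empirical averages -/

lemma exists_forall_abs_sub_lt (g : Seq N → ℝ) (hg : Continuous g) {ε : ℝ} (hε : 0 < ε) :
    ∃ m : ℕ, ∀ x y : Seq N, (∀ k < m, x k = y k) → |g x - g y| < ε := by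
  let _ : MetricSpace (Seq N) := PiNat.metricSpace
  obtain ⟨η, hη, h⟩ := Metric.uniformContinuous_iff.1
    (CompactSpace.uniformContinuous_of_continuous hg) ε hε
  obtain ⟨m, hm⟩ := exists_pow_lt_of_lt_one hη (by norm_num : (1 / 2 : ℝ) < 1)
  refine ⟨m, fun x y hxy => ?_⟩
  rw [← Real.dist_eq]
  exact h ((PiNat.mem_cylinder_iff_dist_le.1 (PiNat.mem_cylinder_iff.2 hxy)).trans_lt hm)

lemma exists_forall_abs_birkhoff_sub_le (g : BoundedContinuousFunction (Seq N) ℝ) {ε : ℝ}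
    (hε : 0 < ε) :
    ∃ n₀ : ℕ, ∀ w : Word N, n₀ ≤ w.length → ∀ x ∈ cylinder w, ∀ y ∈ cylinder w,
      |birkhoff g w.length x - birkhoff g w.length y| ≤ ε * w.length := by
  obtain ⟨m, hm⟩ := exists_forall_abs_sub_lt g g.continuous (half_pos hε)
  obtain ⟨k, hk⟩ := exists_nat_gt (m * (2 * ‖g‖) / (ε / 2))
  rw [div_lt_iff₀ (half_pos hε)] at hk
  refine ⟨k + m, fun w hw x hx y hy => ?_⟩
  obtain ⟨l, hl⟩ := Nat.exists_eq_add_of_le (show m ≤ w.length by omega)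
  have hbd : ∀ z, |g z| ≤ ‖g‖ := fun z => g.norm_coe_le_norm z
  have h₁ : |birkhoff g l x - birkhoff g l y| ≤ l * (ε / 2) := by
    rw [birkhoff, birkhoff, ← Finset.sum_sub_distrib]
    refine (Finset.abs_sum_le_sum_abs _ _).trans ?_
    simpa using Finset.sum_le_card_nsmul (Finset.range l) _ (ε / 2) fun j hj =>
      (hm (shift^[j] x) (shift^[j] y) fun i hi => by
        rw [shift_iterate_apply, shift_iterate_apply]
        exact eq_of_mem_cylinder hx hy (by have := Finset.mem_range.1 hj; omega)).le
  have h₂ := abs_birkhoff_le hbd m (shift^[l] x)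
  have h₃ := abs_birkhoff_le hbd m (shift^[l] y)
  have hkw : (k : ℝ) ≤ w.length := by exact_mod_cast (by omega : k ≤ w.length)
  have hlw : (l : ℝ) ≤ w.length := by exact_mod_cast (by omega : l ≤ w.length)
  rw [show w.length = l + m by omega, birkhoff_add, birkhoff_add, show l + m = w.length by omega]
  rw [abs_le] at h₁ h₂ h₃ ⊢
  constructor <;> nlinarith

lemma integral_emp (g : BoundedContinuousFunction (Seq N) ℝ) {n : ℕ} (hn : n ≠ 0) (x : Seq N) :
    ∫ y, g y ∂(emp n x : Measure (Seq N)) = birkhoff g n x / n := by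
  have h : (emp n x : Measure (Seq N)) =
      (n : ℝ≥0∞)⁻¹ • ∑ k ∈ Finset.range n, Measure.dirac (shift^[k] x) :=
    congrArg Subtype.val (dif_neg hn)
  rw [h, integral_smul_measure, integral_finsetSum_measure fun k _ => g.integrable _]
  simp [birkhoff, div_eq_inv_mul]

/-- All empirical averages along `w` of the test functions in `F` are `ε`-close to their
`μ`-integrals. -/
def NearWord (F : Finset (BoundedContinuousFunction (Seq N) ℝ)) (μ : ProbabilityMeasure (Seq N))
    (ε : ℝ) (w : Word N) : Prop :=
  ∀ x ∈ cylinder w, ∀ g ∈ F,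
    |birkhoff g w.length x - w.length * ∫ y, g y ∂(μ : Measure (Seq N))| ≤ ε * w.length

section NearWord

variable {F : Finset (BoundedContinuousFunction (Seq N) ℝ)} {μ : ProbabilityMeasure (Seq N)}
  {ε : ℝ}

lemma nearWord_nil : NearWord F μ ε [] := by
  intro x _ g _
  simp [birkhoff]

lemma NearWord.append {u v : Word N} (hu : NearWord F μ ε u) (hv : NearWord F μ ε v) :
    NearWord F μ ε (u ++ v) := by
  intro x hx g hg
  rw [mem_cylinder_append] at hx
  have h₁ := hu x hx.1 g hg
  have h₂ := hv _ hx.2 g hg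
  rw [List.length_append, birkhoff_add, Nat.cast_add]
  rw [abs_le] at h₁ h₂ ⊢
  constructor <;> linarith

lemma exists_nearWord_append (F : Finset (BoundedContinuousFunction (Seq N) ℝ))
    (μ : ProbabilityMeasure (Seq N)) (hε : 0 < ε) (n : ℕ) :
    ∃ n₁ : ℕ, ∀ p v : Word N, NearWord F μ ε p → v.length ≤ n → n₁ ≤ (p ++ v).length →
      NearWord F μ (2 * ε) (p ++ v) := by
  obtain ⟨n₁, hn₁⟩ := exists_nat_gt (n * (2 * ∑ g ∈ F, ‖g‖) / ε)
  rw [div_lt_iff₀ hε] at hn₁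
  refine ⟨n₁, fun p v hp hv hlen x hx g hg => ?_⟩
  rw [mem_cylinder_append] at hx
  have h₁ := hp x hx.1 g hg
  have hgF : ‖g‖ ≤ ∑ g ∈ F, ‖g‖ := Finset.single_le_sum (fun g _ => norm_nonneg g) hg
  have h₂ := abs_birkhoff_le (fun z => g.norm_coe_le_norm z) v.length (shift^[p.length] x)
  have h₃ : |∫ y, g y ∂(μ : Measure (Seq N))| ≤ ‖g‖ := by
    simpa using g.norm_integral_le_norm (μ : Measure (Seq N))
  have h₄ : |(v.length : ℝ) * ∫ y, g y ∂(μ : Measure (Seq N))| ≤ v.length * ‖g‖ := by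
    rw [abs_mul, Nat.abs_cast]
    exact mul_le_mul_of_nonneg_left h₃ (Nat.cast_nonneg _)
  have h₅ : (v.length : ℝ) * ‖g‖ ≤ n * ∑ g ∈ F, ‖g‖ :=
    mul_le_mul (by exact_mod_cast hv) hgF (norm_nonneg g) (Nat.cast_nonneg _)
  have h₆ : (n₁ : ℝ) * ε ≤ (p.length + v.length) * ε :=
    mul_le_mul_of_nonneg_right (by rw [List.length_append] at hlen; exact_mod_cast hlen) hε.le
  have h₇ : 0 ≤ ε * (v.length : ℝ) := by positivity
  rw [List.length_append, birkhoff_add, Nat.cast_add]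
  rw [abs_le] at h₁ h₂ h₄ ⊢
  constructor <;> linarith

lemma exists_nearWord_of_emp (F : Finset (BoundedContinuousFunction (Seq N) ℝ))
    (μ : ProbabilityMeasure (Seq N)) (hε : 0 < ε) :
    ∃ n₀ : ℕ, ∀ w : Word N, w ≠ [] → n₀ ≤ w.length →
      (∃ x ∈ cylinder w, ∀ g ∈ F, |∫ y, g y ∂(emp w.length x : Measure (Seq N)) -
        ∫ y, g y ∂(μ : Measure (Seq N))| ≤ ε) → NearWord F μ (2 * ε) w := by
  choose m hm using fun g : BoundedContinuousFunction (Seq N) ℝ =>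
    exists_forall_abs_birkhoff_sub_le g hε
  refine ⟨F.sup m, fun w hw hlen ⟨x, hx, hF⟩ y hy g hg => ?_⟩
  have h₁ := hm g w ((Finset.le_sup hg).trans hlen) y hy x hx
  have h₂ := hF g hg
  have hpos : (0 : ℝ) < w.length := by exact_mod_cast List.length_pos_iff.2 hw
  rw [integral_emp g (by simpa using hw)] at h₂
  have h₃ : |birkhoff g w.length x - w.length * ∫ y, g y ∂(μ : Measure (Seq N))| ≤
      ε * w.length := by
    rw [div_sub' hpos.ne', abs_div, abs_of_pos hpos, div_le_iff₀ hpos] at h₂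
    exact h₂
  rw [abs_le] at h₁ h₃ ⊢
  constructor <;> linarith

lemma NearWord.abs_integral_emp_sub_le {w : Word N} (h : NearWord F μ ε w) (hw : w ≠ [])
    {x : Seq N} (hx : x ∈ cylinder w) {g : BoundedContinuousFunction (Seq N) ℝ} (hg : g ∈ F) :
    |∫ y, g y ∂(emp w.length x : Measure (Seq N)) - ∫ y, g y ∂(μ : Measure (Seq N))| ≤ ε := by
  have hpos : (0 : ℝ) < w.length := by exact_mod_cast List.length_pos_iff.2 hw
  rw [integral_emp g (by simpa using hw), div_sub' hpos.ne', abs_div, abs_of_pos hpos,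
    div_le_iff₀ hpos]
  exact h x hx g hg

end NearWord

lemma exists_finset_of_mem_nhds {μ : ProbabilityMeasure (Seq N)}
    {V : Set (ProbabilityMeasure (Seq N))} (hV : V ∈ 𝓝 μ) :
    ∃ F : Finset (BoundedContinuousFunction (Seq N) ℝ), ∃ ε > 0,
      ∀ ν : ProbabilityMeasure (Seq N),
        (∀ g ∈ F, |∫ y, g y ∂(ν : Measure (Seq N)) - ∫ y, g y ∂(μ : Measure (Seq N))| ≤ ε) →
          ν ∈ V := by
  let s : Finset (BoundedContinuousFunction (Seq N) ℝ) × ℕ → Set (ProbabilityMeasure (Seq N)) :=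
    fun p => {ν | ∀ g ∈ p.1,
      |∫ y, g y ∂(ν : Measure (Seq N)) - ∫ y, g y ∂(μ : Measure (Seq N))| ≤ 1 / ((p.2 : ℝ) + 1)}
  have hs : Antitone s := fun p q hpq ν hν g hg =>
    (hν g (hpq.1 hg)).trans (one_div_le_one_div_of_le (by positivity)
      (by simpa using hpq.2))
  have hlim : Tendsto id (⨅ p, 𝓟 (s p)) (𝓝 μ) := by
    refine ProbabilityMeasure.tendsto_iff_forall_integral_tendsto.2 fun g => ?_
    rw [Metric.tendsto_nhds]
    intro ε hε
    obtain ⟨n, hn⟩ := exists_nat_one_div_lt hε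
    refine mem_iInf_of_mem ({g}, n) fun ν hν => ?_
    exact (hν g (Finset.mem_singleton_self g)).trans_lt hn
  have hmem : V ∈ ⨅ p, 𝓟 (s p) := hlim hV
  have hdir : Directed (· ≥ ·) fun p => 𝓟 (s p) :=
    directed_of_isDirected_le fun p q hpq => principal_mono.2 (hs hpq)
  obtain ⟨p, hp⟩ := (mem_iInf_of_directed hdir V).1 hmem
  exact ⟨p.1, 1 / ((p.2 : ℝ) + 1), by positivity, fun ν hν => hp hν⟩

lemma abs_integral_sub_le_mem_nhds (F : Finset (BoundedContinuousFunction (Seq N) ℝ))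
    (μ : ProbabilityMeasure (Seq N)) {ε : ℝ} (hε : 0 < ε) :
    {ν : ProbabilityMeasure (Seq N) | ∀ g ∈ F,
      |∫ y, g y ∂(ν : Measure (Seq N)) - ∫ y, g y ∂(μ : Measure (Seq N))| ≤ ε} ∈ 𝓝 μ := by
  refine (Finset.eventually_all F).2 fun g _ => ?_
  have h := ProbabilityMeasure.tendsto_iff_forall_integral_tendsto.1
    (tendsto_id : Tendsto id (𝓝 μ) (𝓝 μ)) g
  filter_upwards [Metric.tendsto_nhds.1 h ε hε] with ν hν
  exact hν.le

/-! ### Summability over sets of strings -/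

lemma summable_of_imp {α : Type*} {f : α → ℝ} (hf : ∀ a, 0 ≤ f a) {P Q R : α → Prop}
    (hP : Summable fun a : {a // P a} => f a) (hQ : Summable fun a : {a // Q a} => f a)
    (h : ∀ a, R a → P a ∨ Q a) : Summable fun a : {a // R a} => f a := by
  have hP' := summable_subtype_iff_indicator.1 (show Summable (f ∘ ((↑) : {a | P a} → α)) from hP)
  have hQ' := summable_subtype_iff_indicator.1 (show Summable (f ∘ ((↑) : {a | Q a} → α)) from hQ)
  refine Summable.of_nonneg_of_le (fun a => hf _) (fun a => ?_)
    ((hP'.add hQ').comp_injective (Subtype.val_injective (p := R)))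
  have hPn := indicator_nonneg (s := {a | P a}) (fun a _ => hf a) (a : α)
  have hQn := indicator_nonneg (s := {a | Q a}) (fun a _ => hf a) (a : α)
  rcases h a a.2 with ha | ha
  · have : {a | P a}.indicator f a = f a := indicator_of_mem (s := {a | P a}) ha f
    simp only [Function.comp_apply]
    linarith
  · have : {a | Q a}.indicator f a = f a := indicator_of_mem (s := {a | Q a}) ha f
    simp only [Function.comp_apply]
    linarith

lemma summable_mono {α : Type*} {f : α → ℝ} (hf : ∀ a, 0 ≤ f a) {P R : α → Prop}
    (hP : Summable fun a : {a // P a} => f a) (h : ∀ a, R a → P a) :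
    Summable fun a : {a // R a} => f a :=
  summable_of_imp hf hP hP fun a ha => Or.inl (h a ha)

/-! ### Growth rates -/

lemma lt_ratioE {m : ℕ} {δ t : ℝ} (hδ : 0 < δ) (hδ1 : δ < 1) (h : (t : EReal) < ratioE m δ) :
    δ ^ (-t) ≤ m := by
  rw [ratioE] at h
  split_ifs at h with hm
  · simp at h
  · have hlog : 0 < -Real.log δ := neg_pos.2 (Real.log_neg hδ hδ1)
    rw [EReal.coe_lt_coe_iff, lt_div_iff₀ hlog] at h
    have hm' : (0 : ℝ) < m := by exact_mod_cast Nat.pos_of_ne_zero hm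
    rw [Real.rpow_def_of_pos hδ, ← Real.le_log_iff_exp_le hm']
    linarith

lemma le_ratioE {m : ℕ} {δ t t' B : ℝ} (hδ : 0 < δ) (hδ1 : δ < 1) (hB : 0 < B)
    (h : B * δ ^ (-t') ≤ m) (hlog : t * -Real.log δ ≤ Real.log B + t' * -Real.log δ) :
    (t : EReal) ≤ ratioE m δ := by
  have hpos : 0 < B * δ ^ (-t') := by positivity
  have hm : m ≠ 0 := by
    rintro rfl
    simp only [Nat.cast_zero] at h
    linarith
  rw [ratioE, if_neg hm, EReal.coe_le_coe_iff, le_div_iff₀ (neg_pos.2 (Real.log_neg hδ hδ1))]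
  have := Real.log_le_log hpos h
  rw [Real.log_mul hB.ne' (by positivity), Real.log_rpow hδ] at this
  linarith

lemma eventually_mul_log_lt {a : ℝ} (ha : 0 < a) (b : ℝ) :
    ∀ᶠ δ : ℝ in 𝓝[>] 0, b < a * -Real.log δ := by
  have := (tendsto_neg_atBot_atTop.comp Real.tendsto_log_nhdsGT_zero).const_mul_atTop ha
  exact this.eventually_gt_atTop b

lemma eventually_mem_Ioo {b : ℝ} (hb : 0 < b) : ∀ᶠ δ : ℝ in 𝓝[>] 0, δ ∈ Ioo 0 b :=
  Ioo_mem_nhdsGT hb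

/-! ### The comparison of the two quantities -/

lemma inTarget_mono {X : Type*} {U : ProbabilityMeasure (Seq N) → X} {B B' : Set X}
    (h : B ⊆ B') {w : Word N} (hw : inTarget U B w) : inTarget U B' w :=
  fun x hx => h (hw x hx)

section Compare

variable {X : Type*} [MetricSpace X] {Λ : Seq N → ℝ} {cmin cmax c : ℝ}
  {U : ProbabilityMeasure (Seq N) → X} {C : Set X}

lemma cball_mono {r r' : ℝ} (h : r ≤ r') : cball C r ⊆ cball C r' :=
  fun _ hx => le_trans hx h

lemma Ncount_eq (r δ : ℝ) :
    Ncount Λ U C r δ = {w ∈ cutSet Λ δ | inTarget U (cball C r) w}.ncard := by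
  rw [Ncount]
  congr 1
  ext w
  simp [cutSet, and_assoc]

lemma coarseLowerR_le_of_summable (hN : 0 < N) (hΛ : ∀ x, Λ x ∈ Icc cmin cmax)
    (hcmax : cmax < 0) (hc : 1 ≤ c) (hdist : BddDistortion Λ c) {r t : ℝ}
    (hsum : Summable fun w : {w : Word N // w ≠ [] ∧ inTarget U (cball C r) w} =>
      sWord Λ w.1 ^ t) :
    coarseLowerR Λ U C r ≤ t := by
  by_contra! hlt
  obtain ⟨t', ht', hlt'⟩ := EReal.lt_iff_exists_real_btwn.1 hlt
  rw [EReal.coe_lt_coe_iff] at ht'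
  have hc0 : 0 < c := by linarith
  have hcmin : cmin ≤ 0 := by
    have := hΛ fun _ => ⟨0, hN⟩
    linarith [this.1, this.2]
  let K : ℝ := c⁻¹ * Real.exp cmin
  have hK : 0 < K := by positivity
  have hK1 : K ≤ 1 :=
    mul_le_one₀ (inv_le_one_of_one_le₀ hc) (Real.exp_pos _).le (Real.exp_le_one_iff.2 hcmin)
  have hκ : 0 < K ^ |t| := by positivity
  let P : Set (Word N) := {w | w ≠ [] ∧ inTarget U (cball C r) w}
  have hsum' : Summable (P.indicator fun w => sWord Λ w ^ t) :=
    summable_subtype_iff_indicator.1 hsum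
  have hnn : ∀ w, 0 ≤ P.indicator (fun w => sWord Λ w ^ t) w :=
    indicator_nonneg fun w _ => Real.rpow_nonneg (sWord_pos hN hΛ w).le t
  let M : ℝ := ∑' w, P.indicator (fun w => sWord Λ w ^ t) w
  have hev := eventually_lt_of_lt_liminf hlt'
  obtain ⟨δ, hδ, ⟨hδ0, hδ1⟩, hM⟩ := (hev.and ((eventually_mem_Ioo one_pos).and
    (eventually_mul_log_lt (sub_pos.2 ht') (M / K ^ |t|)))).exists
  have hcount := lt_ratioE hδ0 hδ1 hδ
  let D := {w ∈ cutSet Λ δ | inTarget U (cball C r) w}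
  have hD : D.Finite := (cutSet_finite hN hΛ hcmax hδ0).subset (sep_subset _ _)
  rw [Ncount_eq, ncard_eq_toFinset_card _ hD] at hcount
  have hle : hD.toFinset.card * (K ^ |t| * δ ^ t) ≤ M := by
    refine le_trans ?_ (hsum'.sum_le_tsum hD.toFinset fun w _ => hnn w)
    rw [← nsmul_eq_mul]
    refine Finset.card_nsmul_le_sum _ _ _ fun w hw => ?_
    have hwD : w ∈ D := hD.mem_toFinset.1 hw
    rw [indicator_of_mem (show w ∈ P from ⟨hwD.1.1, hwD.2⟩)]
    exact (rpow_bounds hK hK1 hδ0 (mul_le_sWord_of_mem_cutSet hN hΛ hc hdist hwD.1)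
      hwD.1.2.1 t).1
  have h₁ : δ ^ (-t') * (K ^ |t| * δ ^ t) ≤ M :=
    (mul_le_mul_of_nonneg_right hcount (by positivity)).trans hle
  have h₂ : δ ^ (-t') * (K ^ |t| * δ ^ t) = K ^ |t| * Real.exp ((t' - t) * -Real.log δ) := by
    rw [mul_left_comm, ← Real.rpow_add hδ0, Real.rpow_def_of_pos hδ0]
    ring_nf
  rw [h₂, ← le_div_iff₀' hκ] at h₁
  linarith [Real.add_one_le_exp ((t' - t) * -Real.log δ)]

lemma exists_measure_forall_nhds_not_summable (hN : 0 < N) (hΛ : ∀ x, Λ x ∈ Icc cmin cmax)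
    (hU : Continuous U) {t : ℝ}
    (hdiv : ∀ r > 0, ¬ Summable fun w : {w : Word N // w ≠ [] ∧ inTarget U (cball C r) w} =>
      sWord Λ w.1 ^ t) :
    ∃ μ : ProbabilityMeasure (Seq N), infDist (U μ) C = 0 ∧ ∀ V ∈ 𝓝 μ,
      ¬ Summable fun w : {w : Word N // w ≠ [] ∧ ∃ x ∈ cylinder w, emp w.length x ∈ V} =>
        sWord Λ w.1 ^ t := by
  have hnn : ∀ w : Word N, 0 ≤ sWord Λ w ^ t :=
    fun w => Real.rpow_nonneg (sWord_pos hN hΛ w).le t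
  by_contra! hcon
  let p : Set (ProbabilityMeasure (Seq N)) → Prop := fun V => ∃ r > 0,
    Summable fun w : {w : Word N // (w ≠ [] ∧ inTarget U (cball C r) w) ∧
      ∃ x ∈ cylinder w, emp w.length x ∈ V} => sWord Λ w.1 ^ t
  have hp : p univ := by
    refine isCompact_univ.induction_on (p := p) ?_ ?_ ?_ ?_
    · refine ⟨1, one_pos, ?_⟩
      have : IsEmpty {w : Word N // (w ≠ [] ∧ inTarget U (cball C 1) w) ∧
          ∃ x ∈ cylinder w, emp w.length x ∈ (∅ : Set (ProbabilityMeasure (Seq N)))} :=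
        ⟨fun w => by simpa using w.2.2⟩
      exact summable_empty
    · rintro V V' hVV' ⟨r, hr, h⟩
      exact ⟨r, hr, summable_mono hnn h fun w hw =>
        ⟨hw.1, hw.2.imp fun x hx => ⟨hx.1, hVV' hx.2⟩⟩⟩
    · rintro V V' ⟨r, hr, h⟩ ⟨r', hr', h'⟩
      refine ⟨min r r', lt_min hr hr', summable_of_imp hnn h h' ?_⟩
      rintro w ⟨⟨hw, ht⟩, x, hx, hV | hV⟩
      · exact Or.inl ⟨⟨hw, inTarget_mono (cball_mono (min_le_left _ _)) ht⟩, x, hx, hV⟩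
      · exact Or.inr ⟨⟨hw, inTarget_mono (cball_mono (min_le_right _ _)) ht⟩, x, hx, hV⟩
    · intro μ _
      rw [nhdsWithin_univ]
      by_cases hμ : infDist (U μ) C = 0
      · obtain ⟨V, hV, h⟩ := hcon μ hμ
        exact ⟨V, hV, 1, one_pos, summable_mono hnn h fun w hw => ⟨hw.1.1, hw.2⟩⟩
      · have hpos : 0 < infDist (U μ) C := lt_of_le_of_ne infDist_nonneg (Ne.symm hμ)
        refine ⟨{ν | infDist (U μ) C / 2 < infDist (U ν) C}, ?_, _, half_pos hpos, ?_⟩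
        · exact ((continuous_infDist_pt C).comp hU).continuousAt.eventually_const_lt
            (half_lt_self hpos)
        · have : IsEmpty {w : Word N // (w ≠ [] ∧
              inTarget U (cball C (infDist (U μ) C / 2)) w) ∧ ∃ x ∈ cylinder w,
                emp w.length x ∈ {ν | infDist (U μ) C / 2 < infDist (U ν) C}} := by
            refine ⟨?_⟩
            rintro ⟨w, ⟨-, hw⟩, x, hx, hlt⟩
            exact absurd (mem_ofPred_eq ▸ hlt) (not_lt.2 (hw x hx))
          exact summable_empty
  obtain ⟨r, hr, h⟩ := hp
  refine hdiv r hr (summable_mono hnn h fun w hw => ⟨hw, ?_⟩)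
  obtain ⟨x, hx⟩ := cylinder_nonempty hN w
  exact ⟨x, hx, mem_univ _⟩

lemma le_coarseLowerR_of_not_summable (hN : 0 < N) (hΛ : ∀ x, Λ x ∈ Icc cmin cmax)
    (hcmax : cmax < 0) (hc : 1 ≤ c) (hdist : BddDistortion Λ c) (hU : Continuous U) {t s : ℝ}
    (hdiv : ∀ r > 0, ¬ Summable fun w : {w : Word N // w ≠ [] ∧ inTarget U (cball C r) w} =>
      sWord Λ w.1 ^ t) (hst : s < t) {r : ℝ} (hr : 0 < r) :
    (s : EReal) ≤ coarseLowerR Λ U C r := by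
  have hnn : ∀ w : Word N, 0 ≤ sWord Λ w ^ t :=
    fun w => Real.rpow_nonneg (sWord_pos hN hΛ w).le t
  have hcmin : cmin < 0 := by
    have := hΛ fun _ => ⟨0, hN⟩
    linarith [this.1, this.2]
  obtain ⟨t', hst', htt'⟩ := exists_between hst
  obtain ⟨μ, hμ, hV⟩ := exists_measure_forall_nhds_not_summable hN hΛ hU hdiv
  have hnhds : {ν | infDist (U ν) C < r} ∈ 𝓝 μ :=
    ((continuous_infDist_pt C).comp hU).continuousAt.eventually_lt_const (by simpa [hμ] using hr)
  obtain ⟨F, ε, hε, hF⟩ := exists_finset_of_mem_nhds hnhds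
  have hε4 : 0 < ε / 4 := by positivity
  have hdiv' : ¬ Summable fun w : {w : Word N // w ≠ [] ∧ NearWord F μ (2 * (ε / 4)) w} =>
      sWord Λ w.1 ^ t := by
    intro h
    obtain ⟨n₀, hn₀⟩ := exists_nearWord_of_emp F μ hε4
    have hfin : Summable fun w : {w : Word N // w.length < n₀} => sWord Λ w.1 ^ t := by
      have : Finite {w : Word N // w.length < n₀} := List.finite_length_lt (Fin N) n₀
      exact Summable.of_finite
    refine hV _ (abs_integral_sub_le_mem_nhds F μ hε4) (summable_of_imp hnn h hfin ?_)
    rintro w ⟨hw, hx⟩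
    by_cases hlen : w.length < n₀
    · exact Or.inr hlen
    · exact Or.inl ⟨hw, hn₀ w hw (not_lt.1 hlen) hx⟩
  obtain ⟨n, hn, W, hW, hsum⟩ := exists_length_sum_ge hN hΛ hcmax htt' hdiv' (c ^ |t'|)
  have hc0 : 0 < c := by linarith
  have hsuper : ∀ u, sWord Λ u ^ t' ≤ ∑ v ∈ W, sWord Λ (u ++ v) ^ t' := by
    intro u
    have hu : 0 ≤ sWord Λ u ^ t' := Real.rpow_nonneg (sWord_pos hN hΛ u).le t'
    refine le_of_mul_le_mul_left ?_ (Real.rpow_pos_of_pos hc0 |t'|)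
    calc c ^ |t'| * sWord Λ u ^ t' ≤ (∑ v ∈ W, sWord Λ v ^ t') * sWord Λ u ^ t' :=
          mul_le_mul_of_nonneg_right hsum hu
      _ = ∑ v ∈ W, sWord Λ u ^ t' * sWord Λ v ^ t' := by rw [mul_comm, Finset.mul_sum]
      _ ≤ ∑ v ∈ W, c ^ |t'| * sWord Λ (u ++ v) ^ t' := Finset.sum_le_sum fun v _ =>
          rpow_mul_le_of_mul_le hc (sWord_pos hN hΛ u) (sWord_pos hN hΛ v)
            (sWord_mul_le hN hΛ hc hdist u v) (sWord_append_le hN hΛ u v) t'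
      _ = c ^ |t'| * ∑ v ∈ W, sWord Λ (u ++ v) ^ t' := by rw [Finset.mul_sum]
  obtain ⟨B, hB, hcount⟩ := exists_mul_rpow_le_ncard hN hΛ hcmax hc hdist hn
    (fun v hv => (hW v hv).1) (S := NearWord F μ (2 * (ε / 4))) nearWord_nil
    (fun u hu v hv => hu.append (hW v hv).2) hsuper
  obtain ⟨n₁, hn₁⟩ := exists_nearWord_append F μ (show 0 < 2 * (ε / 4) by positivity) n
  refine le_liminf_of_le (by isBoundedDefault) ?_
  filter_upwards [eventually_mem_Ioo one_pos, eventually_mem_Ioo (Real.exp_pos (n₁ * cmin)),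
    eventually_mul_log_lt (sub_pos.2 hst') (-Real.log B)] with δ hδ hδ' hlog
  refine le_ratioE hδ.1 hδ.2 hB ((hcount δ hδ.1 hδ.2).trans ?_) (by linarith)
  rw [Ncount_eq]
  refine Nat.cast_le.2 (ncard_le_ncard ?_ ((cutSet_finite hN hΛ hcmax hδ.1).subset
    (sep_subset _ _)))
  rintro w ⟨hw, p, v, rfl, hp, hv⟩
  have hlen : n₁ ≤ (p ++ v).length := by
    have h := ((exp_le_sWord hN hΛ (p ++ v)).trans hw.2.1).trans hδ'.2.le
    rw [Real.exp_le_exp, mul_le_mul_right_of_neg hcmin] at h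
    exact_mod_cast h
  refine ⟨hw, fun x hx => le_of_lt (a := infDist _ C) (hF _ fun g hg => ?_)⟩
  refine ((hn₁ p v hp hv hlen).abs_integral_emp_sub_le hw.1 hx hg).trans ?_
  linarith

lemma sigmaAbs_mono_s2 (hN : 0 < N) (hΛ : ∀ x, Λ x ∈ Icc cmin cmax) :
    Monotone fun r : ℝ => sigmaAbs (sWord Λ) (inTarget U (cball C r)) := by
  intro r r' hrr'
  refine sInf_le_sInf (image_mono fun t ht => ?_)
  exact summable_mono (fun w => Real.rpow_nonneg (sWord_pos hN hΛ w).le t) ht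
    fun w hw => ⟨hw.1, inTarget_mono (cball_mono hrr') hw.2⟩

end Compare

end

/-- **Theorem 2.1(1)** (shrinking targets, coarse-spectrum form).
The abscissa of convergence of `ζ_C^{U,Λ}(·;r)` converges, as `r ↘ 0`, to the lower coarse
multifractal spectrum `f̲^{U,Λ}(C)`. -/
theorem shrinking_targets_coarse
    {N : ℕ} (hN : 0 < N) {X : Type*} [MetricSpace X]
    (Λ : Seq N → ℝ) (hΛcont : Continuous Λ)
    (cmin cmax : ℝ) (hcmax : cmax < 0) (hccmin : cmin ≤ cmax)
    (hΛbdd : ∀ x, Λ x ∈ Set.Icc cmin cmax)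
    (c : ℝ) (hc : 1 ≤ c) (hdist : BddDistortion Λ c)
    (U : ProbabilityMeasure (Seq N) → X) (hU : Continuous U)
    (C : Set X) (hC : IsClosed C) :
    Filter.Tendsto (fun r : ℝ => sigmaAbs (sWord Λ) (inTarget U (cball C r)))
      (nhdsWithin 0 (Set.Ioi 0)) (nhds (coarseLower Λ U C)) := by
  have hlim := (sigmaAbs_mono_s2 (U := U) (C := C) hN hΛbdd).tendsto_nhdsGT 0
  convert hlim using 2
  refine le_antisymm (le_sInf ?_) (le_iInf₂ fun r hr => ?_)
  · rintro _ ⟨r, hr, rfl⟩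
    refine (iInf₂_le r hr).trans (le_sInf ?_)
    rintro _ ⟨t, ht, rfl⟩
    exact coarseLowerR_le_of_summable hN hΛbdd hcmax hc hdist ht
  · refine EReal.ge_of_forall_gt_iff_ge.1 fun s hs => ?_
    obtain ⟨t, hst, ht⟩ := EReal.lt_iff_exists_real_btwn.1 hs
    refine le_coarseLowerR_of_not_summable hN hΛbdd hcmax hc hdist hU (t := t) ?_
      (EReal.coe_lt_coe_iff.1 hst) hr
    intro r' hr' hsum
    exact absurd ht (not_lt.2 ((sInf_le (mem_image_of_mem _ hr')).trans
      (sInf_le (mem_image_of_mem _ hsum))))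

end Multifractal
end
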